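/- arXiv:2601.07740 — 4 statements merged into one kernel-verified Lean document; each statement's English description precedes it below -/
import Mathlib

section
/- Let H be a bipartite graph on parts A and B with |A| = |B| = n, and suppose every vertex of A has degree at most D in H. Then the number of perfect matchings of H is at most (D!)^{n/D}. -/
/-- logarithm of `(r!)^(1/r)` -/
noncomputable def bregG (r : ℕ) : ℝ := Real.log (r.factorial : ℝ) / r

lemma bregG_nonneg (r : ℕ) : 0 ≤ bregG r := by
  unfold bregG
  apply div_nonneg _ (Nat.cast_nonneg r)
  exact Real.log_nonneg (by exact_mod_cast Nat.factorial_pos r)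

lemma bregG_mono : Monotone bregG := by
  apply monotone_nat_of_le_succ
  intro n
  rcases Nat.eq_zero_or_pos n with h | h
  · subst h; simp [bregG]
  · unfold bregG
    have hn : (0 : ℝ) < n := by exact_mod_cast h
    have h1 : Real.log (n.factorial : ℝ) ≤ n * Real.log ((n : ℝ) + 1) := by
      rw [← Real.log_pow]
      apply Real.log_le_log (by exact_mod_cast Nat.factorial_pos n)
      have h2 : n.factorial ≤ (n + 1) ^ n :=
        (Nat.factorial_le_pow n).trans (Nat.pow_le_pow_left (Nat.le_succ n) n)
      exact_mod_cast h2
    rw [Nat.factorial_succ]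
    push_cast
    rw [Real.log_mul (by positivity) (by positivity), div_le_div_iff₀ hn (by positivity)]
    nlinarith

lemma breg_step (r : ℕ) (hr : 1 ≤ r) :
    Real.log r + (r - 1 : ℝ) * bregG (r - 1) = r * bregG r := by
  obtain ⟨k, rfl⟩ : ∃ k, r = k + 1 := ⟨r - 1, by omega⟩
  unfold bregG
  have hk : ((k : ℝ) + 1) ≠ 0 := by positivity
  have hf : ((k.factorial : ℕ) : ℝ) ≠ 0 := by exact_mod_cast (Nat.factorial_pos k).ne'
  rw [Nat.factorial_succ]
  push_cast
  rw [Real.log_mul hk hf, mul_div_cancel₀ _ hk]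
  rcases Nat.eq_zero_or_pos k with h | h
  · subst h; simp
  · have : (k : ℝ) ≠ 0 := by positivity
    field_simp
    ring

lemma breg_entropy {B : Type*} (R : Finset B) (t : B → ℝ) (p : ℝ)
    (ht : ∀ b ∈ R, 0 < t b) (hs : ∑ b ∈ R, t b = p) (hp : 0 < p) :
    p * Real.log p ≤ p * Real.log R.card + ∑ b ∈ R, t b * Real.log (t b) := by
  have hR : R.Nonempty := by
    rw [Finset.nonempty_iff_ne_empty]
    rintro rfl
    simp at hs; linarith
  have hr : (0 : ℝ) < R.card := by exact_mod_cast hR.card_pos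
  have key : ∀ b ∈ R, t b * (Real.log p - Real.log R.card - Real.log (t b)) ≤
      p / R.card - t b := by
    intro b hb
    have h := ht b hb
    have h1 : Real.log (p / R.card / t b) ≤ p / R.card / t b - 1 :=
      Real.log_le_sub_one_of_pos (by positivity)
    rw [Real.log_div (by positivity) h.ne', Real.log_div hp.ne' hr.ne'] at h1
    calc _ ≤ t b * (p / R.card / t b - 1) := mul_le_mul_of_nonneg_left h1 h.le
      _ = _ := by field_simp
  have h2 := Finset.sum_le_sum key
  rw [Finset.sum_sub_distrib, hs, Finset.sum_const, nsmul_eq_mul, mul_div_cancel₀ _ hr.ne'] at h2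
  have h3 : ∑ b ∈ R, t b * (Real.log p - Real.log R.card - Real.log (t b)) =
      p * (Real.log p - Real.log R.card) - ∑ b ∈ R, t b * Real.log (t b) := by
    rw [← hs, Finset.sum_mul, ← Finset.sum_sub_distrib]
    exact Finset.sum_congr rfl fun b _ => by ring
  rw [h3] at h2
  linarith

section
open Classical

/-- values at `a` of the bijections in `S` -/
noncomputable def bregR {A B : Type*} (S : Finset (A ≃ B)) (a : A) : Finset B :=
  S.image (fun f => f a)

lemma breg_count {A B : Type*} [Fintype A] (S : Finset (A ≃ B)) (v : A ≃ B) (hv : v ∈ S)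
    (j : A) (hj : 1 < (bregR S j).card) :
    ((Finset.univ.filter (fun a => 1 < (bregR S a).card)).filter
      (fun a => v a ∈ bregR S j)).card = (bregR S j).card := by
  rw [← Finset.card_map v.toEmbedding]
  congr 1
  ext b
  simp only [Finset.mem_map, Finset.mem_filter, Finset.mem_univ, true_and,
    Equiv.coe_toEmbedding]
  constructor
  · rintro ⟨a, ⟨_, h⟩, rfl⟩; exact h
  · intro hb
    refine ⟨v.symm b, ⟨?_, by simpa using hb⟩, by simp⟩
    by_contra hcon
    obtain ⟨f, hf, rfl⟩ := Finset.mem_image.1 hb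
    have h1 : f (v.symm (f j)) ∈ bregR S (v.symm (f j)) := Finset.mem_image_of_mem _ hf
    have h2 : v (v.symm (f j)) ∈ bregR S (v.symm (f j)) :=
      Finset.mem_image_of_mem (fun g : A ≃ B => g (v.symm (f j))) hv
    have h3 := Finset.card_le_one.1 (not_lt.1 hcon) _ h1 _ h2
    have h4 : v.symm (f j) = j := f.injective (by simpa using h3)
    rw [h4] at hcon
    exact hcon hj

lemma breg_main {A B : Type*} [Fintype A] : ∀ (p : ℕ) (S : Finset (A ≃ B)), S.card = p →
    Real.log p ≤ ∑ a, bregG (bregR S a).card := by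
  intro p
  induction p using Nat.strong_induction_on with
  | _ p ih =>
  intro S hS
  have hnn : 0 ≤ ∑ a, bregG (bregR S a).card := Finset.sum_nonneg fun a _ => bregG_nonneg _
  rcases Nat.eq_zero_or_pos p with h0 | hp
  · subst h0; simpa using hnn
  set U := Finset.univ.filter (fun a => 1 < (bregR S a).card) with hU
  have hUm : ∀ a, a ∈ U ↔ 1 < (bregR S a).card := by intro a; simp [hU]
  rcases U.eq_empty_or_nonempty with hUe | hUne
  · have : S.card ≤ 1 := by
      rw [Finset.card_le_one]
      intro f hf g hg
      ext a
      have : ¬ 1 < (bregR S a).card := by rw [← hUm, hUe]; simp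
      exact Finset.card_le_one.1 (not_lt.1 this) _ (Finset.mem_image_of_mem _ hf) _
        (Finset.mem_image_of_mem (fun g : A ≃ B => g a) hg)
    have : p = 1 := by omega
    subst this; simpa using hnn
  have hpR : (0 : ℝ) < p := by exact_mod_cast hp
  let T : A → B → Finset (A ≃ B) := fun a b => S.filter (fun f => f a = b)
  -- entropy at each row
  have hent : ∀ a ∈ U, (p : ℝ) * Real.log p ≤
      ∑ v ∈ S, (Real.log (bregR S a).card + Real.log (T a (v a)).card) := by
    intro a _
    have hmaps : ∀ f ∈ S, f a ∈ bregR S a := fun f hf => Finset.mem_image_of_mem _ hf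
    have h1 := breg_entropy (bregR S a) (fun b => ((T a b).card : ℝ)) p (by
        intro b hb
        obtain ⟨f, hf, rfl⟩ := Finset.mem_image.1 hb
        have : (T a (f a)).Nonempty := ⟨f, by simp [T, hf]⟩
        exact_mod_cast this.card_pos) (by
        rw [← hS, Finset.card_eq_sum_card_fiberwise hmaps]; push_cast; rfl) hpR
    refine h1.trans (le_of_eq ?_)
    rw [Finset.sum_add_distrib, Finset.sum_const, hS, nsmul_eq_mul]
    congr 1
    rw [← Finset.sum_fiberwise_of_maps_to hmaps]
    refine Finset.sum_congr rfl fun b _ => ?_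
    rw [Finset.sum_congr rfl (g := fun _ => Real.log (T a b).card), Finset.sum_const, nsmul_eq_mul]
    intro v hv
    rw [(Finset.mem_filter.1 hv).2]
  -- induction hypothesis
  have hind : ∀ a ∈ U, ∀ v ∈ S, Real.log (T a (v a)).card ≤
      ∑ j ∈ U.erase a, bregG ((bregR S j).card - if v a ∈ bregR S j then 1 else 0) := by
    intro a ha v hv
    have hlt : (T a (v a)).card < p := by
      rw [← hS]
      apply Finset.card_lt_card
      refine Finset.filter_ssubset.2 ?_
      by_contra hcon
      push Not at hcon
      have h1 := (hUm a).1 ha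
      have : (bregR S a).card ≤ 1 := by
        rw [Finset.card_le_one]
        intro x hx y hy
        obtain ⟨f, hf, rfl⟩ := Finset.mem_image.1 hx
        obtain ⟨g, hg, rfl⟩ := Finset.mem_image.1 hy
        simp only [hcon f hf, hcon g hg]
      omega
    refine (ih _ hlt _ rfl).trans ?_
    have hsub : ∀ j, bregR (T a (v a)) j ⊆ bregR S j := fun j =>
      Finset.image_subset_image (Finset.filter_subset _ _)
    rw [← Finset.sum_subset (Finset.subset_univ (U.erase a))]
    · refine Finset.sum_le_sum fun j hj => bregG_mono ?_
      have hja := (Finset.mem_erase.1 hj).1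
      split_ifs with hm
      · rw [← Finset.card_erase_of_mem hm]
        apply Finset.card_le_card
        intro x hx
        refine Finset.mem_erase.2 ⟨?_, hsub j hx⟩
        rintro rfl
        obtain ⟨f, hf, hfx⟩ := Finset.mem_image.1 hx
        have := (Finset.mem_filter.1 hf).2
        exact hja (f.injective (by rw [this]; exact hfx))
      · exact Finset.card_le_card (hsub j)
    · intro j _ hj
      have hle : (bregR (T a (v a)) j).card ≤ 1 := by
        by_cases hja : j = a
        · subst hja
          rw [Finset.card_le_one]
          intro x hx y hy
          obtain ⟨f, hf, rfl⟩ := Finset.mem_image.1 hx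
          obtain ⟨g, hg, rfl⟩ := Finset.mem_image.1 hy
          exact ((Finset.mem_filter.1 hf).2).trans ((Finset.mem_filter.1 hg).2).symm
        · have : ¬ 1 < (bregR S j).card := by
            rw [← hUm]
            exact fun h => hj (Finset.mem_erase.2 ⟨hja, h⟩)
          exact (Finset.card_le_card (hsub j)).trans (not_lt.1 this)
      interval_cases (bregR (T a (v a)) j).card <;> simp [bregG]
  -- per bijection identity
  have hper : ∀ v ∈ S, ∑ a ∈ U, (Real.log (bregR S a).card + ∑ j ∈ U.erase a,
      bregG ((bregR S j).card - if v a ∈ bregR S j then 1 else 0)) =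
      U.card * ∑ j ∈ U, bregG (bregR S j).card := by
    intro v hv
    have hswap : ∑ a ∈ U, ∑ j ∈ U.erase a,
        bregG ((bregR S j).card - if v a ∈ bregR S j then 1 else 0) =
        ∑ j ∈ U, ∑ a ∈ U.erase j,
        bregG ((bregR S j).card - if v a ∈ bregR S j then 1 else 0) := by
      apply Finset.sum_comm'
      intro x y
      simp only [Finset.mem_erase]
      tauto
    rw [Finset.sum_add_distrib, hswap, ← Finset.sum_add_distrib, Finset.mul_sum]
    refine Finset.sum_congr rfl fun j hj => ?_
    have hj1 := (hUm j).1 hj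
    have hcnt := breg_count S v hv j hj1
    rw [← hU] at hcnt
    have hvj : v j ∈ bregR S j := Finset.mem_image_of_mem (fun g : A ≃ B => g j) hv
    have hadd := Finset.add_sum_erase U
      (fun a => bregG ((bregR S j).card - if v a ∈ bregR S j then 1 else 0)) hj
    have htot : ∑ a ∈ U, bregG ((bregR S j).card - if v a ∈ bregR S j then 1 else 0) =
        (bregR S j).card * bregG ((bregR S j).card - 1) +
        (U.card - (bregR S j).card : ℝ) * bregG (bregR S j).card := by
      rw [← Finset.sum_filter_add_sum_filter_not U (fun a => v a ∈ bregR S j)]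
      have hc2 := Finset.card_filter_add_card_filter_not (s := U) (fun a => v a ∈ bregR S j)
      rw [hcnt] at hc2
      congr 1
      · rw [Finset.sum_congr rfl (g := fun _ => bregG ((bregR S j).card - 1)),
          Finset.sum_const, nsmul_eq_mul, hcnt]
        intro a ha
        rw [if_pos (Finset.mem_filter.1 ha).2]
      · rw [Finset.sum_congr rfl (g := fun _ => bregG ((bregR S j).card)),
          Finset.sum_const, nsmul_eq_mul, ← hc2]
        · push_cast; ring
        intro a ha
        rw [if_neg (Finset.mem_filter.1 ha).2, Nat.sub_zero]
    have hstep := breg_step (bregR S j).card hj1.le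
    simp only [if_pos hvj] at hadd
    linarith
  have hfin : (U.card : ℝ) * (p * Real.log p) ≤
      p * (U.card * ∑ j ∈ U, bregG (bregR S j).card) := by
    calc (U.card : ℝ) * (p * Real.log p) = ∑ a ∈ U, (p : ℝ) * Real.log p := by
          rw [Finset.sum_const, nsmul_eq_mul]
      _ ≤ ∑ a ∈ U, ∑ v ∈ S, (Real.log (bregR S a).card + ∑ j ∈ U.erase a,
            bregG ((bregR S j).card - if v a ∈ bregR S j then 1 else 0)) :=
          Finset.sum_le_sum fun a ha => (hent a ha).trans
            (Finset.sum_le_sum fun v hv => by linarith [hind a ha v hv])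
      _ = ∑ v ∈ S, (U.card * ∑ j ∈ U, bregG (bregR S j).card) := by
          rw [Finset.sum_comm]
          exact Finset.sum_congr rfl hper
      _ = _ := by rw [Finset.sum_const, nsmul_eq_mul, hS]
  have hUc : (0 : ℝ) < U.card := by exact_mod_cast hUne.card_pos
  have h5 : Real.log p ≤ ∑ j ∈ U, bregG (bregR S j).card := by
    have : (U.card * p : ℝ) * Real.log p ≤
        (U.card * p) * ∑ j ∈ U, bregG (bregR S j).card := by linarith
    exact le_of_mul_le_mul_left this (by positivity)
  exact h5.trans (Finset.sum_le_sum_of_subset_of_nonneg (Finset.subset_univ U)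
    fun a _ _ => bregG_nonneg _)

end

/-- Brégman–Minc consequence: a bipartite graph on parts of size `n` with all
degrees on side `A` at most `D` has at most `(D!)^(n/D)` perfect matchings. -/
theorem perfect_matchings_le {A B : Type*} [Fintype A] [Fintype B]
    (E : A → B → Prop) (n D : ℕ)
    (hA : Fintype.card A = n) (hB : Fintype.card B = n)
    (hdeg : ∀ a, Nat.card {b : B // E a b} ≤ D) :
    (Nat.card {f : A ≃ B // ∀ a, E a (f a)} : ℝ) ≤
      (D.factorial : ℝ) ^ ((n : ℝ) / D) := by
  classical
  have hD : (0 : ℝ) < D.factorial := by exact_mod_cast Nat.factorial_pos D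
  let S : Finset (A ≃ B) := Finset.univ.filter (fun f => ∀ a, E a (f a))
  have hS : Nat.card {f : A ≃ B // ∀ a, E a (f a)} = S.card := by
    rw [Nat.card_eq_fintype_card, Fintype.card_subtype]
  rw [hS]
  rcases Nat.eq_zero_or_pos S.card with h0 | hp
  · rw [h0]; push_cast; positivity
  have hpR : (0 : ℝ) < S.card := by exact_mod_cast hp
  rw [← Real.log_le_log_iff hpR (by positivity), Real.log_rpow hD]
  refine (breg_main _ S rfl).trans ?_
  have : ∑ a, bregG (bregR S a).card ≤ ∑ _a : A, bregG D := by
    refine Finset.sum_le_sum fun a _ => bregG_mono ((le_trans ?_ (hdeg a)))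
    rw [Nat.card_eq_fintype_card, Fintype.card_subtype]
    apply Finset.card_le_card
    intro b hb
    obtain ⟨f, hf, rfl⟩ := Finset.mem_image.1 hb
    simpa using (Finset.mem_filter.1 hf).2 a
  refine this.trans (le_of_eq ?_)
  rw [Finset.sum_const, Finset.card_univ, hA, nsmul_eq_mul, bregG]
  ring
end

section
/- There exists d₀ > 0 such that for all integers d ≥ d₀ the following holds. Let G be an n-vertex graph with all degrees in [(1-10^{-10})d, (1+10^{-10})d] and let T be any n-vertex tree. Then the number of injective embeddings of T into G is at most e^{-n/1000}·d^n. -/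
open Finset in
lemma seq_sum {V : Type} [Fintype V] [DecidableEq V] : ∀ (n : ℕ)
    (c : Fin n → (Fin n → V) → Finset V)
    (_ : ∀ i f g, (∀ j, j < i → f j = g j) → c i f = c i g),
    ∑ f : Fin n → V, ∏ i, (if f i ∈ c i f then ((c i f).card : ℝ)⁻¹ else 0) ≤ 1 := by
  intro n
  induction n with
  | zero => intro c _; simp
  | succ n ih =>
    intro c hc
    rw [← (Fin.consEquiv (fun _ : Fin (n+1) => V)).sum_comp, Fintype.sum_prod_type]
    by_cases hV : IsEmpty V
    · simp
    have hne : Nonempty V := not_isEmpty_iff.mp hV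
    obtain ⟨v0⟩ := hne
    have h0 : ∀ f, c 0 f = c 0 (fun _ => v0) := fun f =>
      hc 0 f _ (fun j hj => absurd hj (Fin.not_lt_zero j))
    set S := c 0 (fun _ => v0) with hS
    have key : ∀ x : V, ∑ g : Fin n → V, ∏ i, (if (Fin.consEquiv (fun _ : Fin (n+1) => V) (x, g)) i ∈ c i (Fin.consEquiv (fun _ : Fin (n+1) => V) (x, g)) then ((c i (Fin.consEquiv (fun _ : Fin (n+1) => V) (x, g))).card : ℝ)⁻¹ else 0) ≤ (if x ∈ S then (S.card : ℝ)⁻¹ else 0) := by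
      intro x
      have h1 := ih (fun i g => c i.succ (Fin.cons x g)) (by
        intro i f g h
        apply hc
        intro j
        refine Fin.cases ?_ ?_ j
        · intro _; simp
        · intro j hj
          simpa using h j (by simpa using hj))
      have h2 : ∀ g : Fin n → V, ∏ i, (if (Fin.consEquiv (fun _ : Fin (n+1) => V) (x, g)) i ∈ c i (Fin.consEquiv (fun _ : Fin (n+1) => V) (x, g)) then ((c i (Fin.consEquiv (fun _ : Fin (n+1) => V) (x, g))).card : ℝ)⁻¹ else 0)
        = (if x ∈ S then (S.card : ℝ)⁻¹ else 0) * ∏ i, (if g i ∈ c i.succ (Fin.cons x g) then ((c i.succ (Fin.cons x g)).card : ℝ)⁻¹ else 0) := by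
        intro g
        rw [Fin.prod_univ_succ, h0]
        simp [Fin.consEquiv]
      simp_rw [h2]
      rw [← Finset.mul_sum]
      refine mul_le_of_le_one_right ?_ h1
      split_ifs <;> positivity
    refine (Finset.sum_le_sum (fun x _ => key x)).trans ?_
    rw [Finset.sum_ite_mem]
    simp only [Finset.univ_inter, Finset.sum_const, nsmul_eq_mul]
    exact mul_inv_le_one

open Classical in
/-- number of later neighbours -/
noncomputable def laterNbr {V ι : Type} [Fintype ι] (G : SimpleGraph V) (r : ι → ℕ) (par : ι → ι)
    (ψ : ι → V) (i : ι) : ℕ :=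
  (Finset.univ.filter (fun j => r i ≤ r j ∧ G.Adj (ψ (par i)) (ψ j))).card

open Classical in
/-- injective maps respecting the parent edges -/
noncomputable def embSet {V ι : Type} [Fintype V] [Fintype ι] (G : SimpleGraph V) (par : ι → ι)
    (ρ : ι) : Finset (ι → V) :=
  Finset.univ.filter (fun ψ => Function.Injective ψ ∧ ∀ i, i ≠ ρ → G.Adj (ψ (par i)) (ψ i))

open Classical in
lemma proc_bound {V ι : Type} [Fintype V] [Fintype ι] [DecidableEq ι] (G : SimpleGraph V) (r : ι → ℕ)
    (hr : Function.Injective r) (par : ι → ι) (ρ : ι) (hp : ∀ i, i ≠ ρ → r (par i) < r i)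
    (hcard : Fintype.card ι = Fintype.card V) (D : ℝ) (hD : 0 < D) :
    ∑ ψ ∈ embSet G par ρ, Real.exp (∑ i ∈ Finset.univ.erase ρ, (1 - (laterNbr G r par ψ i : ℝ) / D))
      ≤ Fintype.card V * D ^ (Fintype.card V - 1) := by
  let _ : LinearOrder ι := LinearOrder.lift' r hr
  have hlt : ∀ a b : ι, a < b ↔ r a < r b := fun a b => Iff.rfl
  let e : Fin (Fintype.card V) ≃o ι := Fintype.orderIsoFinOfCardEq ι hcard
  let c : Fin (Fintype.card V) → (Fin (Fintype.card V) → V) → Finset V := fun i f =>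
    if e i = ρ then Finset.univ else
      Finset.univ.filter (fun x => G.Adj (f (e.symm (par (e i)))) x ∧ ∀ j, j < i → f j ≠ x)
  have hn : 0 < Fintype.card V := by rw [← hcard]; exact Fintype.card_pos_iff.mpr ⟨ρ⟩
  have hn' : (0:ℝ) < Fintype.card V := by exact_mod_cast hn
  have hA := seq_sum (V := V) (Fintype.card V) c (by
    intro i f g h
    by_cases hi : e i = ρ
    · simp [c, hi]
    · simp only [c, hi, if_false]
      have h1 : e.symm (par (e i)) < i := by
        rw [← e.lt_iff_lt, OrderIso.apply_symm_apply, hlt]; exact hp _ hi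
      rw [h _ h1]
      apply Finset.filter_congr
      intro x _
      constructor
      · rintro ⟨a, b⟩; exact ⟨a, fun j hj => by rw [← h j hj]; exact b j hj⟩
      · rintro ⟨a, b⟩; exact ⟨a, fun j hj => by rw [h j hj]; exact b j hj⟩)
  have hterm : ∀ ψ ∈ embSet G par ρ,
      Real.exp (∑ i ∈ Finset.univ.erase ρ, (1 - (laterNbr G r par ψ i : ℝ) / D)) ≤
      (Fintype.card V * D ^ (Fintype.card V - 1)) *
       ∏ i, (if (ψ ∘ e) i ∈ c i (ψ ∘ e) then ((c i (ψ ∘ e)).card : ℝ)⁻¹ else 0) := by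
    intro ψ hψ
    simp only [embSet, Finset.mem_filter, Finset.mem_univ, true_and] at hψ
    obtain ⟨hinj, hadj⟩ := hψ
    have hsurj : Function.Surjective ψ :=
      ((Fintype.bijective_iff_injective_and_card ψ).mpr ⟨hinj, hcard⟩).2
    have hmem : ∀ i, (ψ ∘ e) i ∈ c i (ψ ∘ e) := by
      intro i
      by_cases hi : e i = ρ
      · simp [c, hi]
      · simp only [c, hi, if_false, Finset.mem_filter, Finset.mem_univ, true_and,
          Function.comp, OrderIso.apply_symm_apply]
        refine ⟨hadj _ hi, fun j hj h => ?_⟩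
        exact hj.ne (e.injective (hinj h))
    simp only [hmem, if_true]
    let q : ι → ℝ := fun k => ((c (e.symm k) (ψ ∘ e)).card : ℝ)⁻¹
    have hq : ∏ i, ((c i (ψ ∘ e)).card : ℝ)⁻¹ = ∏ k, q k := by
      rw [← e.toEquiv.prod_comp]
      apply Finset.prod_congr rfl
      intro i _
      simp [q]
    rw [hq, ← Finset.mul_prod_erase Finset.univ q (Finset.mem_univ ρ)]
    have hqρ : q ρ = (Fintype.card V : ℝ)⁻¹ := by simp [q, c]
    have hD1 : D ^ (Fintype.card V - 1) = ∏ i ∈ Finset.univ.erase ρ, D := by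
      rw [Finset.prod_const, Finset.card_erase_of_mem (Finset.mem_univ _), Finset.card_univ, hcard]
    rw [hqρ, hD1, Real.exp_sum]
    have : (Fintype.card V : ℝ) * (∏ i ∈ Finset.univ.erase ρ, D) * ((Fintype.card V : ℝ)⁻¹ * ∏ k ∈ Finset.univ.erase ρ, q k) = ∏ k ∈ Finset.univ.erase ρ, (D * q k) := by
      rw [Finset.prod_mul_distrib]; field_simp
    rw [this]
    apply Finset.prod_le_prod
    · intro i _; positivity
    · intro k hk
      have hkρ : k ≠ ρ := (Finset.mem_erase.mp hk).1
      have hcpos : 0 < (c (e.symm k) (ψ ∘ e)).card := Finset.card_pos.mpr ⟨_, hmem _⟩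
      have hle : (c (e.symm k) (ψ ∘ e)).card ≤ laterNbr G r par ψ k := by
        unfold laterNbr
        refine (Finset.card_le_card (t := (Finset.univ.filter (fun j => r k ≤ r j ∧ G.Adj (ψ (par k)) (ψ j))).image ψ) ?_).trans Finset.card_image_le
        intro x hx
        simp only [c, OrderIso.apply_symm_apply, hkρ, if_false, Finset.mem_filter, Finset.mem_univ, true_and,
          Function.comp] at hx
        obtain ⟨j, rfl⟩ := hsurj x
        refine Finset.mem_image_of_mem _ ?_
        simp only [Finset.mem_filter, Finset.mem_univ, true_and]
        refine ⟨?_, hx.1⟩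
        by_contra hcon
        push Not at hcon
        have h3 : e.symm j < e.symm k := by rw [e.symm.lt_iff_lt, hlt]; exact hcon
        exact hx.2 _ h3 (by simp)
      have hcpos' : (0:ℝ) < (c (e.symm k) (ψ ∘ e)).card := by exact_mod_cast hcpos
      have hle' : ((c (e.symm k) (ψ ∘ e)).card : ℝ) ≤ laterNbr G r par ψ k := by exact_mod_cast hle
      have ha : (0:ℝ) < laterNbr G r par ψ k := lt_of_lt_of_le hcpos' hle'
      have h4 : (laterNbr G r par ψ k : ℝ) / D ≤ Real.exp ((laterNbr G r par ψ k : ℝ) / D - 1) := by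
        have := Real.add_one_le_exp ((laterNbr G r par ψ k : ℝ) / D - 1); linarith
      have h5 : Real.exp (1 - (laterNbr G r par ψ k : ℝ) / D) ≤ D * (laterNbr G r par ψ k : ℝ)⁻¹ := by
        rw [show 1 - (laterNbr G r par ψ k : ℝ) / D = -((laterNbr G r par ψ k : ℝ) / D - 1) by ring, Real.exp_neg]
        rw [show D * (laterNbr G r par ψ k : ℝ)⁻¹ = ((laterNbr G r par ψ k : ℝ) / D)⁻¹ by field_simp]
        exact inv_anti₀ (by positivity) h4
      refine h5.trans ?_
      exact mul_le_mul_of_nonneg_left (inv_anti₀ hcpos' hle') hD.le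
  refine le_trans (b := ∑ ψ ∈ embSet G par ρ, (Fintype.card V * D ^ (Fintype.card V - 1)) *
       ∏ i, (if (ψ ∘ e) i ∈ c i (ψ ∘ e) then ((c i (ψ ∘ e)).card : ℝ)⁻¹ else 0))
    (Finset.sum_le_sum fun ψ hψ => le_of_eq_of_le (by congr!) (hterm ψ hψ)) ?_
  rw [← Finset.mul_sum]
  refine mul_le_of_le_one_right (by positivity) ?_
  refine le_trans ?_ hA
  let F : (Fin (Fintype.card V) → V) → ℝ := fun f => ∏ i, (if f i ∈ c i f then ((c i f).card : ℝ)⁻¹ else 0)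
  have hF : ∀ f, 0 ≤ F f := fun f => Finset.prod_nonneg (fun i _ => by split_ifs <;> positivity)
  change ∑ ψ ∈ embSet G par ρ, F (ψ ∘ e) ≤ ∑ f, F f
  have : ∑ ψ : ι → V, F (ψ ∘ e) = ∑ f, F f :=
    (Equiv.arrowCongr e.toEquiv.symm (Equiv.refl V)).sum_comp F
  rw [← this]
  exact Finset.sum_le_sum_of_subset_of_nonneg (Finset.subset_univ _) (fun _ _ _ => hF _)

lemma dfs_order {W : Type} [Fintype W] (T : SimpleGraph W) (hT : T.Connected) :
    ∀ k, 1 ≤ k → k ≤ Fintype.card W → ∃ (f : ℕ → W) (p : ℕ → ℕ),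
      Set.InjOn f (Set.Iio k) ∧ (∀ i, 0 < i → i < k → p i < i ∧ T.Adj (f (p i)) (f i)) ∧
      (∀ i, i + 1 < k → p (i+1) = i ∨ ∀ x, T.Adj (f i) x → x ∈ f '' Set.Iic i) := by
  classical
  intro k hk
  induction k, hk using Nat.le_induction with
  | base =>
    intro _
    obtain ⟨w⟩ := hT.nonempty
    refine ⟨fun _ => w, fun _ => 0, ?_, ?_, ?_⟩
    · intro a ha b hb _
      simp at ha hb; omega
    · intro i h1 h2; omega
    · intro i hi; omega
  | succ k hk ih =>
    intro hkn
    obtain ⟨f, p, hinj, hp, hd⟩ := ih (by omega)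
    -- new vertex x with parent index q
    have : ∃ x q, q < k ∧ T.Adj (f q) x ∧ x ∉ f '' Set.Iio k ∧
        (q + 1 = k ∨ ∀ y, T.Adj (f (k-1)) y → y ∈ f '' Set.Iio k) := by
      by_cases h : ∀ y, T.Adj (f (k-1)) y → y ∈ f '' Set.Iio k
      · have hex : ∃ y, y ∉ f '' Set.Iio k := by
          by_contra hcon
          push Not at hcon
          have h1 : Fintype.card W ≤ k := by
            have : (Finset.univ : Finset W) ⊆ (Finset.range k).image f := by
              intro y _
              obtain ⟨i, hi, rfl⟩ := hcon y
              exact Finset.mem_image_of_mem _ (Finset.mem_range.mpr hi)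
            have h2 := (Finset.card_le_card this).trans Finset.card_image_le
            simpa using h2
          omega
        obtain ⟨y, hy⟩ := hex
        obtain ⟨w⟩ := hT.preconnected (f 0) y
        obtain ⟨d, hd1, hd2, hd3⟩ := w.exists_boundary_dart (f '' Set.Iio k) ⟨0, by simp; omega, rfl⟩ hy
        obtain ⟨q, hq, hq2⟩ := hd2
        exact ⟨d.snd, q, hq, hq2 ▸ d.adj, hd3, Or.inr h⟩
      · push Not at h
        obtain ⟨y, h1, h2⟩ := h
        exact ⟨y, k-1, by omega, h1, h2, Or.inl (by omega)⟩
    obtain ⟨x, q, hq, hadj, hx, hor⟩ := this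
    have hf : ∀ i, i < k → Function.update f k x i = f i := fun i hi =>
      Function.update_of_ne hi.ne _ _
    have hp' : ∀ i, i < k → Function.update p k q i = p i := fun i hi =>
      Function.update_of_ne hi.ne _ _
    refine ⟨Function.update f k x, Function.update p k q, ?_, ?_, ?_⟩
    · intro a ha b hb hab
      simp only [Set.mem_Iio] at ha hb
      rcases Nat.lt_succ_iff_lt_or_eq.mp ha with ha | rfl <;>
      rcases Nat.lt_succ_iff_lt_or_eq.mp hb with hb | hb
      · rw [hf _ ha, hf _ hb] at hab; exact hinj ha hb hab
      · subst hb; rw [hf _ ha, Function.update_self] at hab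
        exact absurd ⟨a, ha, hab⟩ hx
      · rw [hf _ hb, Function.update_self] at hab
        exact absurd ⟨b, hb, hab.symm⟩ hx
      · exact hb.symm
    · intro i h0 hi
      rcases Nat.lt_succ_iff_lt_or_eq.mp hi with hi | rfl
      · have := hp i h0 hi
        rw [hp' _ hi, hf _ hi, hf _ (by omega)]
        exact this
      · rw [Function.update_self, Function.update_self, hf _ hq]
        exact ⟨hq, hadj⟩
    · intro i hi
      have him : ∀ y, y ∈ f '' Set.Iic i → y ∈ Function.update f k x '' Set.Iic i := by
        rintro y ⟨j, hj, rfl⟩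
        refine ⟨j, hj, hf _ ?_⟩
        simp at hj; omega
      rw [hf i (by omega)]
      rcases Nat.lt_succ_iff_lt_or_eq.mp hi with hi | hi
      · rw [hp' _ hi]
        rcases hd i hi with h | h
        · exact Or.inl h
        · exact Or.inr (fun y hy => him y (h y hy))
      · rw [hi, Function.update_self]
        rcases hor with h | h
        · left; omega
        · right
          intro y hy
          apply him
          have hik : k - 1 = i := by omega
          rw [hik] at h
          obtain ⟨j, hj, hj2⟩ := h y hy
          exact ⟨j, by simp at hj ⊢; omega, hj2⟩

open Classical in
lemma count_le {V : Type} [Fintype V] (n : ℕ) (hn : 2 ≤ n) (hV : Fintype.card V = n)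
    (G : SimpleGraph V) (D : ℝ) (hD : 10 ≤ D)
    (hdeg : ∀ v, ((Finset.univ.filter (fun x => G.Adj v x)).card : ℝ) ≤ D)
    (p : Fin n → Fin n) (ρ : Fin n) (hρ : ρ.val = 0) (hp : ∀ i, i ≠ ρ → p i < i)
    (hdfs : ∀ i j : Fin n, j.val = i.val + 1 → p j = i ∨ ∀ k, k ≠ ρ → p k ≠ i) :
    ((embSet G p ρ).card : ℝ) ≤ 2 * (n * D ^ (n - 1)) * Real.exp (-(0.04 * n)) := by
  have hD0 : 0 < D := by linarith
  have hnR : (2:ℝ) ≤ n := by exact_mod_cast hn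
  set L : Finset (Fin n) := Finset.univ.filter (fun i => ∀ k, k ≠ ρ → p k ≠ i) with hL
  have hcard : Fintype.card (Fin n) = Fintype.card V := by simp [hV]
  have hnb : ∀ ψ ∈ embSet G p ρ, ∀ v,
      ((Finset.univ.filter (fun j => G.Adj v (ψ j))).card : ℝ) ≤ D := by
    intro ψ hψ v
    simp only [embSet, Finset.mem_filter, Finset.mem_univ, true_and] at hψ
    refine le_trans ?_ (hdeg v)
    rw [← Finset.card_image_of_injective _ hψ.1]
    norm_cast
    apply Finset.card_le_card
    intro x hx
    simp only [Finset.mem_image, Finset.mem_filter, Finset.mem_univ, true_and] at hx ⊢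
    obtain ⟨j, hj, rfl⟩ := hx
    exact hj
  have ha : ∀ (r : Fin n → ℕ), ∀ ψ ∈ embSet G p ρ, ∀ i, 0 ≤ 1 - (laterNbr G r p ψ i : ℝ) / D := by
    intro r ψ hψ i
    have : (laterNbr G r p ψ i : ℝ) ≤ D := by
      refine le_trans ?_ (hnb ψ hψ (ψ (p i)))
      unfold laterNbr
      norm_cast
      apply Finset.card_le_card
      intro j hj
      simp only [Finset.mem_filter, Finset.mem_univ, true_and] at hj ⊢
      exact hj.2
    have := (div_le_one hD0).mpr this
    linarith
  by_cases hcase : (L.card : ℝ) ≤ n / 10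
  · have hB := proc_bound G (fun i : Fin n => i.val) Fin.val_injective p ρ
      (fun i hi => hp i hi) hcard D hD0
    rw [hV] at hB
    have hdef : ∀ ψ ∈ embSet G p ρ, Real.exp (0.04 * n) ≤
        Real.exp (∑ i ∈ Finset.univ.erase ρ, (1 - (laterNbr G (fun i : Fin n => i.val) p ψ i : ℝ) / D)) := by
      intro ψ hψ
      apply Real.exp_le_exp.mpr
      have hs : ∀ k, k ∈ Lᶜ → ∃ j : Fin n, j.val = k.val + 1 ∧ p j = k := by
        intro k hk
        simp only [hL, Finset.mem_compl, Finset.mem_filter, Finset.mem_univ, true_and] at hk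
        have hk' := hk
        push Not at hk'
        obtain ⟨m, hm, hm2⟩ := hk'
        have h1 := hp m hm
        rw [hm2] at h1
        have h2 : k.val + 1 < n := by have := m.2; have : k.val < m.val := h1; omega
        refine ⟨⟨k.val + 1, h2⟩, rfl, ?_⟩
        rcases hdfs k ⟨k.val + 1, h2⟩ rfl with h | h
        · exact h
        · exact absurd h hk
      choose! s hs1 hs2 using hs
      let l : Fin n → ℕ := fun k => (Finset.univ.filter (fun j => k < j ∧ G.Adj (ψ k) (ψ j))).card
      have hal : ∀ k ∈ Lᶜ, laterNbr G (fun i : Fin n => i.val) p ψ (s k) = l k := by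
        intro k hk
        unfold laterNbr
        simp only [l]
        rw [hs2 k hk, hs1 k hk]
        rfl
      have hsum : 2 * ∑ k, (l k : ℝ) ≤ n * D := by
        have h1 : ∀ k, (l k : ℝ) = ∑ j, if (k < j ∧ G.Adj (ψ k) (ψ j)) then (1:ℝ) else 0 := by
          intro k; simp [l]
        have h2 : ∑ k, (l k : ℝ) = ∑ k, ∑ j, if (j < k ∧ G.Adj (ψ k) (ψ j)) then (1:ℝ) else 0 := by
          simp_rw [h1]
          rw [Finset.sum_comm]
          simp_rw [G.adj_comm]
        rw [two_mul]
        nth_rw 2 [h2]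
        simp_rw [h1]
        rw [← Finset.sum_add_distrib]
        have : (n : ℝ) * D = ∑ k : Fin n, D := by simp
        rw [this]
        apply Finset.sum_le_sum
        intro k _
        refine le_trans ?_ (hnb ψ hψ (ψ k))
        rw [← Finset.sum_add_distrib, Finset.card_filter]
        push_cast
        apply Finset.sum_le_sum
        intro j _
        by_cases hA : G.Adj (ψ k) (ψ j)
        · rcases lt_trichotomy k j with h | h | h
          · simp [hA, h, h.not_gt]
          · simp [h]
          · simp [hA, h, h.not_gt]
        · simp [hA]
      have hsinj : Set.InjOn s (Lᶜ : Finset (Fin n)) := by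
        intro a ha b hb hab
        rw [← hs2 a ha, ← hs2 b hb, hab]
      have himg : Lᶜ.image s ⊆ Finset.univ.erase ρ := by
        intro j hj
        obtain ⟨k, hk, rfl⟩ := Finset.mem_image.mp hj
        simp only [Finset.mem_erase, Finset.mem_univ, and_true]
        intro h
        have := hs1 k hk
        rw [h, hρ] at this
        omega
      have h1 := Finset.sum_le_sum_of_subset_of_nonneg
        (f := fun i => (1 - (laterNbr G (fun i : Fin n => i.val) p ψ i : ℝ) / D)) himg
        (fun i _ _ => ha _ ψ hψ i)
      rw [Finset.sum_image hsinj] at h1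
      refine le_trans ?_ h1
      have h2 : ∑ k ∈ Lᶜ, (1 - (laterNbr G (fun i : Fin n => i.val) p ψ (s k) : ℝ) / D)
          = ∑ k ∈ Lᶜ, (1 - (l k : ℝ) / D) := by
        apply Finset.sum_congr rfl
        intro k hk
        rw [hal k hk]
      rw [h2, Finset.sum_sub_distrib, ← Finset.sum_div]
      have h3 : ∑ k ∈ Lᶜ, (l k : ℝ) ≤ ∑ k, (l k : ℝ) :=
        Finset.sum_le_sum_of_subset_of_nonneg (Finset.subset_univ _) (fun _ _ _ => by positivity)
      have h4 : (∑ k ∈ Lᶜ, (l k : ℝ)) / D ≤ n / 2 := by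
        rw [div_le_iff₀ hD0]; linarith
      have h5 : (Lᶜ.card : ℝ) = n - L.card := by
        rw [Finset.card_compl, Fintype.card_fin, Nat.cast_sub]
        exact (Finset.card_le_univ L).trans (by simp)
      simp only [Finset.sum_const, nsmul_eq_mul, mul_one]
      rw [h5]
      linarith
    have h6 := (Finset.sum_le_sum hdef).trans hB
    rw [Finset.sum_const, nsmul_eq_mul] at h6
    rw [Real.exp_neg, ← div_eq_mul_inv, le_div_iff₀ (Real.exp_pos _)]
    have : 0 ≤ (n:ℝ) * D ^ (n-1) := by positivity
    linarith
  · push Not at hcase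
    have hpL : ∀ i, i ≠ ρ → p i ∉ L := by
      intro i hi h
      simp only [hL, Finset.mem_filter, Finset.mem_univ, true_and] at h
      exact h i hi rfl
    have hρL : ρ ∉ L := by
      have h1 : (⟨1, by omega⟩ : Fin n) ≠ ρ := by
        intro h; rw [← h] at hρ; simp at hρ
      have h2 := hp _ h1
      have h3 : p ⟨1, by omega⟩ = ρ := by
        apply Fin.ext
        have : (p ⟨1, by omega⟩).val < 1 := h2
        omega
      have := hpL _ h1
      rwa [h3] at this
    let r1 : Fin n → ℕ := fun i => if i ∈ L then n + i.val else i.val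
    let r2 : Fin n → ℕ := fun i => if i ∈ L then 3 * n - i.val else i.val
    have hr1 : Function.Injective r1 := by
      intro i j h
      simp only [r1] at h
      have := i.2; have := j.2
      apply Fin.ext
      split_ifs at h <;> omega
    have hr2 : Function.Injective r2 := by
      intro i j h
      simp only [r2] at h
      have := i.2; have := j.2
      apply Fin.ext
      split_ifs at h <;> omega
    have hB1 := proc_bound G r1 hr1 p ρ (by
      intro i hi
      have h1 : (p i).val < i.val := hp i hi
      simp only [r1, hpL i hi, if_false]
      split_ifs <;> omega) hcard D hD0
    have hB2 := proc_bound G r2 hr2 p ρ (by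
      intro i hi
      have h1 : (p i).val < i.val := hp i hi
      have := i.2
      simp only [r2, hpL i hi, if_false]
      split_ifs <;> omega) hcard D hD0
    rw [hV] at hB1 hB2
    have hdef : ∀ ψ ∈ embSet G p ρ, Real.exp (0.04 * n) ≤
        Real.exp (∑ i ∈ Finset.univ.erase ρ, (1 - (laterNbr G r1 p ψ i : ℝ) / D)) +
        Real.exp (∑ i ∈ Finset.univ.erase ρ, (1 - (laterNbr G r2 p ψ i : ℝ) / D)) := by
      intro ψ hψ
      have hsub : L ⊆ Finset.univ.erase ρ := by
        intro i hi
        simp only [Finset.mem_erase, Finset.mem_univ, and_true]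
        rintro rfl; exact hρL hi
      have h1 := Finset.sum_le_sum_of_subset_of_nonneg
        (f := fun i => (1 - (laterNbr G r1 p ψ i : ℝ) / D)) hsub (fun i _ _ => ha _ ψ hψ i)
      have h2 := Finset.sum_le_sum_of_subset_of_nonneg
        (f := fun i => (1 - (laterNbr G r2 p ψ i : ℝ) / D)) hsub (fun i _ _ => ha _ ψ hψ i)
      have h3 : ∀ i ∈ L, (0.9 : ℝ) ≤ (1 - (laterNbr G r1 p ψ i : ℝ) / D) + (1 - (laterNbr G r2 p ψ i : ℝ) / D) := by
        intro i hi
        have h4 : laterNbr G r1 p ψ i + laterNbr G r2 p ψ i ≤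
            (Finset.univ.filter (fun j => G.Adj (ψ (p i)) (ψ j))).card + 1 := by
          unfold laterNbr
          rw [← Finset.card_union_add_card_inter]
          apply Nat.add_le_add
          · apply Finset.card_le_card
            intro j hj
            simp only [Finset.mem_union, Finset.mem_filter, Finset.mem_univ, true_and] at hj ⊢
            rcases hj with hj | hj <;> exact hj.2
          · rw [Finset.card_le_one]
            have : ∀ a ∈ (Finset.univ.filter (fun j => r1 i ≤ r1 j ∧ G.Adj (ψ (p i)) (ψ j))) ∩
              (Finset.univ.filter (fun j => r2 i ≤ r2 j ∧ G.Adj (ψ (p i)) (ψ j))), a = i := by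
              intro j hj
              simp only [Finset.mem_inter, Finset.mem_filter, Finset.mem_univ, true_and] at hj
              have e1 := hj.1.1
              have e2 := hj.2.1
              simp only [r1, r2, hi, if_true] at e1 e2
              have := i.2; have := j.2
              apply Fin.ext
              split_ifs at e1 e2 <;> omega
            intro a ha b hb
            rw [this a ha, this b hb]
        have h5 : (laterNbr G r1 p ψ i : ℝ) + laterNbr G r2 p ψ i ≤ D + 1 := by
          have h6 := hnb ψ hψ (ψ (p i))
          have h7 : (laterNbr G r1 p ψ i : ℝ) + laterNbr G r2 p ψ i ≤
            (Finset.univ.filter (fun j => G.Adj (ψ (p i)) (ψ j))).card + 1 := by exact_mod_cast h4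
          linarith
        have h8 : (laterNbr G r1 p ψ i : ℝ) / D + laterNbr G r2 p ψ i / D ≤ 1.1 := by
          rw [← add_div, div_le_iff₀ hD0]
          linarith
        linarith
      have h9 := Finset.sum_le_sum h3
      rw [Finset.sum_const, nsmul_eq_mul, Finset.sum_add_distrib] at h9
      by_cases hc : 0.04 * (n:ℝ) ≤ ∑ i ∈ Finset.univ.erase ρ, (1 - (laterNbr G r1 p ψ i : ℝ) / D)
      · have := Real.exp_le_exp.mpr hc
        have := Real.exp_pos (∑ i ∈ Finset.univ.erase ρ, (1 - (laterNbr G r2 p ψ i : ℝ) / D))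
        linarith
      · have hc2 : 0.04 * (n:ℝ) ≤ ∑ i ∈ Finset.univ.erase ρ, (1 - (laterNbr G r2 p ψ i : ℝ) / D) := by
          push Not at hc
          linarith
        have := Real.exp_le_exp.mpr hc2
        have := Real.exp_pos (∑ i ∈ Finset.univ.erase ρ, (1 - (laterNbr G r1 p ψ i : ℝ) / D))
        linarith
    have h6 := Finset.sum_le_sum hdef
    rw [Finset.sum_const, nsmul_eq_mul, Finset.sum_add_distrib] at h6
    rw [Real.exp_neg, ← div_eq_mul_inv, le_div_iff₀ (Real.exp_pos _)]
    linarith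


/-- Theorem 3.1: if `G` is an `n`-vertex almost `d`-regular graph and `T` is
any `n`-vertex tree, then the number of injective embeddings of `T` in `G` is
at most `e^{-n/1000}·dⁿ`. -/
theorem count_trees :
    ∃ d₀ : ℝ, 0 < d₀ ∧ ∀ d : ℕ, d₀ ≤ d →
      ∀ (V W : Type) [Fintype V] [Fintype W] [DecidableEq V] [DecidableEq W]
        (n : ℕ) (_ : Fintype.card V = n) (_ : Fintype.card W = n)
        (G : SimpleGraph V) [DecidableRel G.Adj]
        (T : SimpleGraph W) [DecidableRel T.Adj] (_ : T.IsTree)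
        (_ : ∀ v, (1 - (10:ℝ) ^ (-10 : ℤ)) * d ≤ (G.degree v : ℝ) ∧
              (G.degree v : ℝ) ≤ (1 + (10:ℝ) ^ (-10 : ℤ)) * d),
        (Nat.card {φ : W → V // Function.Injective φ ∧
            ∀ u w, T.Adj u w → G.Adj (φ u) (φ w)} : ℝ)
          ≤ Real.exp (-(n : ℝ) / 1000) * (d : ℝ) ^ n := by
  refine ⟨100000, by norm_num, ?_⟩
  intro d hd V W _ _ _ _ n hV hW G _ T _ hT hdeg
  classical
  have hWne : Nonempty W := hT.1.nonempty
  have hn1 : 1 ≤ n := by rw [← hW]; exact Fintype.card_pos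
  have hVne : Nonempty V := by
    rw [← Fintype.card_pos_iff, hV]; exact hn1
  have hnd : (50000:ℝ) ≤ n := by
    obtain ⟨v⟩ := hVne
    have h1 := (hdeg v).1
    have h2 : (G.degree v : ℝ) ≤ n := by
      have := G.degree_lt_card_verts v
      rw [hV] at this
      exact_mod_cast this.le
    norm_num at h1
    linarith
  have hn2 : 2 ≤ n := by
    have : (2:ℝ) ≤ n := by linarith
    exact_mod_cast this
  set D : ℝ := (1 + (10:ℝ) ^ (-10 : ℤ)) * d with hD
  have hDd : (d:ℝ) ≤ D := by rw [hD]; norm_num; linarith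
  obtain ⟨f, p, hinj, hp, hd'⟩ := dfs_order T hT.1 n hn1 hW.ge
  let e0 : Fin n → W := fun i => f i.val
  have he0 : Function.Injective e0 := fun i j h => Fin.ext (hinj i.2 j.2 h)
  have hbij : Function.Bijective e0 :=
    (Fintype.bijective_iff_injective_and_card e0).mpr ⟨he0, by simp [hW]⟩
  let ρ : Fin n := ⟨0, hn1⟩
  have hne : ∀ i : Fin n, i ≠ ρ → 0 < i.val := by
    intro i hi
    rcases Nat.eq_zero_or_pos i.val with h | h
    · exact absurd (Fin.ext h) hi
    · exact h
  let P : Fin n → Fin n := fun i => if h : p i.val < n then ⟨p i.val, h⟩ else ρ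
  have hP : ∀ i, i ≠ ρ → (P i).val = p i.val := by
    intro i hi
    have h1 := (hp i.val (hne i hi) i.2).1
    have h2 : p i.val < n := h1.trans i.2
    simp [P, h2]
  have hcount := count_le n hn2 hV G D (by linarith) (by
    intro v
    refine le_trans (le_of_eq ?_) (hdeg v).2
    rw [← SimpleGraph.card_neighborFinset_eq_degree, SimpleGraph.neighborFinset_eq_filter]
    norm_cast
    congr!) P ρ rfl (by
    intro i hi
    have := (hp i.val (hne i hi) i.2).1
    rw [Fin.lt_def, hP i hi]; exact this) (by
    intro i j hij
    have hj : j ≠ ρ := by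
      intro h; rw [h] at hij; simp [ρ] at hij
    rcases hd' i.val (by have := j.2; omega) with h | h
    · left
      apply Fin.ext
      rw [hP j hj, hij, h]
    · right
      intro k hk hki
      have hk2 := hp k.val (hne k hk) k.2
      have hk3 := hP k hk
      rw [hki] at hk3
      rw [← hk3] at hk2
      obtain ⟨m, hm, hm2⟩ := h _ hk2.2
      simp only [Set.mem_Iic] at hm
      have := hinj (show m < n by have := i.2; omega) k.2 hm2
      omega)
  have hle : Nat.card {φ : W → V // Function.Injective φ ∧
            ∀ u w, T.Adj u w → G.Adj (φ u) (φ w)} ≤ (embSet G P ρ).card := by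
    rw [← Nat.card_eq_finsetCard (embSet G P ρ)]
    refine Nat.card_le_card_of_injective
      (fun φ => (⟨φ.1 ∘ e0, ?_⟩ : {x // x ∈ embSet G P ρ})) ?_
    · simp only [embSet, Finset.mem_filter, Finset.mem_univ, true_and]
      refine ⟨φ.2.1.comp he0, fun i hi => φ.2.2 _ _ ?_⟩
      have := (hp i.val (hne i hi) i.2).2
      simp only [e0]
      rw [hP i hi]; exact this
    · intro φ φ' h
      apply Subtype.ext
      have h1 : φ.1 ∘ e0 = φ'.1 ∘ e0 := congrArg Subtype.val h
      exact hbij.2.injective_comp_right h1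
  have hle' : (Nat.card {φ : W → V // Function.Injective φ ∧
            ∀ u w, T.Adj u w → G.Adj (φ u) (φ w)} : ℝ) ≤ (embSet G P ρ).card := by
    exact_mod_cast hle
  refine hle'.trans (hcount.trans ?_)
  have hd1 : (1:ℝ) ≤ d := by linarith
  have hDn : D ^ (n-1) ≤ Real.exp (0.001 * n) * (d:ℝ) ^ n := by
    rw [hD, mul_pow]
    apply mul_le_mul
    · have h1 : (1 + (10:ℝ) ^ (-10 : ℤ)) ≤ Real.exp 0.001 := by
        have := Real.add_one_le_exp (0.001:ℝ)
        norm_num at this ⊢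
        linarith
      calc (1 + (10:ℝ) ^ (-10 : ℤ)) ^ (n-1) ≤ (1 + (10:ℝ) ^ (-10 : ℤ)) ^ n :=
            pow_le_pow_right₀ (by norm_num) (by omega)
        _ ≤ (Real.exp 0.001) ^ n := pow_le_pow_left₀ (by norm_num) h1 n
        _ = Real.exp (0.001 * n) := by rw [← Real.exp_nat_mul]; ring_nf
    · exact pow_le_pow_right₀ hd1 (by omega)
    · positivity
    · positivity
  have h2n : 2 * (n:ℝ) ≤ Real.exp (0.03 * n) := by
    have := Real.quadratic_le_exp_of_nonneg (show (0:ℝ) ≤ 0.03 * n by positivity)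
    nlinarith
  have hdn : (0:ℝ) ≤ (d:ℝ) ^ n := by positivity
  calc 2 * (n * D ^ (n - 1)) * Real.exp (-(0.04 * n))
      = (2 * n) * D ^ (n-1) * Real.exp (-(0.04 * n)) := by ring
    _ ≤ Real.exp (0.03 * n) * (Real.exp (0.001 * n) * (d:ℝ) ^ n) * Real.exp (-(0.04 * n)) := by
        gcongr
    _ = Real.exp (0.03 * n + 0.001 * n + -(0.04 * n)) * (d:ℝ) ^ n := by
        rw [Real.exp_add, Real.exp_add]; ring
    _ ≤ Real.exp (-(n : ℝ) / 1000) * (d : ℝ) ^ n := by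
        gcongr
        linarith
end

section
/- There exists a universal constant d₀ > 0 such that for all integers d ≥ d₀ the following holds. Let G be a connected n-vertex graph whose degrees all lie in [(1-10^{-10})d, (1+10^{-10})d], and let T be a uniformly random spanning tree of G. Then for every n-vertex tree T₀, Pr[T ≅ T₀] ≤ e^{-n/2000}. -/
open Finset in
lemma seq_weight {X V R : Type*} [Fintype X] [DecidableEq X] [DecidableEq V] [LinearOrder R]
    (ρ : X → R) (hρ : Function.Injective ρ) (A : (X → V) → X → ℝ) (S : Finset X) :
    ∀ F : Finset (X → V), (∀ f ∈ F, ∀ g ∈ F, ∀ b ∉ S, f b = g b) →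
    (∀ f ∈ F, ∀ a ∈ S, (((F.filter (fun g => ∀ b ∈ S, ρ b < ρ a → g b = f b)).image
      (fun g => g a)).card : ℝ) ≤ A f a) →
    ∑ f ∈ F, ∏ a ∈ S, (A f a)⁻¹ ≤ 1 := by
  induction S using Finset.induction_on_min_value ρ with
  | empty =>
    intro F h1 _
    simp only [prod_empty, sum_const, nsmul_eq_mul, mul_one]
    have : F.card ≤ 1 := by
      rw [Finset.card_le_one]
      intro f hf g hg
      funext b
      exact h1 f hf g hg b (by simp)
    exact_mod_cast this
  | insert a S ha hmin ih =>
    intro F h1 h2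
    have hlt : ∀ x ∈ S, ρ a < ρ x := by
      intro x hx
      refine lt_of_le_of_ne (hmin x hx) ?_
      intro h
      have := hρ h
      subst this
      exact ha hx
    set I := F.image (fun g => g a) with hI
    have hpos : ∀ f ∈ F, ∀ b ∈ insert a S, 0 < A f b := by
      intro f hf b hb
      refine lt_of_lt_of_le ?_ (h2 f hf b hb)
      have : 0 < ((F.filter (fun g => ∀ c ∈ insert a S, ρ c < ρ b → g c = f c)).image
        (fun g => g b)).card := by
        rw [Finset.card_pos]
        exact ⟨f b, mem_image.2 ⟨f, by simp [hf], rfl⟩⟩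
      exact_mod_cast this
    have hIA : ∀ f ∈ F, (I.card : ℝ) ≤ A f a := by
      intro f hf
      have := h2 f hf a (mem_insert_self _ _)
      rwa [Finset.filter_true_of_mem] at this
      intro g hg b hb hlt'
      rcases mem_insert.1 hb with rfl | hb
      · exact absurd hlt' (lt_irrefl _)
      · exact absurd hlt' (not_lt.2 (hmin b hb))
    have key : ∀ x ∈ I, ∑ f ∈ F.filter (fun f => f a = x), ∏ b ∈ S, (A f b)⁻¹ ≤ 1 := by
      intro x hx
      apply ih
      · intro f hf g hg b hb
        simp only [mem_filter] at hf hg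
        by_cases hba : b = a
        · subst hba; rw [hf.2, hg.2]
        · exact h1 f hf.1 g hg.1 b (by simp [hba, hb])
      · intro f hf b hb
        simp only [mem_filter] at hf
        refine le_trans ?_ (h2 f hf.1 b (mem_insert_of_mem hb))
        norm_cast
        apply card_le_card
        apply image_subset_image
        intro g hg
        simp only [mem_filter] at hg ⊢
        refine ⟨hg.1.1, ?_⟩
        intro c hc hcb
        rcases mem_insert.1 hc with rfl | hc
        · rw [hg.1.2, hf.2]
        · exact hg.2 c hc hcb
    by_cases hF : F = ∅
    · simp [hF]
    have hIpos : (0:ℝ) < I.card := by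
      have : 0 < I.card := card_pos.2 ((nonempty_iff_ne_empty.2 hF).image _)
      exact_mod_cast this
    calc ∑ f ∈ F, ∏ b ∈ insert a S, (A f b)⁻¹
        ≤ ∑ f ∈ F, (I.card : ℝ)⁻¹ * ∏ b ∈ S, (A f b)⁻¹ := by
          apply sum_le_sum
          intro f hf
          rw [prod_insert ha]
          apply mul_le_mul_of_nonneg_right
          · exact inv_anti₀ hIpos (hIA f hf)
          · apply prod_nonneg
            intro b hb
            exact (inv_pos.2 (hpos f hf b (mem_insert_of_mem hb))).le
      _ = (I.card : ℝ)⁻¹ * ∑ x ∈ I, ∑ f ∈ F.filter (fun f => f a = x), ∏ b ∈ S, (A f b)⁻¹ := by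
          rw [← mul_sum]
          congr 1
          rw [sum_fiberwise_of_maps_to]
          intro f hf
          exact mem_image_of_mem _ hf
      _ ≤ (I.card : ℝ)⁻¹ * ∑ x ∈ I, (1:ℝ) := by
          apply mul_le_mul_of_nonneg_left (sum_le_sum key) (inv_pos.2 hIpos).le
      _ = 1 := by
          simp only [sum_const, nsmul_eq_mul, mul_one]
          field_simp

lemma amgm_inv {x y P : ℝ} (hx : 0 < x) (hy : 0 < y) (hP : 0 < P) (hxy : x * y ≤ P ^ 2) :
    2 * P⁻¹ ≤ x⁻¹ + y⁻¹ := by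
  have h4 : 0 < x⁻¹ := inv_pos.2 hx
  have h5 : 0 < y⁻¹ := inv_pos.2 hy
  have h6 : 0 < P⁻¹ := inv_pos.2 hP
  have h7 : (P⁻¹)^2 ≤ x⁻¹ * y⁻¹ := by
    rw [inv_pow, ← mul_inv]
    exact inv_anti₀ (by positivity) hxy
  refine (sq_le_sq₀ (by positivity) (by positivity)).1 ?_
  nlinarith [sq_nonneg (x⁻¹ - y⁻¹)]

open Finset in
lemma two_orders {X V : Type*} [Fintype X] [DecidableEq X] [DecidableEq V]
    (κ : X → ℕ) (e : X → ℤ) (he : Function.Injective e) (C : X → ℝ)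
    (hC0 : ∀ a, 0 ≤ C a) (F : Finset (X → V))
    (H : ∀ f ∈ F, ∀ a, ∃ N : Finset V,
      (∀ g ∈ F, (∀ b, κ b < κ a → g b = f b) → g a ∈ N) ∧
      ((N.card : ℝ) ≤ C a ∨ ((N.card : ℝ) + 1 ≤ 2 * C a ∧
        ∀ x ∈ N, x ≠ f a → ∃ b, b ≠ a ∧ f b = x ∧ κ b ≤ κ a ∧ ∀ g ∈ F, g b ≠ g a))) :
    (F.card : ℝ) ≤ ∏ a, C a := by
  by_cases hF : F = ∅
  · subst hF
    simp only [card_empty, Nat.cast_zero]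
    exact prod_nonneg fun a _ => hC0 a
  let ρ₁ : X → ℕ ×ₗ ℤ := fun a => toLex (κ a, e a)
  let ρ₂ : X → ℕ ×ₗ ℤ := fun a => toLex (κ a, - e a)
  have hρ₁ : Function.Injective ρ₁ := by
    intro a b h
    apply he
    have := congrArg ofLex h
    simp only [ρ₁, ofLex_toLex, Prod.mk.injEq] at this
    exact this.2
  have hρ₂ : Function.Injective ρ₂ := by
    intro a b h
    apply he
    have := congrArg ofLex h
    simp only [ρ₂, ofLex_toLex, Prod.mk.injEq, neg_inj] at this
    exact this.2
  let I₁ : (X → V) → X → Finset V := fun f a =>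
    (F.filter (fun g => ∀ b ∈ (univ : Finset X), ρ₁ b < ρ₁ a → g b = f b)).image (fun g => g a)
  let I₂ : (X → V) → X → Finset V := fun f a =>
    (F.filter (fun g => ∀ b ∈ (univ : Finset X), ρ₂ b < ρ₂ a → g b = f b)).image (fun g => g a)
  have w₁ := seq_weight ρ₁ hρ₁ (fun f a => ((I₁ f a).card : ℝ)) univ F (by simp)
    (fun f _ a _ => le_rfl)
  have w₂ := seq_weight ρ₂ hρ₂ (fun f a => ((I₂ f a).card : ℝ)) univ F (by simp)
    (fun f _ a _ => le_rfl)
  have p₁ : ∀ f ∈ F, ∀ a, (1:ℝ) ≤ (I₁ f a).card := by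
    intro f hf a
    have : 0 < (I₁ f a).card := card_pos.2 ⟨f a, mem_image.2 ⟨f, by simp [hf], rfl⟩⟩
    exact_mod_cast this
  have p₂ : ∀ f ∈ F, ∀ a, (1:ℝ) ≤ (I₂ f a).card := by
    intro f hf a
    have : 0 < (I₂ f a).card := card_pos.2 ⟨f a, mem_image.2 ⟨f, by simp [hf], rfl⟩⟩
    exact_mod_cast this
  have hsum : ∀ f ∈ F, ∀ a, ((I₁ f a).card : ℝ) + (I₂ f a).card ≤ 2 * C a := by
    intro f hf a
    obtain ⟨N, hN, hc⟩ := H f hf a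
    have s₁ : I₁ f a ⊆ N := by
      intro x hx
      obtain ⟨g, hg, rfl⟩ := mem_image.1 hx
      simp only [mem_filter] at hg
      apply hN g hg.1
      intro b hb
      exact hg.2 b (mem_univ _) (Prod.Lex.toLex_lt_toLex.2 (Or.inl hb))
    have s₂ : I₂ f a ⊆ N := by
      intro x hx
      obtain ⟨g, hg, rfl⟩ := mem_image.1 hx
      simp only [mem_filter] at hg
      apply hN g hg.1
      intro b hb
      exact hg.2 b (mem_univ _) (Prod.Lex.toLex_lt_toLex.2 (Or.inl hb))
    rcases hc with hc | ⟨hc, hx⟩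
    · have c₁ : ((I₁ f a).card : ℝ) ≤ N.card := by exact_mod_cast card_le_card s₁
      have c₂ : ((I₂ f a).card : ℝ) ≤ N.card := by exact_mod_cast card_le_card s₂
      linarith
    · have hi : I₁ f a ∩ I₂ f a ⊆ {f a} := by
        intro x hxx
        rw [mem_singleton]
        by_contra hne
        have hx1 := (mem_inter.1 hxx).1
        have hx2 := (mem_inter.1 hxx).2
        obtain ⟨b, hba, hfb, hκ, hb⟩ := hx x (s₁ hx1) hne
        obtain ⟨g, hg, hgx⟩ := mem_image.1 hx1
        obtain ⟨g', hg', hgx'⟩ := mem_image.1 hx2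
        simp only [mem_filter] at hg hg'
        have hor : ρ₁ b < ρ₁ a ∨ ρ₂ b < ρ₂ a := by
          simp only [ρ₁, ρ₂, Prod.Lex.toLex_lt_toLex]
          have : e b ≠ e a := fun h => hba (he h)
          omega
        rcases hor with h | h
        · have := hg.2 b (mem_univ _) h
          exact hb g hg.1 (by rw [this, hfb, hgx])
        · have := hg'.2 b (mem_univ _) h
          exact hb g' hg'.1 (by rw [this, hfb, hgx'])
      have h1 := card_union_add_card_inter (I₁ f a) (I₂ f a)
      have h2 : (I₁ f a ∪ I₂ f a).card ≤ N.card := card_le_card (union_subset s₁ s₂)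
      have h3 : (I₁ f a ∩ I₂ f a).card ≤ 1 := by simpa using card_le_card hi
      have : (I₁ f a).card + (I₂ f a).card ≤ N.card + 1 := by omega
      have : ((I₁ f a).card : ℝ) + (I₂ f a).card ≤ N.card + 1 := by exact_mod_cast this
      linarith
  obtain ⟨f0, hf0⟩ := nonempty_iff_ne_empty.2 hF
  have hC : ∀ a, 0 < C a := by
    intro a
    have := hsum f0 hf0 a
    have := p₁ f0 hf0 a
    have := p₂ f0 hf0 a
    linarith
  have hP : 0 < ∏ a, C a := prod_pos fun a _ => hC a
  have hterm : ∀ f ∈ F, 2 * (∏ a, C a)⁻¹ ≤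
      ∏ a, ((I₁ f a).card : ℝ)⁻¹ + ∏ a, ((I₂ f a).card : ℝ)⁻¹ := by
    intro f hf
    rw [prod_inv_distrib, prod_inv_distrib]
    set x := ∏ a, ((I₁ f a).card : ℝ)
    set y := ∏ a, ((I₂ f a).card : ℝ)
    have hx : 0 < x := prod_pos fun a _ => by linarith [p₁ f hf a]
    have hy : 0 < y := prod_pos fun a _ => by linarith [p₂ f hf a]
    have hxy : x * y ≤ (∏ a, C a) ^ 2 := by
      simp only [x, y]
      rw [← prod_mul_distrib, ← prod_pow]
      apply prod_le_prod
      · intro a _; positivity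
      · intro a _
        nlinarith [hsum f hf a, p₁ f hf a, p₂ f hf a,
          sq_nonneg (((I₁ f a).card : ℝ) - (I₂ f a).card)]
    exact amgm_inv hx hy hP hxy
  have := sum_le_sum hterm
  rw [sum_add_distrib] at this
  simp only [sum_const, nsmul_eq_mul] at this
  have h8 : (F.card : ℝ) * (2 * (∏ a, C a)⁻¹) ≤ 2 := by linarith
  have h9 : (F.card : ℝ) * (∏ a, C a)⁻¹ ≤ 1 := by linarith
  rwa [← div_eq_mul_inv, div_le_one hP] at h9

open Finset in
lemma leaf_case {V W : Type} [Fintype V] [Fintype W] [DecidableEq V] [DecidableEq W]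
    (G : SimpleGraph V) [DecidableRel G.Adj] (D : ℕ) (hD : ∀ v, G.degree v ≤ D)
    (r : W) (p : W → W) (dep : W → ℕ) (hdep : ∀ a, a ≠ r → dep (p a) < dep a)
    (F : Finset (W → V)) (hb : ∀ f ∈ F, Function.Bijective f)
    (hadj : ∀ f ∈ F, ∀ a, a ≠ r → G.Adj (f (p a)) (f a)) :
    (F.card : ℝ) ≤ Fintype.card V * ((D : ℝ) + 1) ^ (Fintype.card W) *
      (1/2) ^ ((insert r ((univ.erase r).image p))ᶜ.card) := by
  set Q := insert r ((univ.erase r).image p) with hQ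
  have hpQ : ∀ a, a ≠ r → p a ∈ Q := by
    intro a ha
    exact mem_insert_of_mem (mem_image_of_mem _ (by simp [ha]))
  have hrQ : r ∈ Q := mem_insert_self _ _
  let M := univ.sup dep + 1
  have hM : ∀ a, dep a < M := fun a => Nat.lt_succ_of_le (le_sup (f := dep) (mem_univ a))
  let κ : W → ℕ := fun a => if a ∈ Q then dep a else M
  have hκ : ∀ a, a ≠ r → κ (p a) < κ a := by
    intro a ha
    simp only [κ, hpQ a ha, if_true]
    split_ifs
    · exact hdep a ha
    · exact hM _
  let C : W → ℝ := fun a => if a = r then (Fintype.card V : ℝ) else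
    if a ∈ Q then (D : ℝ) else ((D : ℝ) + 1) / 2
  have hC0 : ∀ a, 0 ≤ C a := by
    intro a
    simp only [C]
    split_ifs <;> positivity
  let e : W → ℤ := fun a => ((Fintype.equivFin W a : ℕ) : ℤ)
  have he : Function.Injective e := by
    intro a b h
    simpa [e, Fin.val_inj] using h
  have main := two_orders κ e he C hC0 F ?_
  · refine main.trans ?_
    calc ∏ a, C a ≤ ∏ a, ((if a = r then (Fintype.card V : ℝ) else 1) *
          (((D : ℝ) + 1) * (if a ∈ Qᶜ then (1/2 : ℝ) else 1))) := by
          apply prod_le_prod (fun a _ => hC0 a)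
          intro a _
          simp only [C, mem_compl]
          by_cases har : a = r
          · subst har
            simp only [hrQ, if_true, not_true, if_false]
            have : (0:ℝ) ≤ Fintype.card V := by positivity
            have : (0:ℝ) ≤ D := by positivity
            nlinarith
          · by_cases haQ : a ∈ Q
            · simp [har, haQ]
            · simp [har, haQ]; apply le_of_eq; ring
      _ = _ := by
          rw [prod_mul_distrib, prod_mul_distrib]
          simp only [prod_ite_eq', mem_univ, if_true, prod_const, card_univ]
          rw [prod_ite]
          simp only [prod_const, one_pow, mul_one]
          rw [filter_mem_eq_inter, univ_inter, mul_assoc]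
  · intro f hf a
    by_cases har : a = r
    · refine ⟨univ, by simp, Or.inl ?_⟩
      simp [C, har]
    · refine ⟨G.neighborFinset (f (p a)), ?_, ?_⟩
      · intro g hg hgf
        rw [SimpleGraph.mem_neighborFinset, ← hgf _ (hκ a har)]
        exact hadj g hg a har
      · have hc : ((G.neighborFinset (f (p a))).card : ℝ) ≤ D := by
          rw [SimpleGraph.card_neighborFinset_eq_degree]
          exact_mod_cast hD _
        by_cases haQ : a ∈ Q
        · left; simpa [C, har, haQ] using hc
        · right
          refine ⟨?_, ?_⟩
          · simp only [C, har, haQ, if_false]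
            linarith
          · intro x _ hne
            obtain ⟨b, rfl⟩ := (hb f hf).2 x
            have hba : b ≠ a := fun h => hne (by rw [h])
            refine ⟨b, hba, rfl, ?_, fun g hg h => hba ((hb g hg).1 h)⟩
            simp only [κ, haQ, if_false]
            split_ifs
            · exact (hM _).le
            · exact le_rfl

open Finset in
lemma path_case_aux {V W : Type} [Fintype V] [Fintype W] [DecidableEq V] [DecidableEq W]
    (G : SimpleGraph V) [DecidableRel G.Adj] (D : ℕ) (hD : ∀ v, G.degree v ≤ D)
    (r : W) (p : W → W) (dep : W → ℕ) (hdep : ∀ a, a ≠ r → dep (p a) < dep a)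
    (c : W → W) (C₀ : Finset W) (hcp : ∀ q ∈ C₀, p (c q) = q) (hcr : ∀ q ∈ C₀, c q ≠ r)
    (A B : Finset V) (hA : A.card = C₀.card)
    (F : Finset (W → V)) (hb : ∀ f ∈ F, Function.Bijective f)
    (hadj : ∀ f ∈ F, ∀ a, a ≠ r → G.Adj (f (p a)) (f a))
    (hFA : ∀ f ∈ F, C₀.image f = A) (hFB : ∀ f ∈ F, (C₀.image c).image f = B) :
    (F.card : ℝ) ≤ Fintype.card V * ((D : ℝ) + 1) ^ (Fintype.card W) *
      (1/2) ^ (C₀.card) := by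
  rcases F.eq_empty_or_nonempty with rfl | ⟨f₁, hf₁⟩
  · simp only [card_empty, Nat.cast_zero]; positivity
  let v₀ : V := f₁ r
  have : Nonempty W := ⟨r⟩
  set K := C₀.image c with hK
  have hcinj : Set.InjOn c C₀ := by
    intro x hx y hy h
    rw [← hcp x hx, ← hcp y hy, h]
  have hKcard : K.card = C₀.card := card_image_of_injOn hcinj
  let φ : (W → V) → (V ⊕ W → V) := fun f => Sum.elim
    (fun v => if v ∈ A then f (c (Function.invFun f v)) else v)
    (fun w => if w ∈ K then v₀ else f w)
  have hinv : ∀ f ∈ F, ∀ x, Function.invFun f (f x) = x := fun f hf x =>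
    Function.leftInverse_invFun (hb f hf).1 x
  have hφ1 : ∀ f ∈ F, ∀ q ∈ C₀, φ f (Sum.inl (f q)) = f (c q) := by
    intro f hf q hq
    have : f q ∈ A := by rw [← hFA f hf]; exact mem_image_of_mem _ hq
    simp only [φ, Sum.elim_inl, this, if_true, hinv f hf]
  have hφ2 : ∀ f, ∀ w ∉ K, φ f (Sum.inr w) = f w := by
    intro f w hw
    simp only [φ, Sum.elim_inr, hw, if_false]
  have det : ∀ f ∈ F, ∀ g ∈ F, ∀ t, (∀ v, φ g (Sum.inl v) = φ f (Sum.inl v)) →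
      (∀ w, dep w < t → φ g (Sum.inr w) = φ f (Sum.inr w)) → ∀ m, ∀ u, dep u = m → m < t →
      g u = f u := by
    intro f hf g hg t h1 h2 m
    induction m using Nat.strong_induction_on with
    | _ m ih =>
      intro u hu hm
      by_cases huK : u ∈ K
      · obtain ⟨q, hq, rfl⟩ := mem_image.1 huK
        have hlt : dep q < m := by
          have := hdep _ (hcr q hq)
          rw [hcp q hq] at this
          omega
        have := ih _ hlt q rfl (by omega)
        rw [← hφ1 f hf q hq, ← hφ1 g hg q hq, this]
        exact h1 _
      · rw [← hφ2 f u huK, ← hφ2 g u huK]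
        exact h2 u (by omega)
  have hφinj : Set.InjOn φ F := by
    intro f hf g hg h
    funext u
    exact (det g hg f hf (dep u + 1) (fun v => by rw [h]) (fun w _ => by rw [h]) _ u rfl
      (Nat.lt_succ_self _))
  let κ : V ⊕ W → ℕ := Sum.elim (fun _ => 0) (fun w => 1 + dep w)
  let C : V ⊕ W → ℝ := Sum.elim (fun v => if v ∈ A then ((D : ℝ) + 1) / 2 else 1)
    (fun w => if w = r then (Fintype.card V : ℝ) else if w ∈ K then 1 else D)
  have hC0 : ∀ a, 0 ≤ C a := by
    rintro (a | a)
    · simp only [C, Sum.elim_inl]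
      split_ifs <;> positivity
    · simp only [C, Sum.elim_inr]
      split_ifs <;> positivity
  let e : V ⊕ W → ℤ := fun a => ((Fintype.equivFin (V ⊕ W) a : ℕ) : ℤ)
  have he : Function.Injective e := by
    intro a b h
    simpa [e, Fin.val_inj] using h
  have hrK : r ∉ K := by
    intro h
    obtain ⟨q, hq, h⟩ := mem_image.1 h
    exact hcr q hq h
  have main := two_orders κ e he C hC0 (F.image φ) ?_
  · rw [card_image_of_injOn hφinj] at main
    refine main.trans ?_
    rw [Fintype.prod_sum_type]
    simp only [C, Sum.elim_inl, Sum.elim_inr]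
    have e1 : ∏ v : V, (if v ∈ A then ((D : ℝ) + 1) / 2 else 1) = (((D : ℝ) + 1) / 2) ^ A.card := by
      rw [prod_ite]
      simp only [prod_const, one_pow, mul_one]
      rw [filter_mem_eq_inter, univ_inter]
    have e2 : ∏ w : W, (if w = r then (Fintype.card V : ℝ) else if w ∈ K then 1 else D) ≤
        Fintype.card V * ((D : ℝ) + 1) ^ (Kᶜ.card) := by
      calc _ ≤ ∏ w : W, ((if w = r then (Fintype.card V : ℝ) else 1) *
            (if w ∈ Kᶜ then ((D : ℝ) + 1) else 1)) := by
            apply prod_le_prod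
            · intro a _
              split_ifs <;> positivity
            · intro a _
              simp only [mem_compl]
              by_cases har : a = r
              · subst har
                simp only [hrK, if_true, not_false_eq_true]
                have : (0:ℝ) ≤ Fintype.card V := by positivity
                have : (0:ℝ) ≤ D := by positivity
                nlinarith
              · by_cases haK : a ∈ K
                · simp [har, haK]
                · simp [har, haK]
        _ = _ := by
            rw [prod_mul_distrib]
            simp only [prod_ite_eq', mem_univ, if_true]
            rw [prod_ite]
            simp only [prod_const, one_pow, mul_one]
            rw [filter_mem_eq_inter, univ_inter]
    rw [e1]
    have h0 : (0:ℝ) ≤ (((D : ℝ) + 1) / 2) ^ A.card := by positivity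
    refine (mul_le_mul_of_nonneg_left e2 h0).trans (le_of_eq ?_)
    have hW : Fintype.card W = C₀.card + Kᶜ.card := by
      rw [← hKcard]; exact (card_add_card_compl K).symm
    rw [hW, hA, pow_add, div_pow, one_div, inv_pow]
    field_simp
  · intro f' hf' a
    obtain ⟨f, hf, rfl⟩ := mem_image.1 hf'
    rcases a with v | w
    · by_cases hvA : v ∈ A
      · refine ⟨B ∩ G.neighborFinset v, ?_, Or.inr ⟨?_, ?_⟩⟩
        · intro g' hg' _
          obtain ⟨g, hg, rfl⟩ := mem_image.1 hg'
          rw [← hFA g hg] at hvA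
          obtain ⟨q, hq, rfl⟩ := mem_image.1 hvA
          rw [hφ1 g hg q hq, mem_inter]
          refine ⟨?_, ?_⟩
          · rw [← hFB g hg]
            exact mem_image_of_mem _ (mem_image_of_mem _ hq)
          · rw [SimpleGraph.mem_neighborFinset]
            have := hadj g hg (c q) (hcr q hq)
            rwa [hcp q hq] at this
        · have h1 : (B ∩ G.neighborFinset v).card ≤ D :=
            (card_le_card inter_subset_right).trans (by
              rw [SimpleGraph.card_neighborFinset_eq_degree]; exact hD v)
          have h2 : ((B ∩ G.neighborFinset v).card : ℝ) ≤ D := by exact_mod_cast h1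
          simp only [C, Sum.elim_inl, hvA, if_true]
          linarith
        · intro x hx hne
          have hxB := (mem_inter.1 hx).1
          rw [← hFB f hf] at hxB
          obtain ⟨y, hy, rfl⟩ := mem_image.1 hxB
          obtain ⟨q, hq, rfl⟩ := mem_image.1 hy
          have hqv : f q ≠ v := by
            intro h
            apply hne
            rw [← h, hφ1 f hf q hq]
          refine ⟨Sum.inl (f q), fun h => hqv (Sum.inl.inj h), hφ1 f hf q hq, le_rfl, ?_⟩
          intro g' hg' heq
          obtain ⟨g, hg, rfl⟩ := mem_image.1 hg'
          have hqA : f q ∈ A := by rw [← hFA f hf]; exact mem_image_of_mem _ hq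
          rw [← hFA g hg] at hqA hvA
          obtain ⟨q₁, hq₁, h₁⟩ := mem_image.1 hqA
          obtain ⟨q₂, hq₂, h₂⟩ := mem_image.1 hvA
          rw [← h₁, ← h₂, hφ1 g hg _ hq₁, hφ1 g hg _ hq₂] at heq
          have := hcinj hq₁ hq₂ ((hb g hg).1 heq)
          apply hqv
          rw [← h₁, ← h₂, this]
      · refine ⟨{v}, ?_, Or.inl ?_⟩
        · intro g' hg' _
          obtain ⟨g, hg, rfl⟩ := mem_image.1 hg'
          simp [φ, hvA]
        · simp [C, hvA]
    · by_cases hwr : w = r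
      · refine ⟨univ, by simp, Or.inl ?_⟩
        simp [C, hwr]
      · by_cases hwK : w ∈ K
        · refine ⟨{v₀}, ?_, Or.inl ?_⟩
          · intro g' hg' _
            obtain ⟨g, hg, rfl⟩ := mem_image.1 hg'
            simp [φ, hwK]
          · simp [C, hwK, hwr]
        · refine ⟨G.neighborFinset (f (p w)), ?_, Or.inl ?_⟩
          · intro g' hg' hag
            obtain ⟨g, hg, rfl⟩ := mem_image.1 hg'
            rw [hφ2 g w hwK, SimpleGraph.mem_neighborFinset]
            have : g (p w) = f (p w) := by
              refine det f hf g hg (dep w) ?_ ?_ _ (p w) rfl (hdep w hwr)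
              · intro v
                apply hag
                simp [κ]
              · intro w' hw'
                apply hag
                simp only [κ, Sum.elim_inr]
                omega
            rw [← this]
            exact hadj g hg w hwr
          · simp only [C, Sum.elim_inr, hwr, hwK, if_false]
            rw [SimpleGraph.card_neighborFinset_eq_degree]
            exact_mod_cast hD _

open Finset in
lemma path_case {V W : Type} [Fintype V] [Fintype W] [DecidableEq V] [DecidableEq W]
    (G : SimpleGraph V) [DecidableRel G.Adj] (D : ℕ) (hD : ∀ v, G.degree v ≤ D)
    (r : W) (p : W → W) (dep : W → ℕ) (hdep : ∀ a, a ≠ r → dep (p a) < dep a)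
    (F : Finset (W → V)) (hb : ∀ f ∈ F, Function.Bijective f)
    (hadj : ∀ f ∈ F, ∀ a, a ≠ r → G.Adj (f (p a)) (f a)) :
    (F.card : ℝ) ≤ ((Fintype.card V).choose ((univ.erase r).image p).card : ℝ) ^ 2 *
      (Fintype.card V * ((D : ℝ) + 1) ^ (Fintype.card W) *
      (1/2) ^ ((univ.erase r).image p).card) := by
  set C₀ := (univ.erase r).image p with hC₀
  have hex : ∀ q : W, ∃ x : W, q ∈ C₀ → (p x = q ∧ x ≠ r) := by
    intro q
    by_cases hq : q ∈ C₀
    · obtain ⟨x, hx, h⟩ := mem_image.1 hq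
      exact ⟨x, fun _ => ⟨h, ne_of_mem_erase hx⟩⟩
    · exact ⟨q, fun h => absurd h hq⟩
  choose c hc using hex
  have hcinj : Set.InjOn c C₀ := by
    intro x hx y hy h
    rw [← (hc x hx).1, ← (hc y hy).1, h]
  set P := (powersetCard C₀.card (univ : Finset V)) ×ˢ (powersetCard C₀.card (univ : Finset V))
  let ψ : (W → V) → Finset V × Finset V := fun f => (C₀.image f, (C₀.image c).image f)
  have hmaps : ∀ f ∈ F, ψ f ∈ P := by
    intro f hf
    simp only [P, ψ, mem_product, mem_powersetCard, subset_univ, true_and]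
    rw [card_image_of_injective _ (hb f hf).1, card_image_of_injective _ (hb f hf).1,
      card_image_of_injOn hcinj]
    exact ⟨rfl, rfl⟩
  rw [card_eq_sum_card_fiberwise hmaps]
  push_cast
  have : ∀ x ∈ P, ((F.filter (fun f => ψ f = x)).card : ℝ) ≤
      Fintype.card V * ((D : ℝ) + 1) ^ (Fintype.card W) * (1/2) ^ C₀.card := by
    rintro ⟨A, B⟩ hx
    simp only [P, mem_product, mem_powersetCard, subset_univ, true_and] at hx
    apply path_case_aux G D hD r p dep hdep c C₀ (fun q hq => (hc q hq).1)
      (fun q hq => (hc q hq).2) A B hx.1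
    · intro f hf; exact hb f (mem_filter.1 hf).1
    · intro f hf; exact hadj f (mem_filter.1 hf).1
    · intro f hf; exact congrArg Prod.fst (mem_filter.1 hf).2
    · intro f hf; exact congrArg Prod.snd (mem_filter.1 hf).2
  refine (sum_le_sum this).trans (le_of_eq ?_)
  rw [sum_const, nsmul_eq_mul]
  simp only [P, card_product, card_powersetCard, card_univ]
  push_cast
  ring

lemma choose_le_real (n k : ℕ) (y : ℝ) (hy : 0 < y) (hk : k ≤ n) :
    (n.choose k : ℝ) ≤ (1 + y⁻¹) ^ n * y ^ k := by
  have h := add_pow (y⁻¹) 1 n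
  have h2 : (y⁻¹) ^ k * 1 ^ (n - k) * (n.choose k : ℝ) ≤ (y⁻¹ + 1) ^ n := by
    rw [h]
    exact Finset.single_le_sum (f := fun m => (y⁻¹) ^ m * 1 ^ (n - m) * (n.choose m : ℝ))
      (fun m _ => by positivity) (Finset.mem_range.2 (by omega))
  rw [one_pow, mul_one, inv_pow] at h2
  rw [add_comm 1]
  have h3 : 0 < y ^ k := by positivity
  calc (n.choose k : ℝ) = ((y ^ k)⁻¹ * (n.choose k : ℝ)) * y ^ k := by field_simp
    _ ≤ _ := mul_le_mul_of_nonneg_right h2 h3.le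

lemma numeric_path (n c : ℕ) (hc : c ≤ n) (h : 20 * (n - c) < n) :
    (n.choose c : ℝ) ^ 2 * (1/2) ^ c ≤ Real.exp (-(n : ℝ) / 50) := by
  have h1 : (n.choose c : ℝ) ≤ Real.exp ((n:ℝ) / 16 + (n - c : ℕ) * (4 * Real.log 2)) := by
    rw [← Nat.choose_symm hc]
    refine (choose_le_real n (n - c) 16 (by norm_num) (by omega)).trans ?_
    rw [Real.exp_add]
    have a1 : (1 + (16:ℝ)⁻¹) ^ n ≤ Real.exp ((n:ℝ)/16) := by
      have : (1 + (16:ℝ)⁻¹) ≤ Real.exp (1/16) := by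
        have := Real.add_one_le_exp (1/16 : ℝ)
        linarith
      calc _ ≤ (Real.exp (1/16)) ^ n := by gcongr
        _ = _ := by rw [← Real.exp_nat_mul]; congr 1; ring
    have a2 : (16:ℝ) ^ (n - c) = Real.exp ((n - c : ℕ) * (4 * Real.log 2)) := by
      rw [Real.exp_nat_mul]
      congr 1
      rw [show (4:ℝ) * Real.log 2 = Real.log (2 ^ 4) by rw [Real.log_pow]; norm_num,
        Real.exp_log (by norm_num)]
      norm_num
    rw [a2]
    gcongr
  have h2 : ((1:ℝ)/2) ^ c = Real.exp (-(c * Real.log 2)) := by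
    rw [Real.exp_neg, Real.exp_nat_mul, Real.exp_log (by norm_num), one_div, inv_pow]
  rw [h2]
  calc _ ≤ (Real.exp ((n:ℝ) / 16 + (n - c : ℕ) * (4 * Real.log 2)))^2 *
        Real.exp (-(c * Real.log 2)) := by gcongr
    _ = Real.exp (2 * ((n:ℝ) / 16 + (n - c : ℕ) * (4 * Real.log 2)) + -(c * Real.log 2)) := by
        rw [← Real.exp_nat_mul, ← Real.exp_add]; push_cast; rfl
    _ ≤ _ := by
        apply Real.exp_le_exp.2
        have hx : ((n - c : ℕ) : ℝ) = (n:ℝ) - c := by rw [Nat.cast_sub hc]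
        have h' : 20 * ((n:ℝ) - c) ≤ n := by rw [← hx]; exact_mod_cast h.le
        rw [hx]
        have l1 := Real.log_two_gt_d9
        have l2 := Real.log_two_lt_d9
        have hn : (0:ℝ) ≤ n := by positivity
        have e1 : (8 * ((n:ℝ) - c) - c) ≤ - (11/20) * n := by linarith
        have e2 : (8 * ((n:ℝ) - c) - c) * Real.log 2 ≤ - (11/20) * n * Real.log 2 :=
          mul_le_mul_of_nonneg_right e1 (by linarith)
        have e3 : (n:ℝ) * 0.69 ≤ n * Real.log 2 := mul_le_mul_of_nonneg_left (by linarith) hn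
        nlinarith

lemma numeric_leaf (n s : ℕ) (h : n ≤ 20 * (s + 1)) :
    ((1:ℝ)/2) ^ s ≤ 2 * Real.exp (-(n : ℝ) / 50) := by
  have h2 : ((1:ℝ)/2) ^ s = Real.exp (-(s * Real.log 2)) := by
    rw [Real.exp_neg, Real.exp_nat_mul, Real.exp_log (by norm_num), one_div, inv_pow]
  rw [h2]
  have : (2:ℝ) * Real.exp (-(n : ℝ) / 50) = Real.exp (Real.log 2 + -(n : ℝ) / 50) := by
    rw [Real.exp_add, Real.exp_log (by norm_num)]
  rw [this]
  apply Real.exp_le_exp.2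
  have l1 := Real.log_two_gt_d9
  have h' : (n:ℝ) ≤ 20 * (s + 1) := by exact_mod_cast h
  nlinarith

open Finset in
lemma copies_bound {V W : Type} [Fintype V] [Fintype W] [DecidableEq V] [DecidableEq W]
    (n : ℕ) (hV : Fintype.card V = n) (hW : Fintype.card W = n)
    (G : SimpleGraph V) [DecidableRel G.Adj] (D : ℕ) (hD : ∀ v, G.degree v ≤ D)
    (T₀ : SimpleGraph W) (hT : T₀.IsTree) :
    (Nat.card {H : SimpleGraph V // H ≤ G ∧ H.IsTree ∧ Nonempty (H ≃g T₀)} : ℝ) ≤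
      2 * n * ((D : ℝ) + 1) ^ n * Real.exp (-(n : ℝ) / 50) := by
  classical
  obtain ⟨r⟩ := hT.1.nonempty
  have hpar : ∀ a : W, ∃ b, a ≠ r → (T₀.Adj b a ∧ T₀.dist b r < T₀.dist a r) := by
    intro a
    by_cases har : a = r
    · exact ⟨a, fun h => absurd har h⟩
    · obtain ⟨w, hw⟩ := (hT.1.preconnected a r).exists_walk_length_eq_dist
      cases w with
      | nil => exact absurd rfl har
      | cons h w' =>
        rename_i b
        refine ⟨b, fun _ => ⟨h.symm, ?_⟩⟩
        rw [← hw, SimpleGraph.Walk.length_cons]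
        exact Nat.lt_succ_of_le (SimpleGraph.dist_le w')
  choose p hp using hpar
  let F : Finset (W → V) := univ.filter
    (fun f => Function.Bijective f ∧ ∀ a, a ≠ r → G.Adj (f (p a)) (f a))
  have hb : ∀ f ∈ F, Function.Bijective f := fun f hf => (mem_filter.1 hf).2.1
  have hadj : ∀ f ∈ F, ∀ a, a ≠ r → G.Adj (f (p a)) (f a) := fun f hf => (mem_filter.1 hf).2.2
  have hcard : Nat.card {H : SimpleGraph V // H ≤ G ∧ H.IsTree ∧ Nonempty (H ≃g T₀)} ≤ F.card := by
    let ι : {H : SimpleGraph V // H ≤ G ∧ H.IsTree ∧ Nonempty (H ≃g T₀)} → F := fun H =>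
      ⟨fun w => H.2.2.2.some.symm w, mem_filter.2 ⟨mem_univ _, H.2.2.2.some.symm.bijective,
        fun a ha => H.2.1 (H.2.2.2.some.symm.map_rel_iff.2 (hp a ha).1)⟩⟩
    have hι : Function.Injective ι := by
      intro H H2 h
      apply Subtype.ext
      have h1 : ∀ w, H.2.2.2.some.symm w = H2.2.2.2.some.symm w := fun w => congrFun (congrArg Subtype.val h) w
      ext u v
      obtain ⟨x, rfl⟩ := H.2.2.2.some.symm.surjective u
      obtain ⟨y, rfl⟩ := H.2.2.2.some.symm.surjective v
      rw [H.2.2.2.some.symm.map_adj_iff, h1, h1, H2.2.2.2.some.symm.map_adj_iff]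
    have := Nat.card_le_card_of_injective ι hι
    simpa using this
  have hdep : ∀ a, a ≠ r → T₀.dist (p a) r < T₀.dist a r := fun a ha => (hp a ha).2
  refine le_trans (Nat.cast_le.2 hcard) ?_
  set C₀ := (univ.erase r).image p with hC₀
  have hc : C₀.card ≤ n := by rw [← hW]; exact card_le_univ _
  by_cases h20 : 20 * (n - C₀.card) < n
  · have h1 := path_case G D hD r p (fun a => T₀.dist a r) hdep F hb hadj
    rw [hV, hW, ← hC₀] at h1
    refine h1.trans ?_
    have h2 := numeric_path n C₀.card hc h20
    calc _ = (n * ((D : ℝ) + 1) ^ n) * ((n.choose C₀.card : ℝ) ^ 2 * (1/2) ^ C₀.card) := by ring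
      _ ≤ (n * ((D : ℝ) + 1) ^ n) * Real.exp (-(n : ℝ) / 50) := by gcongr
      _ ≤ 2 * (n * ((D : ℝ) + 1) ^ n * Real.exp (-(n : ℝ) / 50)) := by
          have : 0 ≤ n * ((D : ℝ) + 1) ^ n * Real.exp (-(n : ℝ) / 50) := by positivity
          linarith
      _ = _ := by ring
  · have h1 := leaf_case G D hD r p (fun a => T₀.dist a r) hdep F hb hadj
    rw [hV, hW, ← hC₀] at h1
    refine h1.trans ?_
    have h2 := numeric_leaf n (insert r C₀)ᶜ.card (by
      rw [card_compl, hW]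
      have := card_insert_le r C₀
      omega)
    calc _ ≤ (n * ((D : ℝ) + 1) ^ n) * (2 * Real.exp (-(n : ℝ) / 50)) := by gcongr
      _ = _ := by ring

open Finset in
lemma cyc_count {V : Type} [Fintype V] [DecidableEq V]
    (N : V → Finset V) (m : ℕ) (hm : ∀ v, m ≤ (N v).card) (v : V) (l : ℕ) (hl : 0 < l) :
    ((Fintype.piFinset N).filter (fun h => Function.minimalPeriod h v = l)).card * m ≤
      (Fintype.piFinset N).card := by
  set B := (Fintype.piFinset N).filter (fun h => Function.minimalPeriod h v = l)
  have h1 : B.card * m ≤ (B.sigma (fun h => N (h^[l-1] v))).card := by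
    rw [card_sigma, ← smul_eq_mul]
    exact card_nsmul_le_sum _ _ _ (fun h _ => hm _)
  refine h1.trans ?_
  let Φ : (Σ _ : V → V, V) → (V → V) := fun z => Function.update z.1 (z.1^[l-1] v) z.2
  have hit : ∀ h ∈ B, ∀ x, ∀ i ≤ l - 1, (Function.update h (h^[l-1] v) x)^[i] v = h^[i] v := by
    intro h hh x i
    have hper : Function.minimalPeriod h v = l := (mem_filter.1 hh).2
    induction i with
    | zero => intro _; rfl
    | succ i ih =>
      intro hi
      rw [Function.iterate_succ_apply', Function.iterate_succ_apply', ih (by omega)]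
      apply Function.update_of_ne
      intro heq
      have := Function.iterate_injOn_Iio_minimalPeriod (f := h) (x := v)
        (show i ∈ Set.Iio _ by simp only [Set.mem_Iio]; omega)
        (show l - 1 ∈ Set.Iio _ by simp only [Set.mem_Iio]; omega) heq
      omega
  have hback : ∀ h ∈ B, h (h^[l-1] v) = v := by
    intro h hh
    have hper : Function.minimalPeriod h v = l := (mem_filter.1 hh).2
    rw [← Function.iterate_succ_apply' h, show (l-1).succ = l by omega, ← hper]
    exact Function.iterate_minimalPeriod
  apply card_le_card_of_injOn Φ
  · rintro ⟨h, x⟩ hz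
    have hz := mem_sigma.1 (mem_coe.1 hz)
    have hh := (mem_filter.1 hz.1).1
    rw [Fintype.mem_piFinset] at hh
    rw [mem_coe, Fintype.mem_piFinset]
    intro u
    by_cases hu : u = h^[l-1] v
    · subst hu; simpa [Φ] using hz.2
    · simpa [Φ, Function.update_of_ne hu] using hh u
  · rintro ⟨h, x⟩ hz ⟨h', x'⟩ hz' heq
    have hz := mem_sigma.1 (mem_coe.1 hz)
    have hz' := mem_sigma.1 (mem_coe.1 hz')
    simp only at hz hz'
    simp only [Φ] at heq
    have hu : h^[l-1] v = h'^[l-1] v := by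
      rw [← hit h hz.1 x _ le_rfl, ← hit h' hz'.1 x' _ le_rfl, heq]
    have hx : x = x' := by
      have := congrFun heq (h^[l-1] v)
      rw [Function.update_self, hu, Function.update_self] at this
      exact this
    have hh : h = h' := by
      funext w
      by_cases hw : w = h^[l-1] v
      · rw [hw, hback h hz.1, hu, hback h' hz'.1]
      · have := congrFun heq w
        rwa [Function.update_of_ne hw, Function.update_of_ne (by rwa [← hu])] at this
    subst hh; subst hx; rfl

open Classical in
/-- One root (the minimum for an auxiliary order) on every cycle of `h`. -/
noncomputable def cycRoots {V : Type} [Fintype V] (h : V → V) : Finset V :=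
  Finset.univ.filter (fun v => 0 < Function.minimalPeriod h v ∧
    ∀ i, Fintype.equivFin V v ≤ Fintype.equivFin V (h^[i] v))

lemma mem_cycRoots {V : Type} [Fintype V] {h : V → V} {v : V} (hv : v ∈ cycRoots h) :
    0 < Function.minimalPeriod h v ∧
    ∀ i, Fintype.equivFin V v ≤ Fintype.equivFin V (h^[i] v) := by
  classical
  exact (Finset.mem_filter.1 hv).2

open Finset in
lemma cycRoots_hit {V : Type} [Fintype V] (h : V → V) (v : V) : ∃ i, h^[i] v ∈ cycRoots h := by
  obtain ⟨i, j, hij, heq⟩ := Finite.exists_ne_map_eq_of_infinite (fun i : ℕ => h^[i] v)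
  wlog hlt : i < j generalizing i j
  · exact this j i hij.symm heq.symm (by omega)
  let w := h^[i] v
  have hw : Function.IsPeriodicPt h (j - i) w := by
    show h^[j-i] (h^[i] v) = h^[i] v
    rw [← Function.iterate_add_apply, show j - i + i = j by omega, heq]
  let q : ℕ → Fin (Fintype.card V) := fun k => Fintype.equivFin V (h^[k] w)
  let k := Function.argmin q
  have hk : ∀ k', q k ≤ q k' := fun k' => Function.argmin_le q k'
  refine ⟨k + i, ?_⟩
  rw [Function.iterate_add_apply]
  simp only [cycRoots, mem_filter, mem_univ, true_and]
  refine ⟨?_, ?_⟩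
  · apply Function.IsPeriodicPt.minimalPeriod_pos (n := j - i) (by omega)
    exact hw.apply_iterate k
  · intro i'
    rw [← Function.iterate_add_apply h i' k]
    exact hk (i' + k)

open Finset in
lemma cycRoots_long {V : Type} [Fintype V] [DecidableEq V] (h : V → V) (L : ℕ) :
    L * ((cycRoots h).filter (fun v => L < Function.minimalPeriod h v)).card ≤ Fintype.card V := by
  set S := (cycRoots h).filter (fun v => L < Function.minimalPeriod h v)
  have : (range L ×ˢ S).card ≤ (univ : Finset V).card := by
    apply card_le_card_of_injOn (fun z => h^[z.1] z.2) (by simp)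
    rintro ⟨i, v⟩ hz ⟨j, w⟩ hz' heq
    simp only [coe_product, Set.mem_prod, mem_coe, mem_range] at hz hz'
    simp only at heq
    have hv := mem_filter.1 hz.2
    have hw := mem_filter.1 hz'.2
    have hv1 := mem_cycRoots hv.1
    have hw1 := mem_cycRoots hw.1
    have hvw : v = w := by
      apply (Fintype.equivFin V).injective
      apply le_antisymm
      · have : h^[(Function.minimalPeriod h w - j) + i] v = w := by
          rw [Function.iterate_add_apply, heq, ← Function.iterate_add_apply,
            Nat.sub_add_cancel (by omega)]
          exact Function.iterate_minimalPeriod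
        have h3 := hv1.2 ((Function.minimalPeriod h w - j) + i)
        rwa [this] at h3
      · have : h^[(Function.minimalPeriod h v - i) + j] w = v := by
          rw [Function.iterate_add_apply, ← heq, ← Function.iterate_add_apply,
            Nat.sub_add_cancel (by omega)]
          exact Function.iterate_minimalPeriod
        have h3 := hw1.2 ((Function.minimalPeriod h v - i) + j)
        rwa [this] at h3
    subst hvw
    have := Function.iterate_injOn_Iio_minimalPeriod (f := h) (x := v)
        (show i ∈ Set.Iio _ by simp only [Set.mem_Iio]; omega)
        (show j ∈ Set.Iio _ by simp only [Set.mem_Iio]; omega) heq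
    subst this; rfl
  rwa [card_product, card_range, card_univ] at this

open Finset in
lemma good_half {V : Type} [Fintype V] [DecidableEq V]
    (N : V → Finset V) (m L k : ℕ) (hm : ∀ v, m ≤ (N v).card) (hpos : 0 < Fintype.card V)
    (hL : 0 < L)
    (hk : ∀ a b : ℕ, a * m ≤ 2 * Fintype.card V * L → L * b ≤ Fintype.card V → a + b ≤ k) :
    (Fintype.piFinset N).card ≤
      2 * ((Fintype.piFinset N).filter (fun h => (cycRoots h).card ≤ k)).card := by
  set H := Fintype.piFinset N
  let sh : (V → V) → Finset V := fun h => univ.filter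
    (fun v => Function.minimalPeriod h v ∈ Icc 1 L)
  have hsum : (∑ h ∈ H, (sh h).card) * m ≤ Fintype.card V * L * H.card := by
    have e1 : ∑ h ∈ H, (sh h).card = ∑ v : V, ∑ l ∈ Icc 1 L,
        (H.filter (fun h => Function.minimalPeriod h v = l)).card := by
      have : ∀ h ∈ H, (sh h).card = ∑ v : V, ∑ l ∈ Icc 1 L,
          (if Function.minimalPeriod h v = l then 1 else 0) := by
        intro h _
        simp only [sh, card_filter]
        apply sum_congr rfl
        intro v _
        rw [sum_ite_eq]
      rw [sum_congr rfl this, sum_comm]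
      apply sum_congr rfl
      intro v _
      rw [sum_comm]
      apply sum_congr rfl
      intro l _
      rw [card_filter]
    rw [e1, sum_mul]
    calc _ ≤ ∑ v : V, L * H.card := by
          apply sum_le_sum
          intro v _
          rw [sum_mul]
          calc _ ≤ ∑ l ∈ Icc 1 L, H.card := by
                apply sum_le_sum
                intro l hl
                exact cyc_count N m hm v l (mem_Icc.1 hl).1
            _ = _ := by simp
      _ = _ := by simp [mul_assoc]
  let bad := H.filter (fun h => ¬ (cycRoots h).card ≤ k)
  have hbad : ∀ h ∈ bad, 2 * Fintype.card V * L ≤ (sh h).card * m := by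
    intro h hh
    by_contra hlt
    push Not at hlt
    apply (mem_filter.1 hh).2
    have h2 := hk _ _ hlt.le (cycRoots_long h L)
    refine le_trans ?_ h2
    have : cycRoots h ⊆ sh h ∪ ((cycRoots h).filter (fun v => L < Function.minimalPeriod h v)) := by
      intro v hv
      by_cases hvL : L < Function.minimalPeriod h v
      · exact mem_union_right _ (mem_filter.2 ⟨hv, hvL⟩)
      · apply mem_union_left
        have := (mem_cycRoots hv).1
        simp only [sh, mem_filter, mem_univ, true_and, mem_Icc]
        omega
    exact (card_le_card this).trans (card_union_le _ _)
  have h3 : bad.card * (2 * Fintype.card V * L) ≤ Fintype.card V * L * H.card := by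
    refine le_trans ?_ hsum
    rw [sum_mul, ← smul_eq_mul]
    refine (card_nsmul_le_sum _ _ _ hbad).trans ?_
    exact sum_le_sum_of_subset (filter_subset _ _)
  have h4 : 2 * bad.card ≤ H.card := by
    have hp : 0 < Fintype.card V * L := Nat.mul_pos hpos hL
    apply Nat.le_of_mul_le_mul_left _ hp
    calc _ = bad.card * (2 * Fintype.card V * L) := by ring
      _ ≤ _ := h3
  have h5 := card_filter_add_card_filter_not (s := H) (fun h => (cycRoots h).card ≤ k)
  simp only [bad] at h4
  omega

lemma acyclic_of_parent {V : Type} (F : SimpleGraph V) (par : V → V) (dep : V → ℕ)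
    (h : ∀ u v, F.Adj u v → (par u = v ∧ dep v < dep u) ∨ (par v = u ∧ dep u < dep v)) :
    F.IsAcyclic := by
  rw [SimpleGraph.isAcyclic_iff_free_cycleGraph]
  intro n hn hcon
  obtain ⟨φ⟩ := hcon
  obtain ⟨k, rfl⟩ : ∃ k, n = k + 3 := ⟨n - 3, by omega⟩
  obtain ⟨i, hi⟩ := Finite.exists_max (fun i : Fin (k+3) => dep (φ i))
  have key : ∀ j, (SimpleGraph.cycleGraph (k+3)).Adj i j → par (φ i) = φ j := by
    intro j hj
    rcases h _ _ (φ.toHom.map_adj hj) with h1 | h1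
    · exact h1.1
    · have := hi j
      have := h1.2
      simp only [SimpleGraph.Copy.toHom_apply] at this
      omega
  have h1 := key (i + 1) (SimpleGraph.cycleGraph_adj.2 (Or.inr (by simp)))
  have h2 := key (i - 1) (SimpleGraph.cycleGraph_adj.2 (Or.inl (by simp)))
  have h3 : i + 1 = i - 1 := φ.injective (h1.symm.trans h2)
  have h4 : (1 : Fin (k+3)) + 1 = 0 := by
    have : i + (1 + 1) = i + 0 := by
      rw [← add_assoc, h3]; simp
    exact add_left_cancel this
  have := congrArg Fin.val h4
  simp [Fin.val_add] at this
  rw [Nat.mod_eq_of_lt (by omega)] at this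
  omega

/-- The undirected graph of the pointers `v → h v` for `v ∉ R`. -/
def ptrGraph {V : Type} (h : V → V) (R : Finset V) : SimpleGraph V where
  Adj u v := u ≠ v ∧ ((u ∉ R ∧ h u = v) ∨ (v ∉ R ∧ h v = u))
  symm := ⟨fun _ _ hu => ⟨hu.1.symm, hu.2.symm⟩⟩
  loopless := ⟨fun _ hu => hu.1 rfl⟩

lemma exists_dep {V : Type} [DecidableEq V] (h : V → V) (R : Finset V) (hit : ∀ v, ∃ i, h^[i] v ∈ R) :
    ∃ dep : V → ℕ, ∀ v ∉ R, dep (h v) < dep v := by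
  refine ⟨fun v => Nat.find (hit v), ?_⟩
  intro v hv
  have hs := Nat.find_spec (hit v)
  have hpos : Nat.find (hit v) ≠ 0 := by
    intro h0
    rw [h0] at hs
    exact hv hs
  obtain ⟨k, hk⟩ := Nat.exists_eq_succ_of_ne_zero hpos
  rw [hk] at hs
  have : Nat.find (hit (h v)) ≤ k := Nat.find_min' _ hs
  show Nat.find (hit (h v)) < Nat.find (hit v)
  omega

lemma ptr_acyclic {V : Type} (h : V → V) (R : Finset V) (dep : V → ℕ)
    (hd : ∀ v ∉ R, dep (h v) < dep v) : (ptrGraph h R).IsAcyclic := by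
  apply acyclic_of_parent _ h dep
  rintro u v ⟨_, h1 | h1⟩
  · exact Or.inl ⟨h1.2, h1.2 ▸ hd u h1.1⟩
  · exact Or.inr ⟨h1.2, h1.2 ▸ hd v h1.1⟩

lemma ptr_unique {V : Type} (h₁ h₂ : V → V) (R : Finset V) (dep : V → ℕ)
    (hd : ∀ v ∉ R, dep (h₁ v) < dep v)
    (heq : ptrGraph h₁ R = ptrGraph h₂ R) : ∀ n, ∀ v, dep v = n → v ∉ R → h₁ v = h₂ v := by
  intro n
  induction n using Nat.strong_induction_on with
  | _ n ih =>
    intro v hv hvR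
    have hlt := hd v hvR
    have hne : v ≠ h₁ v := by
      intro h
      rw [← h] at hlt
      omega
    have hadj : (ptrGraph h₁ R).Adj v (h₁ v) := ⟨hne, Or.inl ⟨hvR, rfl⟩⟩
    rw [heq] at hadj
    rcases hadj.2 with h1 | h1
    · exact h1.2.symm
    · have h3 := ih _ (by omega) (h₁ v) rfl h1.1
      have h4 := hd _ h1.1
      rw [h3, h1.2] at h4
      omega

open Finset in
lemma ptr_edges {V : Type} [Fintype V] [DecidableEq V] (h : V → V) (R : Finset V) (dep : V → ℕ)
    (hd : ∀ v ∉ R, dep (h v) < dep v) [Fintype (ptrGraph h R).edgeSet] :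
    Fintype.card V ≤ (ptrGraph h R).edgeFinset.card + R.card := by
  have h1 : Rᶜ.card ≤ (ptrGraph h R).edgeFinset.card := by
    apply card_le_card_of_injOn (fun v => s(v, h v))
    · intro v hv
      have hv : v ∉ R := by simpa using hv
      rw [mem_coe, SimpleGraph.mem_edgeFinset, SimpleGraph.mem_edgeSet]
      refine ⟨?_, Or.inl ⟨hv, rfl⟩⟩
      intro h'
      have := hd v hv
      rw [← h'] at this
      omega
    · intro v hv w hw heq
      have hv : v ∉ R := by simpa using hv
      have hw : w ∉ R := by simpa using hw
      rcases Sym2.eq_iff.1 heq with h1 | h1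
      · exact h1.1
      · have := hd v hv
        have := hd w hw
        rw [h1.2] at *
        rw [← h1.1] at *
        omega
  have := card_add_card_compl R
  omega

open Finset in
lemma subsets_bound {α : Type*} [DecidableEq α] (U : Finset α) (k : ℕ) (y : ℝ) (hy : 1 ≤ y) :
    ((U.powerset.filter (fun s => s.card ≤ k)).card : ℝ) ≤ (1 + y⁻¹) ^ U.card * y ^ k := by
  have h := sum_pow_mul_eq_add_pow (y⁻¹) 1 U
  have hy0 : 0 < y := by linarith
  have h2 : ∑ s ∈ U.powerset.filter (fun s => s.card ≤ k), (y ^ k)⁻¹ ≤ (1 + y⁻¹) ^ U.card := by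
    rw [add_comm 1, ← h]
    calc _ ≤ ∑ s ∈ U.powerset.filter (fun s => s.card ≤ k), (y⁻¹) ^ s.card * 1 ^ (U.card - s.card) := by
          apply sum_le_sum
          intro s hs
          rw [one_pow, mul_one, inv_pow]
          apply inv_anti₀ (by positivity)
          exact pow_le_pow_right₀ hy (mem_filter.1 hs).2
      _ ≤ _ := by
          apply sum_le_sum_of_subset_of_nonneg (filter_subset _ _)
          intros; positivity
  rw [sum_const, nsmul_eq_mul] at h2
  rwa [← div_eq_mul_inv, div_le_iff₀ (by positivity)] at h2

open Finset in
lemma tree_lower {V : Type} [Fintype V] [DecidableEq V]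
    (G : SimpleGraph V) [DecidableRel G.Adj] (hG : G.Connected)
    (m D L k : ℕ) (hm : ∀ v, m ≤ G.degree v) (hD : ∀ v, G.degree v ≤ D) (hL : 0 < L)
    (hD1 : 1 ≤ D)
    (hk : ∀ a b : ℕ, a * m ≤ 2 * Fintype.card V * L → L * b ≤ Fintype.card V → a + b ≤ k)
    (y : ℝ) (hy : 1 ≤ y) :
    (m : ℝ) ^ (Fintype.card V) ≤ 2 * ((D : ℝ) ^ k *
      (Nat.card {H : SimpleGraph V // H ≤ G ∧ H.IsTree} *
        ((1 + y⁻¹) ^ (Fintype.card V) * y ^ k) ^ 2)) := by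
  classical
  have hpos : 0 < Fintype.card V := Fintype.card_pos_iff.2 hG.nonempty
  set N : V → Finset V := fun v => G.neighborFinset v with hN
  have hm' : ∀ v, m ≤ (N v).card := by
    intro v; simpa [hN] using hm v
  have hhalf := good_half N m L k hm' hpos hL hk
  set H' := (Fintype.piFinset N).filter (fun h => (cycRoots h).card ≤ k) with hH'
  have hmn : m ^ (Fintype.card V) ≤ (Fintype.piFinset N).card := by
    rw [Fintype.card_piFinset, ← card_univ]
    exact pow_card_le_prod _ _ _ (fun v _ => hm' v)
  have hdep : ∀ h : V → V, ∃ dep : V → ℕ, ∀ v ∉ cycRoots h, dep (h v) < dep v :=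
    fun h => exists_dep h _ (cycRoots_hit h)
  have htree : ∀ h : V → V, ∃ T : SimpleGraph V, h ∈ H' → (ptrGraph h (cycRoots h) ≤ T ∧ T ≤ G ∧ T.IsTree) := by
    intro h
    by_cases hh : h ∈ H'
    · obtain ⟨dep, hd⟩ := hdep h
      have hle : ptrGraph h (cycRoots h) ≤ G := by
        have hp := Fintype.mem_piFinset.1 (mem_filter.1 hh).1
        rintro u v ⟨_, h1 | h1⟩
        · have := hp u
          rw [h1.2] at this
          simpa [hN] using this
        · have := hp v
          rw [h1.2] at this
          exact SimpleGraph.Adj.symm (by simpa [hN] using this)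
      obtain ⟨T, hT⟩ := hG.exists_isTree_le_of_le_of_isAcyclic hle (ptr_acyclic h _ dep hd)
      exact ⟨T, fun _ => hT⟩
    · exact ⟨⊥, fun h => absurd h hh⟩
  choose T hT using htree
  set TS : Finset (SimpleGraph V) := univ.filter (fun T => T ≤ G ∧ T.IsTree) with hTS
  have hTScard : Nat.card {H : SimpleGraph V // H ≤ G ∧ H.IsTree} = TS.card := by
    rw [Nat.card_eq_fintype_card, Fintype.card_subtype]
  let small : ∀ {α : Type}, [DecidableEq α] → Finset α → Finset (Finset α) :=
    fun U => U.powerset.filter (fun s => s.card ≤ k)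
  set t : Finset (Σ _ : SimpleGraph V, Finset (Sym2 V) × Finset V) :=
    TS.sigma (fun T => small T.edgeFinset ×ˢ small (univ : Finset V)) with ht
  let ψ : (V → V) → (Σ _ : SimpleGraph V, Finset (Sym2 V) × Finset V) := fun h =>
    ⟨T h, (T h).edgeFinset \ (ptrGraph h (cycRoots h)).edgeFinset, cycRoots h⟩
  have hmaps : ∀ h ∈ H', ψ h ∈ t := by
    intro h hh
    obtain ⟨h1, h2, h3⟩ := hT h hh
    have hR := (mem_filter.1 hh).2
    simp only [ψ, ht, mem_sigma, hTS, mem_filter, mem_univ, true_and, mem_product, small,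
      mem_powerset, subset_univ]
    refine ⟨⟨h2, h3⟩, ⟨sdiff_subset, ?_⟩, hR⟩
    obtain ⟨dep, hd⟩ := hdep h
    have e1 := ptr_edges h _ dep hd
    have e2 := h3.card_edgeFinset
    have e3 : (ptrGraph h (cycRoots h)).edgeFinset ⊆ (T h).edgeFinset :=
      SimpleGraph.edgeFinset_subset_edgeFinset.2 h1
    rw [card_sdiff_of_subset e3]
    omega
  have hfib : ∀ b ∈ t, (H'.filter (fun h => ψ h = b)).card ≤ D ^ k := by
    rintro ⟨T', E', R⟩ hb
    have hRk : R.card ≤ k := by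
      simp only [ht, mem_sigma, mem_product, small, mem_filter] at hb
      exact hb.2.2.2
    calc _ ≤ (Fintype.piFinset (fun v => if v ∈ R then N v else {v})).card := by
          apply card_le_card_of_injOn (fun h v => if v ∈ R then h v else v)
          · intro h hh
            have hh := (mem_filter.1 (mem_filter.1 (mem_coe.1 hh)).1).1
            rw [Fintype.mem_piFinset] at hh
            rw [mem_coe, Fintype.mem_piFinset]
            intro v
            by_cases hv : v ∈ R
            · simpa [hv] using hh v
            · simp [hv]
          · intro h hh g hg heq
            have hh' := mem_filter.1 (mem_coe.1 hh)
            have hg' := mem_filter.1 (mem_coe.1 hg)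
            have q1 := hh'.2
            have q2 := hg'.2
            simp only [ψ, Sigma.mk.injEq, heq_eq_eq, Prod.mk.injEq] at q1 q2
            obtain ⟨a1, a2, a3⟩ := q1
            obtain ⟨b1, b2, b3⟩ := q2
            have haux : ∀ f : V → V, T f = T' → (T f).edgeFinset = T'.edgeFinset := by
              intro f hf
              ext e
              simp only [SimpleGraph.mem_edgeFinset, hf]
            have c1 : (ptrGraph h (cycRoots h)).edgeFinset = T'.edgeFinset \ E' := by
              rw [← a2]
              have : (ptrGraph h (cycRoots h)).edgeFinset ⊆ (T h).edgeFinset :=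
                SimpleGraph.edgeFinset_subset_edgeFinset.2 (hT h hh'.1).1
              rw [haux h a1] at this ⊢
              rw [Finset.sdiff_sdiff_eq_self this]
            have c2 : (ptrGraph g (cycRoots g)).edgeFinset = T'.edgeFinset \ E' := by
              rw [← b2]
              have : (ptrGraph g (cycRoots g)).edgeFinset ⊆ (T g).edgeFinset :=
                SimpleGraph.edgeFinset_subset_edgeFinset.2 (hT g hg'.1).1
              rw [haux g b1] at this ⊢
              rw [Finset.sdiff_sdiff_eq_self this]
            have c3 : ptrGraph h (cycRoots h) = ptrGraph g (cycRoots g) :=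
              SimpleGraph.edgeFinset_inj.1 (c1.trans c2.symm)
            rw [a3, b3] at c3
            obtain ⟨dep, hd⟩ := hdep h
            rw [a3] at hd
            funext v
            by_cases hv : v ∈ R
            · have := congrFun heq v
              simpa [hv] using this
            · exact ptr_unique h g R dep hd c3 _ v rfl hv
      _ = ∏ v, (if v ∈ R then (N v).card else 1) := by
          rw [Fintype.card_piFinset]
          apply prod_congr rfl
          intro v _
          split_ifs <;> simp
      _ ≤ ∏ v, (if v ∈ R then D else 1) := by
          apply prod_le_prod'
          intro v _
          split_ifs
          · simpa [hN] using hD v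
          · exact le_rfl
      _ = D ^ R.card := by
          rw [prod_ite]
          simp only [prod_const, one_pow, mul_one]
          rw [filter_mem_eq_inter, univ_inter]
      _ ≤ D ^ k := Nat.pow_le_pow_right hD1 hRk
  have hcount := card_le_mul_card_image_of_maps_to hmaps _ hfib
  have htcard : (t.card : ℝ) ≤ TS.card * ((1 + y⁻¹) ^ (Fintype.card V) * y ^ k) ^ 2 := by
    rw [ht, card_sigma]
    push_cast
    rw [← nsmul_eq_mul, ← sum_const]
    apply sum_le_sum
    intro T' hT'
    have hT'' := (mem_filter.1 hT').2.2
    rw [card_product, sq]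
    push_cast
    have hy0 : 0 < y := by linarith
    have b1 := subsets_bound T'.edgeFinset k y hy
    have b2 := subsets_bound (univ : Finset V) k y hy
    have b3 : (1 + y⁻¹) ^ T'.edgeFinset.card ≤ (1 + y⁻¹) ^ (Fintype.card V) := by
      apply pow_le_pow_right₀
      · have : 0 < y⁻¹ := by positivity
        linarith
      · have := hT''.card_edgeFinset
        omega
    apply mul_le_mul _ b2 (by positivity) (by positivity)
    exact b1.trans (by gcongr)
  have hfinal : m ^ (Fintype.card V) ≤ 2 * (D ^ k * t.card) := by
    calc _ ≤ _ := hmn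
      _ ≤ 2 * H'.card := hhalf
      _ ≤ _ := by gcongr
  have hfinal' : (m : ℝ) ^ (Fintype.card V) ≤ 2 * ((D : ℝ) ^ k * t.card) := by
    exact_mod_cast hfinal
  refine hfinal'.trans ?_
  rw [hTScard]
  gcongr

lemma numeric_exp_cube (L D : ℝ) (hL : (10:ℝ)^20 ≤ L) (hD : D ≤ 8 * L ^ 2) :
    D ≤ Real.exp (L / 10 ^ 6) := by
  have h := Real.pow_div_factorial_le_exp (L / 10 ^ 6) (by positivity) 3
  refine le_trans ?_ h
  refine hD.trans ?_
  rw [div_pow, show ((Nat.factorial 3 : ℕ) : ℝ) = 6 by norm_num [Nat.factorial], div_div,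
    le_div_iff₀ (by positivity)]
  have h2 : 8 * ((10 ^ 6) ^ 3 * 6 : ℝ) ≤ L := by
    refine le_trans ?_ hL
    norm_num
  nlinarith [sq_nonneg L]

lemma numeric_exp_n (n : ℝ) (hn : (10:ℝ)^7 ≤ n) : 4 * n ≤ Real.exp (n / 1000) := by
  have h := Real.pow_div_factorial_le_exp (n / 1000) (by positivity) 2
  refine le_trans ?_ h
  rw [div_pow, show ((Nat.factorial 2 : ℕ) : ℝ) = 2 by norm_num [Nat.factorial], div_div,
    le_div_iff₀ (by positivity)]
  nlinarith

theorem random_spanning_tree_anticoncentration :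
    ∃ d₀ : ℝ, 0 < d₀ ∧ ∀ d : ℕ, d₀ ≤ d →
      ∀ (V W : Type) [Fintype V] [Fintype W] [DecidableEq V] [DecidableEq W]
        (n : ℕ) (_ : Fintype.card V = n) (_ : Fintype.card W = n)
        (G : SimpleGraph V) [DecidableRel G.Adj] (_ : G.Connected)
        (_ : ∀ v, (1 - (10:ℝ) ^ (-10 : ℤ)) * d ≤ (G.degree v : ℝ) ∧
              (G.degree v : ℝ) ≤ (1 + (10:ℝ) ^ (-10 : ℤ)) * d)
        (T₀ : SimpleGraph W) [DecidableRel T₀.Adj] (_ : T₀.IsTree),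
        (Nat.card {H : SimpleGraph V // H ≤ G ∧ H.IsTree ∧ Nonempty (H ≃g T₀)} : ℝ)
            / (Nat.card {H : SimpleGraph V // H ≤ G ∧ H.IsTree} : ℝ)
          ≤ Real.exp (-(n : ℝ) / 2000) := by
  refine ⟨10 ^ 40, by positivity, ?_⟩
  intro d hd V W _ _ _ _ n hV hW G _ hG hdeg T₀ _ hT
  have hε : (10:ℝ) ^ (-10 : ℤ) = 1 / 10 ^ 10 := by norm_num
  rw [hε] at hdeg
  set m := ⌈(1 - 1 / (10:ℝ) ^ 10) * d⌉₊ with hmdef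
  set D := ⌊(1 + 1 / (10:ℝ) ^ 10) * d⌋₊ with hDdef
  have hm : ∀ v, m ≤ G.degree v := fun v => Nat.ceil_le.2 (hdeg v).1
  have hD : ∀ v, G.degree v ≤ D := fun v => Nat.le_floor (hdeg v).2
  have hdpos : (0:ℝ) ≤ d := by positivity
  have hm' : (1 - 1 / (10:ℝ) ^ 10) * d ≤ m := Nat.le_ceil _
  have hD' : (D : ℝ) ≤ (1 + 1 / (10:ℝ) ^ 10) * d := Nat.floor_le (by positivity)
  have hm2 : (d : ℝ) ≤ 2 * m := by nlinarith
  have hD2 : (D : ℝ) ≤ 2 * d := by nlinarith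
  set L := Nat.sqrt d with hLdef
  have hdN : 10 ^ 40 ≤ d := by exact_mod_cast hd
  have hLN : 10 ^ 20 ≤ L := by
    rw [hLdef, Nat.le_sqrt]
    refine le_trans ?_ hdN
    norm_num
  have hLR : (10:ℝ) ^ 20 ≤ L := by exact_mod_cast hLN
  have hL1 : L * L ≤ d := Nat.sqrt_le d
  have hL2 : d < (L + 1) * (L + 1) := Nat.lt_succ_sqrt d
  have hm2N : d ≤ 2 * m := by exact_mod_cast hm2
  obtain ⟨v₀⟩ := hG.nonempty
  have hmn : m ≤ n := by
    rw [← hV]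
    exact (hm v₀).trans (G.degree_lt_card_verts v₀).le
  have hmD : m ≤ D := (hm v₀).trans (hD v₀)
  have hnR : (10:ℝ) ^ 7 ≤ n := by
    have h1 : (m:ℝ) ≤ n := by exact_mod_cast hmn
    have h2 : (10:ℝ)^7 ≤ 10 ^ 40 / 2 := by norm_num
    linarith
  set k := 5 * n / L with hkdef
  have hLpos : 0 < L := lt_of_lt_of_le (by norm_num) hLN
  have hk : ∀ a b : ℕ, a * m ≤ 2 * Fintype.card V * L → L * b ≤ Fintype.card V → a + b ≤ k := by
    intro a b ha hb
    rw [hV] at ha hb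
    rw [hkdef, Nat.le_div_iff_mul_le hLpos]
    have h1 : (a * L) * L ≤ (4 * n) * L := by nlinarith
    have h2 := Nat.le_of_mul_le_mul_right h1 hLpos
    nlinarith
  have hkL : (k:ℝ) * L ≤ 5 * n := by
    exact_mod_cast Nat.div_mul_le_self (5 * n) L
  have hlow := tree_lower G hG m D L k hm hD hLpos (by omega) hk 1000 (by norm_num)
  have hup := copies_bound n hV hW G D hD T₀ hT
  rw [hV] at hlow
  set τ := (Nat.card {H : SimpleGraph V // H ≤ G ∧ H.IsTree} : ℝ)
  have hτ : 0 ≤ τ := by positivity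
  apply div_le_of_le_mul₀ hτ (Real.exp_pos _).le
  refine hup.trans ?_
  have hn0 : (0:ℝ) ≤ n := by positivity
  have a1 : ((D:ℝ) + 1) ^ n ≤ Real.exp (n / 1000) * (m:ℝ) ^ n := by
    have h1 : (D:ℝ) + 1 ≤ Real.exp (1/1000) * m := by
      have h2 := Real.add_one_le_exp (1/1000 : ℝ)
      have h3 : (1/1000 + 1) * (m:ℝ) ≤ Real.exp (1/1000) * m := by gcongr
      refine le_trans ?_ h3
      have : (10:ℝ)^10 ≤ d := le_trans (by norm_num) hd
      nlinarith
    calc _ ≤ (Real.exp (1/1000) * m) ^ n := by gcongr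
      _ = _ := by
        rw [mul_pow, ← Real.exp_nat_mul]
        congr 2
        ring
  have a2 : (D:ℝ) ^ k ≤ Real.exp (5 * n / 10 ^ 6) := by
    have h1 : (D:ℝ) ≤ Real.exp ((L:ℝ) / 10 ^ 6) := by
      apply numeric_exp_cube _ _ hLR
      have : (d:ℝ) ≤ (L + 1) * (L + 1) := by exact_mod_cast hL2.le
      nlinarith
    calc _ ≤ (Real.exp ((L:ℝ) / 10 ^ 6)) ^ k := by gcongr
      _ = Real.exp ((k * L) / 10 ^ 6) := by
        rw [← Real.exp_nat_mul]; congr 1; ring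
      _ ≤ _ := by
        apply Real.exp_le_exp.2
        gcongr
  have a3 : (1 + (1000:ℝ)⁻¹) ^ n ≤ Real.exp (n / 1000) := by
    have h1 : 1 + (1000:ℝ)⁻¹ ≤ Real.exp (1/1000) := by
      have := Real.add_one_le_exp (1/1000 : ℝ)
      linarith
    calc _ ≤ (Real.exp (1/1000)) ^ n := by gcongr
      _ = _ := by rw [← Real.exp_nat_mul]; congr 1; ring
  have a4 : (1000:ℝ) ^ k ≤ Real.exp (n / 1000) := by
    have h1 : (1000:ℝ) ≤ Real.exp 1000 := by
      have := Real.add_one_le_exp (1000 : ℝ)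
      linarith
    calc _ ≤ (Real.exp 1000) ^ k := by gcongr
      _ = Real.exp (k * 1000) := by rw [← Real.exp_nat_mul]
      _ ≤ _ := by
        apply Real.exp_le_exp.2
        have hk0 : (0:ℝ) ≤ k := by positivity
        have : (k:ℝ) * 10 ^ 20 ≤ k * L := by gcongr
        linarith
  have a5 := numeric_exp_n n hnR
  calc 2 * n * ((D : ℝ) + 1) ^ n * Real.exp (-(n : ℝ) / 50)
      ≤ 2 * n * (Real.exp (n / 1000) * (m:ℝ) ^ n) * Real.exp (-(n : ℝ) / 50) := by gcongr
    _ ≤ 2 * n * (Real.exp (n / 1000) * (2 * ((D : ℝ) ^ k *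
          (τ * ((1 + (1000:ℝ)⁻¹) ^ n * 1000 ^ k) ^ 2)))) * Real.exp (-(n : ℝ) / 50) := by gcongr
    _ ≤ 2 * n * (Real.exp (n / 1000) * (2 * (Real.exp (5 * n / 10 ^ 6) *
          (τ * (Real.exp (n / 1000) * Real.exp (n / 1000)) ^ 2)))) *
          Real.exp (-(n : ℝ) / 50) := by gcongr
    _ = (4 * n) * (Real.exp (n / 1000) * Real.exp (5 * n / 10 ^ 6) *
          (Real.exp (n / 1000) * Real.exp (n / 1000)) ^ 2 * Real.exp (-(n : ℝ) / 50)) * τ := by ring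
    _ ≤ Real.exp (n / 1000) * (Real.exp (n / 1000) * Real.exp (5 * n / 10 ^ 6) *
          (Real.exp (n / 1000) * Real.exp (n / 1000)) ^ 2 * Real.exp (-(n : ℝ) / 50)) * τ := by
        gcongr
    _ ≤ Real.exp (-(n : ℝ) / 2000) * τ := by
        apply mul_le_mul_of_nonneg_right _ hτ
        rw [sq]
        simp only [← Real.exp_add]
        apply Real.exp_le_exp.2
        linarith
end

section
/- There exists a universal constant d₀ > 0 such that for all integers d ≥ d₀ the following holds. Every connected n-vertex graph G with all degrees in [(1-10^{-10})d, (1+10^{-10})d] contains at least e^{n/2000} pairwise non-isomorphic spanning trees. -/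
/-! Helper lemmas -/

/-- Graph of a parent function. -/
def PT {V : Type} (r : V) (p : V → V) : SimpleGraph V :=
  SimpleGraph.fromRel (fun v w => v ≠ r ∧ p v = w)

theorem PT_adj {V : Type} (r : V) (p : V → V) (v w : V) :
    (PT r p).Adj v w ↔ v ≠ w ∧ ((v ≠ r ∧ p v = w) ∨ (w ≠ r ∧ p w = v)) := by
  simp [PT, SimpleGraph.fromRel_adj]

theorem PT_isTree {V : Type} [Fintype V] [DecidableEq V] (r : V) (p : V → V) (h : V → ℕ)
    (hp : ∀ v, v ≠ r → h (p v) < h v) : (PT r p).IsTree := by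
  have hne : ∀ v, v ≠ r → p v ≠ v := fun v hv e => by
    have := hp v hv; rw [e] at this; omega
  have hreach : ∀ k v, h v ≤ k → (PT r p).Reachable v r := by
    intro k
    induction k with
    | zero =>
      intro v hv
      by_cases e : v = r
      · rw [e]
      · have := hp v e; omega
    | succ k ih =>
      intro v hv
      by_cases e : v = r
      · rw [e]
      · have h1 := hp v e
        have h2 := ih (p v) (by omega)
        have h3 : (PT r p).Adj v (p v) := by
          rw [PT_adj]; exact ⟨(hne v e).symm, Or.inl ⟨e, rfl⟩⟩
        exact h3.reachable.trans h2
  have hconn : (PT r p).Connected := by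
    have : Nonempty V := ⟨r⟩
    exact SimpleGraph.Connected.mk
      (fun u v => (hreach _ u le_rfl).trans (hreach _ v le_rfl).symm)
  rw [SimpleGraph.isTree_iff_connected_and_card]
  refine ⟨hconn, ?_⟩
  apply le_antisymm
  · have hsub : (PT r p).edgeSet ⊆ (((Finset.univ.erase r).image (fun v => s(v, p v)) :
        Finset (Sym2 V)) : Set (Sym2 V)) := by
      intro e
      induction e using Sym2.ind with
      | _ v w =>
        rw [SimpleGraph.mem_edgeSet, PT_adj]
        rintro ⟨-, ⟨h1, h2⟩ | ⟨h1, h2⟩⟩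
        · simp only [Finset.coe_image, Set.mem_image]
          exact ⟨v, by simpa using h1, by rw [h2]⟩
        · simp only [Finset.coe_image, Set.mem_image]
          exact ⟨w, by simpa using h1, by rw [h2, Sym2.eq_swap]⟩
    have h1 := Nat.card_mono (Finset.finite_toSet _) hsub
    have h2 : Nat.card ((((Finset.univ.erase r).image (fun v => s(v, p v)) :
        Finset (Sym2 V)) : Set (Sym2 V))) ≤ Fintype.card V - 1 := by
      rw [Nat.card_coe_set_eq, Set.ncard_coe_finset]
      refine Finset.card_image_le.trans ?_
      rw [Finset.card_erase_of_mem (Finset.mem_univ _), Finset.card_univ]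
    have h3 : 0 < Fintype.card V := Fintype.card_pos_iff.mpr ⟨r⟩
    rw [Nat.card_eq_fintype_card (α := V)]
    omega
  · exact hconn.card_vert_le_card_edgeSet_add_one

/-- second moment -/
theorem exists_half {V : Type} [Fintype V] [DecidableEq V] (G : SimpleGraph V)
    [DecidableRel G.Adj] :
    ∃ S : Finset V, ∑ v, (2 * ((S.filter (G.Adj v)).card : ℤ) - (G.degree v : ℤ)) ^ 2
      ≤ ∑ v, (G.degree v : ℤ) := by
  classical
  let s : Finset V → V → ℤ := fun S i => if i ∈ S then 1 else -1
  have hs2 : ∀ S i, s S i * s S i = 1 := by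
    intro S i; simp only [s]; split_ifs <;> norm_num
  have horth : ∀ i j, i ≠ j → ∑ S : Finset V, s S i * s S j = 0 := by
    intro i j hij
    refine Finset.sum_involution (fun S _ => symmDiff S {i}) ?_ ?_ ?_ ?_
    · intro S _
      have h1 : s (symmDiff S {i}) i = - s S i := by
        simp only [s, Finset.mem_symmDiff, Finset.mem_singleton]
        by_cases h : i ∈ S <;> simp [h]
      have h2 : s (symmDiff S {i}) j = s S j := by
        simp only [s, Finset.mem_symmDiff, Finset.mem_singleton]
        by_cases h : j ∈ S <;> simp [h, hij.symm]
      rw [h1, h2]; ring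
    · intro S _ _ h
      have : ({i} : Finset V) = ⊥ := by simpa using h
      simp at this
    · intro S _; exact Finset.mem_univ _
    · intro S _; simp
  have hdev : ∀ (S : Finset V) v,
      2 * ((S.filter (G.Adj v)).card : ℤ) - (G.degree v : ℤ) = ∑ i ∈ G.neighborFinset v, s S i := by
    intro S v
    have h1 : ∀ i, s S i = 2 * (if i ∈ S then 1 else 0) - 1 := by
      intro i; simp only [s]; split_ifs <;> norm_num
    simp only [h1, Finset.sum_sub_distrib, ← Finset.mul_sum, Finset.sum_boole]
    have h2 : S.filter (G.Adj v) = (G.neighborFinset v).filter (· ∈ S) := by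
      ext x; simp [and_comm]
    rw [h2]
    simp
  have hsum : ∀ v, ∑ S : Finset V, (2 * ((S.filter (G.Adj v)).card : ℤ) - (G.degree v : ℤ)) ^ 2
      = (Fintype.card (Finset V)) * (G.degree v : ℤ) := by
    intro v
    simp only [hdev, sq, Finset.sum_mul_sum]
    rw [Finset.sum_comm]
    have : ∀ i ∈ G.neighborFinset v, ∑ S : Finset V, ∑ j ∈ G.neighborFinset v, s S i * s S j
        = (Fintype.card (Finset V) : ℤ) := by
      intro i hi
      rw [Finset.sum_comm, Finset.sum_eq_single i]
      · simp [hs2, Finset.card_univ]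
      · intro j _ hj; exact horth i j hj.symm
      · intro h; exact absurd hi h
    rw [Finset.sum_congr rfl this]
    simp [mul_comm]
  by_contra hcon
  push Not at hcon
  have h1 : ∑ S : Finset V, ∑ v, (G.degree v : ℤ) < ∑ S : Finset V,
      ∑ v, (2 * ((S.filter (G.Adj v)).card : ℤ) - (G.degree v : ℤ)) ^ 2 :=
    Finset.sum_lt_sum_of_nonempty ⟨∅, Finset.mem_univ _⟩ (fun S _ => hcon S)
  rw [Finset.sum_comm (s := (Finset.univ : Finset (Finset V)))
    (f := fun S v => (2 * ((S.filter (G.Adj v)).card : ℤ) - (G.degree v : ℤ)) ^ 2)] at h1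
  simp only [hsum, Finset.sum_const, ← Finset.mul_sum, Finset.card_univ, nsmul_eq_mul] at h1
  exact lt_irrefl _ h1

theorem dg_comm {V : Type} [DecidableEq V] (G : SimpleGraph V) [DecidableRel G.Adj]
    (A B : Finset V) :
    ∑ x ∈ A, (B.filter (G.Adj x)).card = ∑ y ∈ B, (A.filter (G.Adj y)).card := by
  have := Finset.sum_card_bipartiteAbove_eq_sum_card_bipartiteBelow (s := A) (t := B) G.Adj
  simp only [Finset.bipartiteAbove, Finset.bipartiteBelow] at this
  rw [this]
  simp only [G.adj_comm]

theorem dg_le_degree {V : Type} [Fintype V] [DecidableEq V] (G : SimpleGraph V)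
    [DecidableRel G.Adj] (A : Finset V) (v : V) : (A.filter (G.Adj v)).card ≤ G.degree v := by
  rw [← SimpleGraph.card_neighborFinset_eq_degree]
  apply Finset.card_le_card
  intro x; simp

theorem degenerate_sum {V : Type} [DecidableEq V] (G : SimpleGraph V) [DecidableRel G.Adj]
    (l : ℕ) (W : Finset V)
    (hW : ∀ W' ⊆ W, W'.Nonempty → ∃ w ∈ W', (W'.filter (G.Adj w)).card < l) :
    ∑ w ∈ W, (W.filter (G.Adj w)).card ≤ 2 * l * W.card := by
  induction hn : W.card generalizing W with
  | zero =>
    rw [Finset.card_eq_zero] at hn; subst hn; simp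
  | succ n ih =>
    obtain ⟨w, hw, hlt⟩ := hW W subset_rfl (Finset.card_pos.mp (by omega))
    have h1 := ih (W.erase w) (fun W' h hne => hW W' (h.trans (Finset.erase_subset _ _)) hne)
      (by rw [Finset.card_erase_of_mem hw]; omega)
    have h2 : ∀ x ∈ W.erase w, (W.filter (G.Adj x)).card
        = ((W.erase w).filter (G.Adj x)).card + (({w} : Finset V).filter (G.Adj x)).card := by
      intro x _
      rw [← Finset.card_union_of_disjoint]
      · rw [← Finset.filter_union]; congr 2
        ext y; by_cases e : y = w <;> simp [e, hw]
      · apply Finset.disjoint_filter_filter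
        simp
    rw [← Finset.add_sum_erase _ _ hw, Finset.sum_congr rfl h2, Finset.sum_add_distrib,
      dg_comm G (W.erase w) {w}]
    simp only [Finset.sum_singleton]
    have h3 : ((W.erase w).filter (G.Adj w)).card ≤ (W.filter (G.Adj w)).card :=
      Finset.card_le_card (Finset.filter_subset_filter _ (Finset.erase_subset _ _))
    have : 2 * l * (n + 1) = 2 * l * n + 2 * l := by ring
    omega

theorem greedy_path {V : Type} [DecidableEq V] (G : SimpleGraph V) [DecidableRel G.Adj]
    (l : ℕ) (W : Finset V) (hne : W.Nonempty)
    (hW : ∀ w ∈ W, l ≤ (W.filter (G.Adj w)).card) (j : ℕ) (hj : j < l) :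
    ∃ L : List V, L.length = j + 1 ∧ L.Nodup ∧ L.IsChain G.Adj ∧ ∀ x ∈ L, x ∈ W := by
  induction j with
  | zero =>
    obtain ⟨w, hw⟩ := hne
    exact ⟨[w], by simp, by simp, by simp, by simpa using hw⟩
  | succ j ih =>
    obtain ⟨L, h1, h2, h3, h4⟩ := ih (by omega)
    match L, h1 with
    | a :: L', h1 =>
    have ha := hW a (h4 a (by simp))
    have : ∃ y ∈ W.filter (G.Adj a), y ∉ (a :: L').toFinset := by
      by_contra hcon
      push Not at hcon
      have := Finset.card_le_card (show W.filter (G.Adj a) ⊆ (a :: L').toFinset from hcon)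
      have h5 := List.toFinset_card_le (a :: L')
      omega
    obtain ⟨y, hy, hyL⟩ := this
    rw [Finset.mem_filter] at hy
    refine ⟨y :: a :: L', by simpa using h1, ?_, ?_, ?_⟩
    · rw [List.nodup_cons]; exact ⟨by simpa using hyL, h2⟩
    · rw [List.isChain_cons_cons]; exact ⟨hy.2.symm, h3⟩
    · intro x hx
      rw [List.mem_cons] at hx
      rcases hx with rfl | hx
      · exact hy.1
      · exact h4 x hx

theorem path_cover {V : Type} [DecidableEq V] (G : SimpleGraph V) [DecidableRel G.Adj]
    (l : ℕ) (hl : 0 < l) (U : Finset V) :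
    ∃ Q : List (List V), Q.flatten.Nodup ∧ (∀ q ∈ Q, q.length = l ∧ q.IsChain G.Adj) ∧
      (∀ x ∈ Q.flatten, x ∈ U) ∧
      ∑ w ∈ U \ Q.flatten.toFinset, ((U \ Q.flatten.toFinset).filter (G.Adj w)).card
        ≤ 2 * l * U.card := by
  induction hn : U.card using Nat.strong_induction_on generalizing U with
  | _ n ih =>
  by_cases hU : ∀ W' ⊆ U, W'.Nonempty → ∃ w ∈ W', (W'.filter (G.Adj w)).card < l
  · refine ⟨[], by simp, by simp, by simp, ?_⟩
    have := degenerate_sum G l U hU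
    simpa [hn] using this
  · push Not at hU
    obtain ⟨W', h1, h2, h3⟩ := hU
    obtain ⟨L, hL1, hL2, hL3, hL4⟩ := greedy_path G l W' h2 h3 (l - 1) (by omega)
    have hsub : L.toFinset ⊆ U := by
      intro x hx; exact h1 (hL4 x (by simpa using hx))
    have hc : (U \ L.toFinset).card + l = n := by
      have := Finset.card_sdiff_add_card_eq_card hsub
      rw [List.toFinset_card_of_nodup hL2] at this
      omega
    obtain ⟨Q, q1, q2, q3, q4⟩ := ih _ (by omega) (U \ L.toFinset) rfl
    refine ⟨L :: Q, ?_, ?_, ?_, ?_⟩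
    · rw [List.flatten_cons, List.nodup_append]
      refine ⟨hL2, q1, ?_⟩
      intro a ha b hb e
      subst e
      have := q3 a hb
      simp at this
      exact this.2 ha
    · intro q hq
      rw [List.mem_cons] at hq
      rcases hq with rfl | hq
      · exact ⟨by omega, hL3⟩
      · exact q2 q hq
    · intro x hx
      rw [List.flatten_cons, List.mem_append] at hx
      rcases hx with hx | hx
      · exact hsub (by simpa using hx)
      · exact (Finset.mem_sdiff.mp (q3 x hx)).1
    · have e : U \ (L :: Q).flatten.toFinset = (U \ L.toFinset) \ Q.flatten.toFinset := by
        ext x; simp [and_assoc]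
      rw [e]
      refine q4.trans ?_
      apply Nat.mul_le_mul_left; omega

theorem triples {V : Type} [Fintype V] [DecidableEq V] (G : SimpleGraph V) [DecidableRel G.Adj]
    (D : ℕ) (hD : ∀ v, G.degree v ≤ D) (X P : Finset V) :
    ∃ (X0 : Finset V) (a b : V → V), X0 ⊆ X ∧
      (∀ x ∈ X0, G.Adj x (a x) ∧ G.Adj x (b x) ∧ a x ∈ P ∧ b x ∈ P) ∧
      (∀ x ∈ X0, ∀ y ∈ X0, a x ≠ b y ∧ (a x = a y → x = y) ∧ (b x = b y → x = y)) ∧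
      ∑ x ∈ X, (P.filter (G.Adj x)).card ≤ 3 * D * X0.card + X.card := by
  induction hn : X.card generalizing X P with
  | zero =>
    rw [Finset.card_eq_zero] at hn; subst hn
    exact ⟨∅, id, id, by simp, by simp, by simp, by simp⟩
  | succ n ih =>
    by_cases hx : ∃ x ∈ X, 1 < (P.filter (G.Adj x)).card
    · obtain ⟨x, hxX, hx1⟩ := hx
      rw [Finset.one_lt_card] at hx1
      obtain ⟨u, hu, w, hw, huw⟩ := hx1
      rw [Finset.mem_filter] at hu hw
      obtain ⟨X0, a, b, h1, h2, h3, h4⟩ := ih (X.erase x) (P \ {u, w})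
        (by rw [Finset.card_erase_of_mem hxX]; omega)
      have hxX0 : x ∉ X0 := fun h => by simpa using h1 h
      have hne : ∀ y ∈ X0, y ≠ x := fun y hy e => hxX0 (e ▸ hy)
      have hPa : ∀ y ∈ X0, a y ∈ P ∧ a y ≠ u ∧ a y ≠ w := by
        intro y hy; have := (h2 y hy).2.2.1; simpa using this
      have hPb : ∀ y ∈ X0, b y ∈ P ∧ b y ≠ u ∧ b y ≠ w := by
        intro y hy; have := (h2 y hy).2.2.2; simpa using this
      refine ⟨insert x X0, Function.update a x u, Function.update b x w, ?_, ?_, ?_, ?_⟩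
      · intro y hy
        rw [Finset.mem_insert] at hy
        rcases hy with rfl | hy
        · exact hxX
        · exact (Finset.mem_erase.mp (h1 hy)).2
      · intro y hy
        rw [Finset.mem_insert] at hy
        rcases hy with rfl | hy
        · simp [hu, hw]
        · simp only [Function.update_of_ne (hne y hy)]
          exact ⟨(h2 y hy).1, (h2 y hy).2.1, (hPa y hy).1, (hPb y hy).1⟩
      · intro y hy z hz
        rw [Finset.mem_insert] at hy hz
        rcases hy with rfl | hy <;> rcases hz with rfl | hz
        · simp [huw]
        · simp only [Function.update_self, Function.update_of_ne (hne z hz)]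
          exact ⟨(hPb z hz).2.1.symm, fun e => absurd e.symm (hPa z hz).2.1,
            fun e => absurd e.symm (hPb z hz).2.2⟩
        · simp only [Function.update_self, Function.update_of_ne (hne y hy)]
          exact ⟨(hPa y hy).2.2, fun e => absurd e (hPa y hy).2.1,
            fun e => absurd e (hPb y hy).2.2⟩
        · simp only [Function.update_of_ne (hne y hy), Function.update_of_ne (hne z hz)]
          exact h3 y hy z hz
      · rw [Finset.card_insert_of_notMem hxX0, ← Finset.add_sum_erase _ _ hxX]
        have e1 : ∀ y ∈ X.erase x, (P.filter (G.Adj y)).card ≤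
            ((P \ {u, w}).filter (G.Adj y)).card + (({u, w} : Finset V).filter (G.Adj y)).card := by
          intro y _
          refine le_trans (Finset.card_le_card ?_) (Finset.card_union_le _ _)
          intro z hz
          rw [Finset.mem_filter] at hz
          by_cases hz2 : z ∈ ({u, w} : Finset V)
          · exact Finset.mem_union_right _ (Finset.mem_filter.mpr ⟨hz2, hz.2⟩)
          · exact Finset.mem_union_left _
              (Finset.mem_filter.mpr ⟨Finset.mem_sdiff.mpr ⟨hz.1, hz2⟩, hz.2⟩)
        have e2 := Finset.sum_le_sum e1
        rw [Finset.sum_add_distrib, dg_comm G (X.erase x) {u, w}, Finset.sum_pair huw] at e2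
        have e3 := (dg_le_degree G (X.erase x) u).trans (hD u)
        have e4 := (dg_le_degree G (X.erase x) w).trans (hD w)
        have e5 := (dg_le_degree G P x).trans (hD x)
        have : 3 * D * (X0.card + 1) = 3 * D * X0.card + 3 * D := by ring
        omega
    · push Not at hx
      refine ⟨∅, id, id, by simp, by simp, by simp, ?_⟩
      have := Finset.sum_le_sum hx
      simp at this
      simp; omega

/-- Rooted tree in `G` on the vertex set `A`, with `L` containing the leaves and `B` containing
the root, the children of the root and all vertices with a sibling. -/
structure RT {V : Type} (G : SimpleGraph V) (r : V) (A : Finset V) (p : V → V) (h : V → ℕ)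
    (L B : Finset V) : Prop where
  root : r ∈ A
  par : ∀ u ∈ A, u ≠ r → p u ∈ A ∧ G.Adj u (p u) ∧ h (p u) < h u
  leaf : ∀ u ∈ A, u ∉ L → ∃ c ∈ A, c ≠ r ∧ p c = u
  branch : ∀ u ∈ A, u ∉ B → u ≠ r ∧ p u ≠ r ∧ ∀ c ∈ A, c ≠ r → p c = p u → c = u

def Good {V : Type} (G : SimpleGraph V) (r : V) (A : Finset V) (z : ℕ) : Prop :=
  ∃ p h L B, RT G r A p h L B ∧ L.card + B.card ≤ z

def TipGood {V : Type} (G : SimpleGraph V) (r : V) (A : Finset V) (z : ℕ) (v : V) : Prop :=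
  ∃ p h L B, RT G r A p h L B ∧ L.card + B.card ≤ z ∧ v ∈ A ∧ v ∈ L ∧ v ≠ r ∧
    ∀ c ∈ A, c ≠ r → p c ≠ v

theorem TipGood.good {V : Type} {G : SimpleGraph V} {r : V} {A : Finset V} {z : ℕ} {v : V}
    (h : TipGood G r A z v) : Good G r A z := by
  obtain ⟨p, h, L, B, h1, h2, -⟩ := h
  exact ⟨p, h, L, B, h1, h2⟩

theorem good_single {V : Type} (G : SimpleGraph V) (r : V) : Good G r {r} 2 := by
  refine ⟨id, fun _ => 0, {r}, {r}, ⟨by simp, ?_, ?_, ?_⟩, by simp⟩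
  · intro u hu hur; simp at hu; exact absurd hu hur
  · intro u hu hur; exact absurd hu hur
  · intro u hu hur; exact absurd hu hur

theorem TipGood.extend {V : Type} [DecidableEq V] {G : SimpleGraph V} {r : V} {A : Finset V}
    {z : ℕ} {v : V} (h : TipGood G r A z v) (u : V) (hu : u ∉ A) (huv : G.Adj v u) :
    TipGood G r (insert u A) z u := by
  obtain ⟨p, h, L, B, h1, h2, hvA, hvL, hvr, hv⟩ := h
  have hne : ∀ x ∈ A, x ≠ u := fun x hx e => hu (e ▸ hx)
  have hur : u ≠ r := (hne r h1.root).symm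
  refine ⟨Function.update p u v, Function.update h u (h v + 1), insert u (L.erase v), B, ?_, ?_,
    by simp, by simp, hur, ?_⟩
  · refine ⟨by simp [h1.root], ?_, ?_, ?_⟩
    · intro x hx hxr
      rw [Finset.mem_insert] at hx
      rcases hx with rfl | hx
      · simp [hvA, huv.symm, Function.update_of_ne (hne v hvA)]
      · obtain ⟨a1, a2, a3⟩ := h1.par x hx hxr
        simp [Function.update_of_ne (hne x hx), Function.update_of_ne (hne _ a1), a1, a2, a3]
    · intro x hx hxL
      rw [Finset.mem_insert] at hx
      rcases hx with rfl | hx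
      · simp at hxL
      · by_cases hxv : x = v
        · subst hxv
          exact ⟨u, by simp, hur, by simp⟩
        · have : x ∉ L := by
            intro h; apply hxL; simp [h, hxv]
          obtain ⟨c, c1, c2, c3⟩ := h1.leaf x hx this
          exact ⟨c, by simp [c1], c2, by rw [Function.update_of_ne (hne c c1)]; exact c3⟩
    · intro x hx hxB
      rw [Finset.mem_insert] at hx
      rcases hx with rfl | hx
      · refine ⟨hur, by simpa using hvr, ?_⟩
        intro c hc hcr hcp
        rw [Finset.mem_insert] at hc
        rcases hc with rfl | hc
        · rfl
        · simp only [Function.update_self, Function.update_of_ne (hne c hc)] at hcp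
          exact absurd hcp (hv c hc hcr)
      · obtain ⟨a1, a2, a3⟩ := h1.branch x hx hxB
        simp only [Function.update_of_ne (hne x hx)]
        refine ⟨a1, a2, ?_⟩
        intro c hc hcr hcp
        rw [Finset.mem_insert] at hc
        rcases hc with rfl | hc
        · simp only [Function.update_self] at hcp
          exact absurd hcp.symm (hv x hx a1)
        · rw [Function.update_of_ne (hne c hc)] at hcp
          exact a3 c hc hcr hcp
  · have := Finset.card_insert_le u (L.erase v)
    rw [Finset.card_erase_of_mem hvL] at this
    have := Finset.card_pos.mpr ⟨v, hvL⟩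
    omega
  · intro c hc hcr
    rw [Finset.mem_insert] at hc
    rcases hc with rfl | hc
    · simpa using hne v hvA
    · rw [Function.update_of_ne (hne c hc)]
      exact hne _ (h1.par c hc hcr).1

theorem Good.attach {V : Type} [DecidableEq V] {G : SimpleGraph V} {r : V} {A : Finset V}
    {z : ℕ} (h : Good G r A z) (v : V) (hvA : v ∈ A) (u : V) (hu : u ∉ A) (huv : G.Adj v u) :
    TipGood G r (insert u A) (z + 3) u := by
  obtain ⟨p, h, L, B, h1, h2⟩ := h
  have hne : ∀ x ∈ A, x ≠ u := fun x hx e => hu (e ▸ hx)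
  have hur : u ≠ r := (hne r h1.root).symm
  have hB : ∃ B' : Finset V, B ⊆ B' ∧ B'.card ≤ B.card + 2 ∧ u ∈ B' ∧
      ∀ x ∈ A, x ≠ r → p x = v → x ∈ B' := by
    by_cases hc : ∃ c ∈ A, c ≠ r ∧ p c = v ∧ c ∉ B
    · obtain ⟨c, c1, c2, c3, c4⟩ := hc
      refine ⟨insert u (insert c B), ?_, ?_, by simp, ?_⟩
      · intro x hx; simp [hx]
      · have := Finset.card_insert_le u (insert c B)
        have := Finset.card_insert_le c B
        omega
      · intro x hx hxr hxv
        have := (h1.branch c c1 c4).2.2 x hx hxr (by rw [hxv, c3])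
        simp [this]
    · push Not at hc
      refine ⟨insert u B, by simp, (Finset.card_insert_le _ _).trans (by omega), by simp, ?_⟩
      intro x hx hxr hxv
      have := hc x hx hxr hxv
      simp [this]
  obtain ⟨B', b1, b2, b3, b4⟩ := hB
  refine ⟨Function.update p u v, Function.update h u (h v + 1), insert u L, B', ?_, ?_,
    by simp, by simp, hur, ?_⟩
  · refine ⟨by simp [h1.root], ?_, ?_, ?_⟩
    · intro x hx hxr
      rw [Finset.mem_insert] at hx
      rcases hx with rfl | hx
      · simp [hvA, huv.symm, Function.update_of_ne (hne v hvA)]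
      · obtain ⟨a1, a2, a3⟩ := h1.par x hx hxr
        simp [Function.update_of_ne (hne x hx), Function.update_of_ne (hne _ a1), a1, a2, a3]
    · intro x hx hxL
      rw [Finset.mem_insert] at hx
      rcases hx with rfl | hx
      · simp at hxL
      · have : x ∉ L := by
          intro h; apply hxL; simp [h]
        obtain ⟨c, c1, c2, c3⟩ := h1.leaf x hx this
        exact ⟨c, by simp [c1], c2, by rw [Function.update_of_ne (hne c c1)]; exact c3⟩
    · intro x hx hxB
      rw [Finset.mem_insert] at hx
      rcases hx with rfl | hx
      · exact absurd b3 hxB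
      · obtain ⟨a1, a2, a3⟩ := h1.branch x hx (fun h => hxB (b1 h))
        simp only [Function.update_of_ne (hne x hx)]
        refine ⟨a1, a2, ?_⟩
        intro c hc hcr hcp
        rw [Finset.mem_insert] at hc
        rcases hc with rfl | hc
        · simp only [Function.update_self] at hcp
          exact absurd (b4 x hx a1 hcp.symm) hxB
        · rw [Function.update_of_ne (hne c hc)] at hcp
          exact a3 c hc hcr hcp
  · have := Finset.card_insert_le u L
    omega
  · intro c hc hcr
    rw [Finset.mem_insert] at hc
    rcases hc with rfl | hc
    · simpa using hne v hvA
    · rw [Function.update_of_ne (hne c hc)]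
      exact hne _ (h1.par c hc hcr).1

theorem TipGood.chain {V : Type} [DecidableEq V] {G : SimpleGraph V} {r : V} (l : List V) :
    ∀ {A : Finset V} {z : ℕ} {v : V} (_ : TipGood G r A z v) (_ : (v :: l).IsChain G.Adj)
      (_ : l.Nodup) (_ : ∀ x ∈ l, x ∉ A), Good G r (A ∪ l.toFinset) z := by
  induction l with
  | nil => intro A z v h _ _ _; simpa using h.good
  | cons u l ih =>
    intro A z v h hc hn hd
    rw [List.isChain_cons_cons] at hc
    rw [List.nodup_cons] at hn
    have h1 := h.extend u (hd u (by simp)) hc.1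
    have h2 := ih h1 hc.2 hn.2 (by
      intro x hx
      rw [Finset.mem_insert]
      rintro (rfl | h)
      · exact hn.1 hx
      · exact hd x (by simp [hx]) h)
    have e : insert u A ∪ l.toFinset = A ∪ (u :: l).toFinset := by
      ext x; simp
    rwa [e] at h2

theorem Good.chain {V : Type} [DecidableEq V] {G : SimpleGraph V} {r : V} {A : Finset V}
    {z : ℕ} (h : Good G r A z) (v : V) (hvA : v ∈ A) (l : List V)
    (hc : (v :: l).IsChain G.Adj) (hn : l.Nodup) (hd : ∀ x ∈ l, x ∉ A) :
    Good G r (A ∪ l.toFinset) (z + 3) := by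
  cases l with
  | nil =>
    obtain ⟨p, h, L, B, h1, h2⟩ := h
    exact ⟨p, h, L, B, by simpa using h1, by omega⟩
  | cons u l =>
    rw [List.isChain_cons_cons] at hc
    rw [List.nodup_cons] at hn
    have h1 := h.attach v hvA u (hd u (by simp)) hc.1
    have h2 := TipGood.chain l h1 hc.2 hn.2 (by
      intro x hx
      rw [Finset.mem_insert]
      rintro (rfl | h)
      · exact hn.1 hx
      · exact hd x (by simp [hx]) h)
    have e : insert u A ∪ l.toFinset = A ∪ (u :: l).toFinset := by
      ext x; simp
    rwa [e] at h2

/-- existence of a short connector from `A` to `R`. -/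
theorem connector {V : Type} [DecidableEq V] (G : SimpleGraph V) (hG : G.Connected)
    (A R : Finset V) (hA : A.Nonempty) (hR : R.Nonempty)
    (hdom : ∀ v, v ∈ A ∪ R ∨ ∃ w ∈ A ∪ R, G.Adj v w) (hdis : ∀ x ∈ R, x ∉ A) :
    ∃ a ∈ A, ∃ z ∈ R, ∃ c : List V, (a :: (c ++ [z])).IsChain G.Adj ∧ c.Nodup ∧ c.length ≤ 2 ∧
      ∀ x ∈ c, x ∉ A ∧ x ∉ R := by
  by_cases h1 : ∃ a ∈ A, ∃ z ∈ R, G.Adj a z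
  · obtain ⟨a, ha, z, hz, h⟩ := h1
    exact ⟨a, ha, z, hz, [], by simpa using h, by simp, by simp, by simp⟩
  by_cases h2 : ∃ a ∈ A, ∃ x, x ∉ A ∧ G.Adj a x ∧ ∃ z ∈ R, G.Adj x z
  · obtain ⟨a, ha, x, hx, hax, z, hz, hxz⟩ := h2
    refine ⟨a, ha, z, hz, [x], by simp [hax, hxz], by simp, by simp, ?_⟩
    intro y hy
    simp at hy
    subst hy
    exact ⟨hx, fun h => h1 ⟨a, ha, y, h, hax⟩⟩
  obtain ⟨a0, ha0⟩ := hA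
  obtain ⟨z0, hz0⟩ := hR
  let N : Set V := {x | x ∈ A ∨ ∃ a ∈ A, G.Adj a x}
  have hz0N : z0 ∉ N := by
    rintro (h | ⟨a, ha, h⟩)
    · exact hdis z0 hz0 h
    · exact h1 ⟨a, ha, z0, hz0, h⟩
  obtain ⟨w⟩ := hG.preconnected a0 z0
  obtain ⟨d, -, hd1, hd2⟩ := w.exists_boundary_dart N (Or.inl ha0) hz0N
  have hxy := d.adj
  set x := d.fst
  set y := d.snd
  have hxA : x ∉ A := fun h => hd2 (Or.inr ⟨x, h, hxy⟩)
  obtain ⟨a, ha, hax⟩ := hd1.resolve_left hxA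
  have hxR : x ∉ R := fun h => h1 ⟨a, ha, x, h, hax⟩
  have hyA : y ∉ A := fun h => hd2 (Or.inl h)
  have hyR : y ∉ R := fun h => h2 ⟨a, ha, x, hxA, hax, y, h, hxy⟩
  obtain ⟨z, hz, hyz⟩ := (hdom y).resolve_left (by simp [hyA, hyR])
  have hzR : z ∈ R := by
    rw [Finset.mem_union] at hz
    refine hz.resolve_left fun h => hd2 (Or.inr ⟨z, h, hyz.symm⟩)
  refine ⟨a, ha, z, hzR, [x, y], by simp [hax, hxy, hyz], by simp [hxy.ne], by simp, ?_⟩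
  intro t ht
  simp at ht
  rcases ht with rfl | rfl
  · exact ⟨hxA, hxR⟩
  · exact ⟨hyA, hyR⟩

theorem connect {V : Type} [DecidableEq V] (G : SimpleGraph V) (hG : G.Connected) (r : V)
    (k : ℕ) : ∀ (Q : List (List V)) (_ : Q.length = k) (A : Finset V) (z : ℕ) (_ : Good G r A z)
      (_ : Q.flatten.Nodup) (_ : ∀ q ∈ Q, q ≠ [] ∧ q.IsChain G.Adj)
      (_ : ∀ x ∈ Q.flatten, x ∉ A)
      (_ : ∀ v, v ∈ A ∪ Q.flatten.toFinset ∨ ∃ w ∈ A ∪ Q.flatten.toFinset, G.Adj v w),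
      ∃ A', A ∪ Q.flatten.toFinset ⊆ A' ∧ Good G r A' (z + 6 * k) ∧
        A'.card ≤ (A ∪ Q.flatten.toFinset).card + 2 * k := by
  induction k with
  | zero =>
    intro Q hQ A z hA _ _ _ _
    rw [List.length_eq_zero_iff] at hQ
    subst hQ
    exact ⟨A, by simp, by simpa using hA, by simp⟩
  | succ k ih =>
    intro Q hQ A z hA hnd hch hdis hdom
    have hAne : A.Nonempty := by
      obtain ⟨p, h, L, B, h1, -⟩ := hA
      exact ⟨r, h1.root⟩
    have hRne : Q.flatten.toFinset.Nonempty := by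
      cases Q with
      | nil => simp at hQ
      | cons q Q =>
        have := (hch q (by simp)).1
        obtain ⟨x, hx⟩ := List.exists_mem_of_ne_nil q this
        exact ⟨x, by simp [hx]⟩
    obtain ⟨a, ha, y, hy, c, hc1, hc2, hc3, hc4⟩ := connector G hG A Q.flatten.toFinset hAne hRne hdom
      (by intro x hx; exact hdis x (by simpa using hx))
    have hy' : y ∈ Q.flatten := by simpa using hy
    obtain ⟨q, hq, hyq⟩ := List.mem_flatten.mp hy'
    obtain ⟨l1, l2, rfl⟩ := List.append_of_mem hyq
    have hperm : Q.Perm ((l1 ++ y :: l2) :: Q.erase (l1 ++ y :: l2)) := List.perm_cons_erase hq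
    have hflat := hperm.flatten
    rw [List.flatten_cons] at hflat
    set Q' := Q.erase (l1 ++ y :: l2) with hQ'
    have hlen : Q'.length = k := by
      rw [hQ', List.length_erase_of_mem hq]; omega
    have hnd2 : ((l1 ++ y :: l2) ++ Q'.flatten).Nodup := hflat.nodup_iff.mp hnd
    have hmem : ∀ x, x ∈ Q.flatten ↔ x ∈ (l1 ++ y :: l2) ++ Q'.flatten := fun x => hflat.mem_iff
    rw [List.nodup_append] at hnd2
    obtain ⟨n1, n2, n3⟩ := hnd2
    have hqch := (hch _ hq).2
    rw [List.nodup_append] at n1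
    obtain ⟨m1, m2, m3⟩ := n1
    rw [List.nodup_cons] at m2
    have hcR : ∀ x ∈ c, x ∉ A ∧ x ∉ l1 ∧ x ≠ y ∧ x ∉ l2 ∧ x ∉ Q'.flatten := by
      intro x hx
      have h1 := (hc4 x hx).1
      have h2 := (hc4 x hx).2
      rw [List.mem_toFinset, hmem] at h2
      simp only [List.mem_append, List.mem_cons, not_or] at h2
      exact ⟨h1, h2.1.1, h2.1.2.1, h2.1.2.2, h2.2⟩
    have hqA : ∀ x, (x ∈ l1 ∨ x = y ∨ x ∈ l2) → x ∉ A := by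
      intro x hx
      apply hdis
      rw [hmem]
      simp only [List.mem_append, List.mem_cons]
      tauto
    -- first chain
    have g1 := hA.chain a ha (c ++ y :: l2) (by
        have e : a :: (c ++ y :: l2) = (a :: c) ++ y :: l2 := by simp
        have e2 : a :: (c ++ [y]) = (a :: c) ++ [y] := by simp
        rw [e]
        rw [e2] at hc1
        rw [List.isChain_append] at hc1 hqch ⊢
        exact ⟨hc1.1, hqch.2.1, by simpa using hc1.2.2⟩) (by
        rw [List.nodup_append, List.nodup_cons]
        refine ⟨hc2, m2, ?_⟩
        intro x hx w hw e
        subst e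
        rw [List.mem_cons] at hw
        rcases hw with hw | hw
        · exact (hcR x hx).2.2.1 hw
        · exact (hcR x hx).2.2.2.1 hw) (by
        intro x hx
        rw [List.mem_append, List.mem_cons] at hx
        rcases hx with hx | hx
        · exact (hcR x hx).1
        · exact hqA x (Or.inr hx))
    have g2 := g1.chain y (by simp) l1.reverse (by
        have e : y :: l1.reverse = (l1 ++ [y]).reverse := by simp
        rw [e, List.isChain_reverse]
        have hq2 : (l1 ++ [y]).IsChain G.Adj := by
          rw [List.isChain_append] at hqch ⊢
          exact ⟨hqch.1, by simp, by simpa using hqch.2.2⟩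
        exact hq2.imp (fun a b h => h.symm)) (by simpa using m1) (by
        intro x hx
        rw [List.mem_reverse] at hx
        simp only [Finset.mem_union, List.mem_toFinset, List.mem_append, List.mem_cons, not_or]
        refine ⟨hqA x (Or.inl hx), fun h => (hcR x h).2.1 hx, ?_, ?_⟩
        · exact fun h => m3 x hx y (by simp) h
        · exact fun h => m3 x hx x (by simp [h]) rfl)
    set A1 := A ∪ (c ++ y :: l2).toFinset ∪ l1.reverse.toFinset with hA1
    have hsub : A ∪ Q.flatten.toFinset ⊆ A1 ∪ Q'.flatten.toFinset := by
      intro x hx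
      simp only [hA1, Finset.mem_union, List.mem_toFinset, hmem, List.mem_append, List.mem_cons,
        List.mem_reverse] at hx ⊢
      tauto
    have hsub2 : A1 ∪ Q'.flatten.toFinset ⊆ (A ∪ Q.flatten.toFinset) ∪ c.toFinset := by
      intro x hx
      simp only [hA1, Finset.mem_union, List.mem_toFinset, hmem, List.mem_append, List.mem_cons,
        List.mem_reverse] at hx ⊢
      tauto
    obtain ⟨A', r1, r2, r3⟩ := ih Q' hlen A1 (z + 3 + 3) g2 n2
      (fun q hq => hch q (List.mem_of_mem_erase hq)) (by
        intro x hx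
        simp only [hA1, Finset.mem_union, List.mem_toFinset, List.mem_append, List.mem_cons,
          List.mem_reverse, not_or]
        refine ⟨⟨?_, ?_, ?_, ?_⟩, ?_⟩
        · exact hdis x (by rw [hmem]; simp only [List.mem_append]; exact Or.inr hx)
        · exact fun h => (hcR x h).2.2.2.2 hx
        · exact fun h => n3 y (by simp) x hx h.symm
        · exact fun h => n3 x (by simp [h]) x hx rfl
        · exact fun h => n3 x (by simp [h]) x hx rfl) (by
        intro v
        rcases hdom v with h | ⟨w, hw, h⟩
        · exact Or.inl (hsub h)
        · exact Or.inr ⟨w, hsub hw, h⟩)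
    refine ⟨A', hsub.trans r1, ?_, ?_⟩
    · have : z + 3 + 3 + 6 * k = z + 6 * (k + 1) := by ring
      rwa [this] at r2
    · have e1 := Finset.card_le_card hsub2
      have e2 := Finset.card_union_le (A ∪ Q.flatten.toFinset) c.toFinset
      have e3 := List.toFinset_card_le c
      omega

theorem connect_all {V : Type} [DecidableEq V] [Nonempty V] (G : SimpleGraph V) (hG : G.Connected)
    (Q : List (List V)) (hnd : Q.flatten.Nodup) (hch : ∀ q ∈ Q, q ≠ [] ∧ q.IsChain G.Adj)
    (hdom : ∀ v, v ∈ Q.flatten.toFinset ∨ ∃ w ∈ Q.flatten.toFinset, G.Adj v w) :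
    ∃ r A', Q.flatten.toFinset ⊆ A' ∧ Good G r A' (5 + 6 * Q.length) ∧
        A'.card ≤ Q.flatten.toFinset.card + 2 * Q.length := by
  cases Q with
  | nil =>
    obtain ⟨v⟩ := ‹Nonempty V›
    simpa using hdom v
  | cons q Q =>
    obtain ⟨hq1, hq2⟩ := hch q (by simp)
    cases q with
    | nil => exact absurd rfl hq1
    | cons r l =>
      rw [List.flatten_cons, List.nodup_append, List.nodup_cons] at hnd
      obtain ⟨⟨n0, n1⟩, n2, n3⟩ := hnd
      have g := (good_single G r).chain r (by simp) l hq2 n1 (by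
        intro x hx h
        simp at h
        exact n0 (h ▸ hx))
      have e : {r} ∪ l.toFinset ∪ Q.flatten.toFinset = ((r :: l) :: Q).flatten.toFinset := by
        ext x; simp
      obtain ⟨A', r1, r2, r3⟩ := connect G hG r Q.length Q rfl _ _ g n2
        (fun q hq => hch q (by simp [hq])) (by
          intro x hx h
          simp only [Finset.mem_union, Finset.mem_singleton, List.mem_toFinset] at h
          exact n3 x (by simpa using h) x hx rfl) (by rw [e]; exact hdom)
      rw [e] at r1 r3
      refine ⟨r, A', r1, ?_, ?_⟩
      · obtain ⟨p, h, L, B, h1, h2⟩ := r2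
        exact ⟨p, h, L, B, h1, by simp; omega⟩
      · simp only [List.length_cons]; omega

/-- Two trees built on the same rooted tree, with isomorphisms to a common `T0` with equal codes,
agree on `A`. -/
theorem rigid {V : Type} {G : SimpleGraph V} {r : V} {A : Finset V} {p : V → V} {h : V → ℕ}
    {L B : Finset V} (hRT : RT G r A p h L B) {p1 p2 : V → V} {T0 : SimpleGraph V}
    (h1 : ∀ v ∈ A, p1 v = p v) (h2 : ∀ v ∈ A, p2 v = p v)
    (o2 : ∀ v, v ∉ A → p2 v ∈ A) (hT0 : T0 ≤ G)
    (f1 : PT r p1 ≃g T0) (f2 : PT r p2 ≃g T0) {C : Type} (e : V → V → C)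
    (he : ∀ w x y, G.Adj w x → G.Adj w y → e w x = e w y → x = y)
    (hr : f1 r = f2 r)
    (hcode : ∀ u ∈ A, (u ∈ L ∨ u ∈ B) → e (f1 (p u)) (f1 u) = e (f2 (p u)) (f2 u)) :
    ∀ k, ∀ u ∈ A, h u ≤ k → f1 u = f2 u := by
  have adj1 : ∀ u ∈ A, u ≠ r → (PT r p1).Adj (p u) u := by
    intro u hu hur
    rw [PT_adj]
    exact ⟨fun e => by have := (hRT.par u hu hur).2.2; rw [e] at this; omega,
      Or.inr ⟨hur, h1 u hu⟩⟩
  have adj2 : ∀ u ∈ A, u ≠ r → (PT r p2).Adj (p u) u := by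
    intro u hu hur
    rw [PT_adj]
    exact ⟨fun e => by have := (hRT.par u hu hur).2.2; rw [e] at this; omega,
      Or.inr ⟨hur, h2 u hu⟩⟩
  intro k
  induction k with
  | zero =>
    intro u hu hk
    by_cases hur : u = r
    · rw [hur, hr]
    · have := (hRT.par u hu hur).2.2; omega
  | succ k ih =>
    intro u hu hk
    by_cases hur : u = r
    · rw [hur, hr]
    obtain ⟨hvA, -, hvh⟩ := hRT.par u hu hur
    have hv := ih (p u) hvA (by omega)
    by_cases hZ : u ∈ L ∨ u ∈ B
    · have hc := hcode u hu hZ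
      rw [← hv] at hc
      refine he (f1 (p u)) _ _ ?_ ?_ hc
      · exact hT0 (f1.map_adj_iff.mpr (adj1 u hu hur))
      · rw [hv]
        exact hT0 (f2.map_adj_iff.mpr (adj2 u hu hur))
    · push Not at hZ
      obtain ⟨c, cA, cr, hcu⟩ := hRT.leaf u hu hZ.1
      obtain ⟨-, hvr, huniq⟩ := hRT.branch u hu hZ.2
      obtain ⟨hwA, -, hwh⟩ := hRT.par (p u) hvA hvr
      have hw := ih (p (p u)) hwA (by omega)
      obtain ⟨-, -, hch⟩ := hRT.par c cA cr
      -- transfer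
      set t := f2.symm (f1 u) with ht
      have htf : f2 t = f1 u := by simp [ht]
      have a1 : (PT r p2).Adj (p u) t := by
        rw [← f2.map_adj_iff, ← hv, htf, f1.map_adj_iff]
        exact adj1 u hu hur
      set c' := f2.symm (f1 c) with hc'
      have hcf : f2 c' = f1 c := by simp [hc']
      have a2 : (PT r p2).Adj t c' := by
        rw [← f2.map_adj_iff, htf, hcf, f1.map_adj_iff]
        have := adj1 c cA cr
        rwa [hcu] at this
      have hne1 : c' ≠ p u := by
        intro e1
        have : f1 c = f1 (p u) := by rw [← hcf, e1, hv]
        have := f1.injective this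
        rw [hcu] at hch
        rw [this] at hch
        omega
      have hne2 : t ≠ p (p u) := by
        intro e1
        have : f1 u = f1 (p (p u)) := by rw [← htf, e1, hw]
        have := f1.injective this
        rw [← this] at hwh
        omega
      have htA : t ∈ A := by
        by_contra htA
        have hleaf : ∀ y, (PT r p2).Adj t y → y = p2 t := by
          intro y hy
          rw [PT_adj] at hy
          rcases hy with ⟨-, ⟨-, hy⟩ | ⟨hyr, hy⟩⟩
          · exact hy.symm
          · by_cases hyA : y ∈ A
            · rw [h2 y hyA] at hy
              exact absurd (hy ▸ (hRT.par y hyA hyr).1) htA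
            · exact absurd (hy ▸ o2 y hyA) htA
        exact hne1 ((hleaf _ a2).trans (hleaf _ a1.symm).symm)
      rw [PT_adj] at a1
      have : t = u := by
        rcases a1 with ⟨-, ⟨-, hy⟩ | ⟨hyr, hy⟩⟩
        · rw [h2 _ hvA] at hy
          exact absurd hy.symm hne2
        · rw [h2 t htA] at hy
          exact huniq t htA hyr hy
      rw [this] at htf
      exact htf.symm

theorem exists_noniso {V ι : Type} [Fintype V] [DecidableEq ι] (s : Finset ι)
    (T : ι → SimpleGraph V) :
    ∃ s' ⊆ s, (∀ i ∈ s', ∀ j ∈ s', Nonempty (T i ≃g T j) → i = j) ∧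
      ∀ i ∈ s, ∃ j ∈ s', Nonempty (T i ≃g T j) := by
  induction s using Finset.induction_on with
  | empty => exact ⟨∅, by simp, by simp, by simp⟩
  | insert a s ha ih =>
    obtain ⟨s', h1, h2, h3⟩ := ih
    by_cases hx : ∃ j ∈ s', Nonempty (T a ≃g T j)
    · refine ⟨s', h1.trans (Finset.subset_insert _ _), h2, ?_⟩
      intro i hi
      rw [Finset.mem_insert] at hi
      rcases hi with rfl | hi
      · exact hx
      · exact h3 i hi
    · push Not at hx
      refine ⟨insert a s', Finset.insert_subset_insert _ h1, ?_, ?_⟩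
      · intro i hi j hj hij
        rw [Finset.mem_insert] at hi hj
        rcases hi with rfl | hi <;> rcases hj with rfl | hj
        · rfl
        · exact absurd hij (not_nonempty_iff.mpr (hx j hj))
        · exact absurd (hij.map (·.symm)) (not_nonempty_iff.mpr (hx i hi))
        · exact h2 i hi j hj hij
      · intro i hi
        rw [Finset.mem_insert] at hi
        rcases hi with rfl | hi
        · exact ⟨i, by simp, ⟨RelIso.refl _⟩⟩
        · obtain ⟨j, hj, hij⟩ := h3 i hi
          exact ⟨j, by simp [hj], hij⟩

theorem count_trees_s17 {V : Type} [Fintype V] [DecidableEq V] (G : SimpleGraph V) [DecidableRel G.Adj]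
    (D : ℕ) (hD0 : 0 < D) (hD : ∀ v, G.degree v ≤ D) (r : V) (A : Finset V) (z : ℕ)
    (hA : Good G r A z)
    (hdom : ∀ v, v ∉ A → ∃ w ∈ A, G.Adj v w) (X0 : Finset V) (a b : V → V)
    (hX : ∀ x ∈ X0, x ∉ A ∧ G.Adj x (a x) ∧ G.Adj x (b x) ∧ a x ∈ A ∧ b x ∈ A)
    (hab : ∀ x ∈ X0, ∀ y ∈ X0, a x ≠ b y ∧ (a x = a y → x = y) ∧ (b x = b y → x = y)) :
    ∃ S : Finset (SimpleGraph V), (∀ H ∈ S, H ≤ G ∧ H.IsTree) ∧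
      (∀ H ∈ S, ∀ H' ∈ S, H ≠ H' → IsEmpty (H ≃g H')) ∧
      2 ^ X0.card ≤ S.card * (Fintype.card V * D ^ z) := by
  classical
  obtain ⟨p, h, L, B, hRT, hz⟩ := hA
  choose! dom hdom1 hdom2 using hdom
  let pp : Finset V → V → V := fun Y v => if v ∈ A then p v else
    if v ∈ X0 then (if v ∈ Y then a v else b v) else dom v
  have hppA : ∀ Y, ∀ v ∈ A, pp Y v = p v := by
    intro Y v hv; simp [pp, hv]
  have hppO : ∀ Y v, v ∉ A → pp Y v ∈ A ∧ G.Adj v (pp Y v) := by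
    intro Y v hv
    simp only [pp, hv, if_false]
    split_ifs with h1 h2
    · exact ⟨(hX v h1).2.2.2.1, (hX v h1).2.1⟩
    · exact ⟨(hX v h1).2.2.2.2, (hX v h1).2.2.1⟩
    · exact ⟨hdom1 v hv, hdom2 v hv⟩
  let T : Finset V → SimpleGraph V := fun Y => PT r (pp Y)
  have hle : ∀ Y, T Y ≤ G := by
    intro Y v w hvw
    rw [PT_adj] at hvw
    have key : ∀ v, v ≠ r → G.Adj v (pp Y v) := by
      intro v hv
      by_cases hvA : v ∈ A
      · rw [hppA Y v hvA]; exact (hRT.par v hvA hv).2.1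
      · exact (hppO Y v hvA).2
    rcases hvw with ⟨-, ⟨h1, h2⟩ | ⟨h1, h2⟩⟩
    · rw [← h2]; exact key v h1
    · rw [← h2]; exact (key w h1).symm
  have htree : ∀ Y, (T Y).IsTree := by
    intro Y
    apply PT_isTree r (pp Y) (fun v => if v ∈ A then h v else A.sup h + 1)
    intro v hv
    by_cases hvA : v ∈ A
    · have := hRT.par v hvA hv
      simp only [hppA Y v hvA, hvA, this.1, if_true]
      exact this.2.2
    · simp only [hvA, (hppO Y v hvA).1, if_true, if_false]
      have := Finset.le_sup (f := h) (hppO Y v hvA).1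
      omega
  obtain ⟨s', hs1, hs2, hs3⟩ := exists_noniso X0.powerset T
  refine ⟨s'.image T, ?_, ?_, ?_⟩
  · intro H hH
    obtain ⟨Y, -, rfl⟩ := Finset.mem_image.mp hH
    exact ⟨hle Y, htree Y⟩
  · intro H hH H' hH' hne
    obtain ⟨Y, hY, rfl⟩ := Finset.mem_image.mp hH
    obtain ⟨Y', hY', rfl⟩ := Finset.mem_image.mp hH'
    rw [← not_nonempty_iff]
    intro hc
    exact hne (congrArg T (hs2 Y hY Y' hY' hc))
  · have hinj : Set.InjOn T s' := by
      intro Y hY Y' hY' e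
      exact hs2 Y hY Y' hY' ⟨e ▸ RelIso.refl _⟩
    rw [Finset.card_image_of_injOn hinj]
    choose! rep hrep1 hrep2 using hs3
    have hiso : ∀ Y, ∃ f : V ≃ V, Y ∈ X0.powerset →
        ∃ g : T Y ≃g T (rep Y), ∀ v, g v = f v := by
      intro Y
      by_cases hY : Y ∈ X0.powerset
      · obtain ⟨g⟩ := hrep2 Y hY
        exact ⟨g.toEquiv, fun _ => ⟨g, fun v => rfl⟩⟩
      · exact ⟨Equiv.refl _, fun h => absurd h hY⟩
    choose f hf using hiso
    -- labels
    have hlab : ∀ w : V, ∃ e : V → Fin D, ∀ x y, G.Adj w x → G.Adj w y → e x = e y → x = y := by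
      intro w
      have hc : Fintype.card (G.neighborSet w) ≤ Fintype.card (Fin D) := by
        rw [Fintype.card_fin, SimpleGraph.card_neighborSet_eq_degree]; exact hD w
      obtain ⟨i⟩ := Function.Embedding.nonempty_of_card_le hc
      refine ⟨fun x => if hx : G.Adj w x then i ⟨x, hx⟩ else ⟨0, hD0⟩, ?_⟩
      intro x y hx hy hxy
      simp only [hx, hy, dif_pos] at hxy
      exact congrArg Subtype.val (i.injective hxy)
    choose e he using hlab
    let code : Finset V → Finset V × (V × ({u // u ∈ L ∪ B} → Fin D)) := fun Y =>
      (rep Y, f Y r, fun u => e (f Y (p u)) (f Y u))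
    have hmaps : Set.MapsTo code (X0.powerset : Set (Finset V))
        ((s' ×ˢ (Finset.univ : Finset (V × ({u // u ∈ L ∪ B} → Fin D))) : Finset _) : Set _) := by
      intro Y hY
      simp only [Finset.coe_product, Set.mem_prod, code]
      exact ⟨hrep1 Y hY, by simp⟩
    have hcinj : Set.InjOn code (X0.powerset : Set (Finset V)) := by
      intro Y hY Y' hY' hcode
      simp only [code, Prod.mk.injEq] at hcode
      obtain ⟨c1, c2, c3⟩ := hcode
      obtain ⟨g, hg⟩ := hf Y hY
      obtain ⟨g', hg'⟩ := hf Y' hY'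
      revert g hg
      rw [c1]
      intro g hg
      have hfix0 := rigid hRT (hppA Y) (hppA Y') (fun v hv => (hppO Y' v hv).1) (hle _) g g' e he
        (by rw [hg, hg', c2]) (by
          intro u hu huZ
          rw [hg, hg, hg', hg']
          exact congrFun c3 ⟨u, by simpa using huZ⟩)
      have hfix : ∀ u ∈ A, g u = g' u := fun u hu => hfix0 _ u hu le_rfl
      rw [Finset.mem_coe, Finset.mem_powerset] at hY hY'
      have key : ∀ (Y Y' : Finset V) (g : T Y ≃g T (rep Y')) (g' : T Y' ≃g T (rep Y')),
          (∀ u ∈ A, g u = g' u) → Y ⊆ X0 → Y ⊆ Y' := by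
        intro Y Y' g g' hfix hY x hx
        by_contra hx'
        have hx0 := hY hx
        obtain ⟨xA, -, -, axA, -⟩ := hX x hx0
        have hxr : x ≠ r := fun e => xA (e ▸ hRT.root)
        have hppx : pp Y x = a x := by simp [pp, xA, hx0, hx]
        have hppx' : pp Y' x = b x := by simp [pp, xA, hx0, hx']
        have hother : ∀ y, y ≠ x → pp Y' y = a x → pp Y y = a x := by
          intro y hyx hy
          by_cases hyA : y ∈ A
          · rwa [hppA Y y hyA, ← hppA Y' y hyA]
          · by_cases hyX : y ∈ X0
            · simp only [pp, hyA, hyX, if_true, if_false] at hy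
              split_ifs at hy
              · exact absurd ((hab y hyX x hx0).2.1 hy) hyx
              · exact absurd hy.symm (hab x hx0 y hyX).1
            · simp only [pp, hyA, hyX, if_false] at hy ⊢
              exact hy
        have hax : a x ≠ x := fun e => xA (e ▸ axA)
        have hsub : (T Y').neighborSet (a x) ⊂ (T Y).neighborSet (a x) := by
          rw [Set.ssubset_iff_of_subset]
          · refine ⟨x, ?_, ?_⟩
            · rw [SimpleGraph.mem_neighborSet, PT_adj]
              exact ⟨hax, Or.inr ⟨hxr, hppx⟩⟩
            · rw [SimpleGraph.mem_neighborSet, PT_adj]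
              rintro ⟨-, ⟨h1, h2⟩ | ⟨h1, h2⟩⟩
              · rw [hppA _ _ axA] at h2
                exact xA (h2 ▸ (hRT.par _ axA h1).1)
              · rw [hppx'] at h2
                exact (hab x hx0 x hx0).1 h2.symm
          · intro y hy
            rw [SimpleGraph.mem_neighborSet, PT_adj] at hy ⊢
            rcases hy with ⟨h0, ⟨h1, h2⟩ | ⟨h1, h2⟩⟩
            · rw [hppA _ _ axA] at h2
              exact ⟨h0, Or.inl ⟨h1, by rw [hppA _ _ axA]; exact h2⟩⟩
            · by_cases hyx : y = x
              · subst hyx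
                rw [hppx'] at h2
                exact absurd h2.symm (hab y hx0 y hx0).1
              · exact ⟨h0, Or.inr ⟨h1, hother y hyx h2⟩⟩
        have hlt := Set.ncard_lt_ncard hsub (Set.toFinite _)
        have h1 : ((T Y).neighborSet (a x)).ncard ≤ ((T Y').neighborSet (a x)).ncard := by
          refine Set.ncard_le_ncard_of_injOn (fun y => g'.symm (g y)) ?_ ?_ (Set.toFinite _)
          · intro y hy
            rw [SimpleGraph.mem_neighborSet] at hy ⊢
            rw [← g'.map_adj_iff]
            simp only [RelIso.apply_symm_apply]
            rw [← hfix _ axA, g.map_adj_iff]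
            exact hy
          · intro y _ y' _ hyy
            exact g.injective (g'.symm.injective hyy)
        omega
      apply Finset.Subset.antisymm
      · exact key Y Y' g g' hfix hY
      · have key' := key Y' Y
        rw [c1] at key'
        exact key' g' g (fun u hu => (hfix u hu).symm) hY'
    have hcard := Finset.card_le_card_of_injOn code hmaps hcinj
    rw [Finset.card_powerset, Finset.card_product, Finset.card_univ, Fintype.card_prod,
      Fintype.card_fun, Fintype.card_fin, Fintype.card_coe] at hcard
    refine hcard.trans ?_
    apply Nat.mul_le_mul_left
    apply Nat.mul_le_mul_left
    exact Nat.pow_le_pow_right hD0 ((Finset.card_union_le _ _).trans hz)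

theorem sum_ge_of_bad {V : Type} [DecidableEq V] (Y bad : Finset V) (f : V → ℕ) (c : ℝ)
    (hc : 0 ≤ c) (hf : ∀ y ∈ Y, y ∉ bad → c ≤ (f y : ℝ)) :
    ((Y.card : ℝ) - bad.card) * c ≤ ((∑ y ∈ Y, f y : ℕ) : ℝ) := by
  have h1 : ∑ y ∈ Y \ bad, f y ≤ ∑ y ∈ Y, f y :=
    Finset.sum_le_sum_of_subset Finset.sdiff_subset
  have h2 : ((Y \ bad).card : ℝ) * c ≤ ((∑ y ∈ Y \ bad, f y : ℕ) : ℝ) := by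
    push_cast
    rw [← nsmul_eq_mul]
    apply Finset.card_nsmul_le_sum
    intro y hy
    rw [Finset.mem_sdiff] at hy
    exact hf y hy.1 hy.2
  have h3 : (Y.card : ℝ) ≤ (Y \ bad).card + bad.card := by
    have := Finset.card_le_card_sdiff_add_card (s := Y) (t := bad)
    exact_mod_cast this
  have h4 : ((∑ y ∈ Y \ bad, f y : ℕ) : ℝ) ≤ ((∑ y ∈ Y, f y : ℕ) : ℝ) := by exact_mod_cast h1
  nlinarith

theorem main_struct {V : Type} [Fintype V] [DecidableEq V] (G : SimpleGraph V) [DecidableRel G.Adj]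
    (hG : G.Connected) (d l D : ℕ) (hl : 0 < l) (hld : (l : ℝ) * 100000 ≤ d)
    (hd : (10 : ℝ) ^ 7 ≤ d) (hD1 : (D : ℝ) ≤ 1.01 * d) (hD : ∀ v, G.degree v ≤ D)
    (hlo : ∀ v, 0.99 * (d : ℝ) ≤ G.degree v) :
    ∃ (S : Finset (SimpleGraph V)) (m t : ℕ), (∀ H ∈ S, H ≤ G ∧ H.IsTree) ∧
      (∀ H ∈ S, ∀ H' ∈ S, H ≠ H' → IsEmpty (H ≃g H')) ∧
      (Fintype.card V : ℝ) / 260 ≤ m ∧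
      (t : ℝ) ≤ (Fintype.card V : ℝ) / l + 10 * Fintype.card V / d + 8 * l * Fintype.card V / d ∧
      2 ^ (m - 2 * t) ≤ S.card * (Fintype.card V * D ^ (5 + 6 * t)) := by
  classical
  have hne : Nonempty V := hG.nonempty
  set n := Fintype.card V with hn
  have hn0 : (0 : ℝ) ≤ n := Nat.cast_nonneg _
  have hd0 : (0 : ℝ) < d := by linarith [show (0:ℝ) < 10 ^ 7 by norm_num]
  have hD0 : 0 < D := by
    obtain ⟨v⟩ := hne
    have h1 := hlo v
    have h2 : (G.degree v : ℝ) ≤ D := by exact_mod_cast hD v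
    have : (0 : ℝ) < D := by nlinarith
    exact_mod_cast this
  obtain ⟨S, hS⟩ := exists_half G
  set X := Sᶜ with hX
  have hSX : ∀ v, (S.filter (G.Adj v)).card + (X.filter (G.Adj v)).card = G.degree v := by
    intro v
    rw [← Finset.card_union_of_disjoint, ← SimpleGraph.card_neighborFinset_eq_degree]
    · congr 1
      ext x
      by_cases hx : x ∈ S <;> simp [hX, hx]
    · apply Finset.disjoint_filter_filter
      exact disjoint_compl_right
  set bad : Finset V := Finset.univ.filter (fun v =>
    ((S.filter (G.Adj v)).card : ℝ) < d / 4 ∨ ((X.filter (G.Adj v)).card : ℝ) < d / 4) with hbad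
  have hgS : ∀ v, v ∉ bad → (d : ℝ) / 4 ≤ ((S.filter (G.Adj v)).card : ℝ) := by
    intro v hv
    simp only [hbad, Finset.mem_filter, Finset.mem_univ, true_and, not_or, not_lt] at hv
    exact hv.1
  have hgX : ∀ v, v ∉ bad → (d : ℝ) / 4 ≤ ((X.filter (G.Adj v)).card : ℝ) := by
    intro v hv
    simp only [hbad, Finset.mem_filter, Finset.mem_univ, true_and, not_or, not_lt] at hv
    exact hv.2
  have hdegD : ∀ v, (G.degree v : ℝ) ≤ 1.01 * d := fun v =>
    le_trans (by exact_mod_cast hD v) hD1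
  have hdgD : ∀ (Y : Finset V) v, ((Y.filter (G.Adj v)).card : ℝ) ≤ 1.01 * d := fun Y v =>
    le_trans (by exact_mod_cast dg_le_degree G Y v) (hdegD v)
  -- bad is small
  have hbadc : (bad.card : ℝ) * d ≤ 10 * n := by
    have hS' : ∑ v, (2 * ((S.filter (G.Adj v)).card : ℝ) - (G.degree v : ℝ)) ^ 2
      ≤ ∑ v, (G.degree v : ℝ) := by exact_mod_cast hS
    have h1 : ∑ v, (G.degree v : ℝ) ≤ n * (1.01 * d) := by
      have := Finset.sum_le_card_nsmul Finset.univ (fun v => (G.degree v : ℝ)) (1.01 * d)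
        (fun v _ => hdegD v)
      simpa [hn] using this
    have h2 : (bad.card : ℝ) * ((d : ℝ) ^ 2 / 9) ≤
        ∑ v ∈ bad, (2 * ((S.filter (G.Adj v)).card : ℝ) - (G.degree v : ℝ)) ^ 2 := by
      rw [← nsmul_eq_mul]
      apply Finset.card_nsmul_le_sum
      intro v hv
      simp only [hbad, Finset.mem_filter, Finset.mem_univ, true_and] at hv
      have e1 : ((S.filter (G.Adj v)).card : ℝ) + (X.filter (G.Adj v)).card = G.degree v := by
        exact_mod_cast hSX v
      have e2 := hlo v
      rcases hv with hv | hv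
      · nlinarith
      · nlinarith
    have h3 : ∑ v ∈ bad, (2 * ((S.filter (G.Adj v)).card : ℝ) - (G.degree v : ℝ)) ^ 2 ≤
        ∑ v, (2 * ((S.filter (G.Adj v)).card : ℝ) - (G.degree v : ℝ)) ^ 2 :=
      Finset.sum_le_sum_of_subset_of_nonneg (Finset.subset_univ _) (fun _ _ _ => sq_nonneg _)
    have h4 : ((bad.card : ℝ) * d) * d ≤ (10 * n) * d := by nlinarith
    exact le_of_mul_le_mul_right h4 hd0
  have hbads : (bad.card : ℝ) ≤ n / 10 ^ 6 := by
    rw [le_div_iff₀ (by norm_num)]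
    have : (0 : ℝ) ≤ bad.card := Nat.cast_nonneg _
    nlinarith
  -- stage 1
  obtain ⟨Q1, q11, q12, q13, q14⟩ := path_cover G l hl S
  set P := Q1.flatten.toFinset with hP
  have hPS : P ⊆ S := by intro x hx; exact q13 x (by simpa [hP] using hx)
  have hSn : (S.card : ℝ) ≤ n := by exact_mod_cast Finset.card_le_univ S
  have hXn : (X.card : ℝ) ≤ n := by exact_mod_cast Finset.card_le_univ X
  have b1 : ((n : ℝ) - bad.card) * (d / 4) ≤ S.card * (1.01 * d) := by
    have h1 := sum_ge_of_bad Finset.univ bad (fun v => (S.filter (G.Adj v)).card) (d / 4)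
      (by positivity) (fun y _ hy => hgS y hy)
    rw [dg_comm, Finset.card_univ] at h1
    refine h1.trans ?_
    push_cast
    rw [← nsmul_eq_mul]
    exact Finset.sum_le_card_nsmul _ _ _ (fun v _ => hdgD _ v)
  have b2 : (((S \ P).card : ℝ) - bad.card) * (d / 4) ≤ 2 * l * n + P.card * (1.01 * d) := by
    have h1 := sum_ge_of_bad (S \ P) bad (fun v => (S.filter (G.Adj v)).card) (d / 4)
      (by positivity) (fun y _ hy => hgS y hy)
    refine h1.trans ?_
    have h2 : ∑ v ∈ S \ P, (S.filter (G.Adj v)).card ≤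
        ∑ v ∈ S \ P, (((S \ P).filter (G.Adj v)).card + (P.filter (G.Adj v)).card) := by
      apply Finset.sum_le_sum
      intro v _
      refine le_trans (Finset.card_le_card ?_) (Finset.card_union_le _ _)
      rw [← Finset.filter_union, Finset.sdiff_union_of_subset hPS]
    rw [Finset.sum_add_distrib, dg_comm G (S \ P) P] at h2
    have h3 : ((∑ v ∈ S \ P, (S.filter (G.Adj v)).card : ℕ) : ℝ) ≤
        ((2 * l * S.card + ∑ v ∈ P, ((S \ P).filter (G.Adj v)).card : ℕ) : ℝ) := by
      exact_mod_cast h2.trans (Nat.add_le_add_right q14 _)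
    refine h3.trans ?_
    push_cast
    apply add_le_add
    · apply mul_le_mul_of_nonneg_left hSn (by positivity)
    · rw [← nsmul_eq_mul]
      exact Finset.sum_le_card_nsmul _ _ _ (fun v _ => hdgD _ v)
  have b3 : ((S \ P).card : ℝ) + P.card = S.card := by
    exact_mod_cast Finset.card_sdiff_add_card_eq_card hPS
  obtain ⟨X0, a, b, t1, t2, t3, t4⟩ := triples G D hD X P
  have b4 : ((P.card : ℝ) - bad.card) * (d / 4) ≤ 3 * (1.01 * d) * X0.card + n := by
    have h1 := sum_ge_of_bad P bad (fun v => (X.filter (G.Adj v)).card) (d / 4)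
      (by positivity) (fun y _ hy => hgX y hy)
    rw [dg_comm] at h1
    have h2 : ((∑ x ∈ X, (P.filter (G.Adj x)).card : ℕ) : ℝ) ≤ 3 * D * X0.card + X.card := by
      exact_mod_cast t4
    have h3 : (3 * (D : ℝ)) * X0.card ≤ 3 * (1.01 * d) * X0.card := by
      apply mul_le_mul_of_nonneg_right _ (Nat.cast_nonneg _)
      linarith
    linarith
  have hm : (n : ℝ) / 260 ≤ X0.card := by
    have c1 : ((n : ℝ) - bad.card) / 4 ≤ 1.01 * S.card := by
      apply le_of_mul_le_mul_right _ hd0; linarith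
    have c2 : (((S \ P).card : ℝ) - bad.card) / 4 ≤ 2 * n / 100000 + 1.01 * P.card := by
      apply le_of_mul_le_mul_right _ hd0
      nlinarith
    have c4 : ((P.card : ℝ) - bad.card) / 4 ≤ 3.03 * X0.card + n / 10 ^ 7 := by
      apply le_of_mul_le_mul_right _ hd0
      nlinarith
    linarith
  -- stage 2
  set U := (Finset.univ \ P) \ X0 with hU
  obtain ⟨Q2, q21, q22, q23, q24⟩ := path_cover G l hl U
  set P' := Q2.flatten.toFinset with hP'
  set W := U \ P' with hW
  set E := W.filter (fun v => ∀ w ∈ P ∪ P', ¬ G.Adj v w) with hE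
  have hP'U : ∀ x ∈ P', x ∉ P ∧ x ∉ X0 := by
    intro x hx
    have := q23 x (by simpa [hP'] using hx)
    simpa [hU] using this
  have hEU : ∀ x ∈ E, x ∉ P ∧ x ∉ X0 ∧ x ∉ P' := by
    intro x hx
    have := (Finset.mem_filter.mp hx).1
    rw [hW, hU] at this
    simp only [Finset.mem_sdiff, Finset.mem_univ, true_and] at this
    tauto
  have hX0P : ∀ x ∈ X0, x ∉ P := by
    intro x hx h
    have h1 := t1 hx
    rw [hX, Finset.mem_compl] at h1
    exact h1 (hPS h)
  have hEc : ((E.card : ℝ) - bad.card) * (d / 4) ≤ 2 * l * n := by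
    have h1 := sum_ge_of_bad E bad (fun v => (W.filter (G.Adj v)).card) (d / 4)
      (by positivity) (by
        intro y hy hyb
        refine (hgS y hyb).trans ?_
        have : S.filter (G.Adj y) ⊆ W.filter (G.Adj y) := by
          intro x hx
          rw [Finset.mem_filter] at hx ⊢
          refine ⟨?_, hx.2⟩
          have hy2 := (Finset.mem_filter.mp hy).2
          have hxP : x ∉ P := fun h => hy2 x (Finset.mem_union_left _ h) hx.2
          have hxP' : x ∉ P' := fun h => hy2 x (Finset.mem_union_right _ h) hx.2
          have hxX : x ∉ X0 := by
            intro h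
            have h1 := t1 h
            rw [hX, Finset.mem_compl] at h1
            exact h1 hx.1
          rw [hW, hU]
          simp [hxP, hxP', hxX]
        exact_mod_cast Finset.card_le_card this)
    refine h1.trans ?_
    have h2 : ∑ v ∈ E, (W.filter (G.Adj v)).card ≤ ∑ v ∈ W, (W.filter (G.Adj v)).card :=
      Finset.sum_le_sum_of_subset (Finset.filter_subset _ _)
    have h3 : ((∑ v ∈ E, (W.filter (G.Adj v)).card : ℕ) : ℝ) ≤ ((2 * l * U.card : ℕ) : ℝ) := by
      exact_mod_cast h2.trans q24
    refine h3.trans ?_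
    push_cast
    apply mul_le_mul_of_nonneg_left _ (by positivity)
    exact_mod_cast Finset.card_le_univ U
  -- items
  set Q := Q1 ++ (Q2 ++ E.toList.map (fun x => [x])) with hQ
  have hEflat : (E.toList.map (fun x => [x])).flatten = E.toList := by
    rw [← List.flatMap_def]; simp
  have hQflat : Q.flatten = Q1.flatten ++ (Q2.flatten ++ E.toList) := by
    rw [hQ, List.flatten_append, List.flatten_append, hEflat]
  have hQmem : Q.flatten.toFinset = P ∪ (P' ∪ E) := by
    rw [hQflat, List.toFinset_append, List.toFinset_append, Finset.toList_toFinset]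
  have hQnd : Q.flatten.Nodup := by
    rw [hQflat, List.nodup_append, List.nodup_append]
    refine ⟨q11, ⟨q21, Finset.nodup_toList _, ?_⟩, ?_⟩
    · intro x hx y hy e
      subst e
      exact (hEU x (by simpa using hy)).2.2 (by simpa [hP'] using hx)
    · intro x hx y hy e
      subst e
      have hxP : x ∈ P := by simpa [hP] using hx
      rw [List.mem_append] at hy
      rcases hy with hy | hy
      · exact (hP'U x (by simpa [hP'] using hy)).1 hxP
      · exact (hEU x (by simpa using hy)).1 hxP
  have hQch : ∀ q ∈ Q, q ≠ [] ∧ q.IsChain G.Adj := by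
    intro q hq
    rw [hQ, List.mem_append, List.mem_append] at hq
    rcases hq with hq | hq | hq
    · obtain ⟨h1, h2⟩ := q12 q hq
      exact ⟨fun e => by rw [e] at h1; simp at h1; omega, h2⟩
    · obtain ⟨h1, h2⟩ := q22 q hq
      exact ⟨fun e => by rw [e] at h1; simp at h1; omega, h2⟩
    · rw [List.mem_map] at hq
      obtain ⟨x, -, rfl⟩ := hq
      simp
  have hQdom : ∀ v, v ∈ Q.flatten.toFinset ∨ ∃ w ∈ Q.flatten.toFinset, G.Adj v w := by
    intro v
    rw [hQmem]
    by_cases h1 : v ∈ P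
    · left; simp [h1]
    by_cases h2 : v ∈ X0
    · right; exact ⟨a v, by simp [(t2 v h2).2.2.1], (t2 v h2).1⟩
    by_cases h3 : v ∈ P'
    · left; simp [h3]
    by_cases h4 : v ∈ E
    · left; simp [h4]
    right
    have hvW : v ∈ W := by rw [hW, hU]; simp [h1, h2, h3]
    rw [hE, Finset.mem_filter] at h4
    push Not at h4
    obtain ⟨w, hw, hvw⟩ := h4 hvW
    refine ⟨w, ?_, hvw⟩
    rw [Finset.mem_union] at hw
    rcases hw with hw | hw <;> simp [hw]
  obtain ⟨r, A, hKA, hgood, hAcard⟩ := connect_all G hG Q hQnd hQch hQdom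
  have hX0K : ∀ x ∈ X0, x ∉ Q.flatten.toFinset := by
    intro x hx
    rw [hQmem]
    simp only [Finset.mem_union, not_or]
    exact ⟨hX0P x hx, fun h => (hP'U x h).2 hx, fun h => (hEU x h).2.1 hx⟩
  obtain ⟨F, f1, f2, f3⟩ := count_trees_s17 G D hD0 hD r A _ hgood (by
      intro v hv
      rcases hQdom v with h | ⟨w, hw, h⟩
      · exact absurd (hKA h) hv
      · exact ⟨w, hKA hw, h⟩) (X0 \ A) a b (by
      intro x hx
      rw [Finset.mem_sdiff] at hx
      obtain ⟨u1, u2, u3, u4⟩ := t2 x hx.1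
      exact ⟨hx.2, u1, u2, hKA (by rw [hQmem]; simp [u3]), hKA (by rw [hQmem]; simp [u4])⟩) (by
      intro x hx y hy
      exact t3 x (Finset.mem_sdiff.mp hx).1 y (Finset.mem_sdiff.mp hy).1)
  refine ⟨F, X0.card, Q.length, f1, f2, hm, ?_, ?_⟩
  · have hlen : Q.length = Q1.length + (Q2.length + E.card) := by
      rw [hQ]; simp
    have h1 : l * Q1.length + l * Q2.length ≤ n := by
      have e1 : Q1.flatten.length = l * Q1.length := by
        rw [List.length_flatten, List.map_congr_left (g := fun _ => l) (fun q hq => (q12 q hq).1)]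
        simp [mul_comm]
      have e2 : Q2.flatten.length = l * Q2.length := by
        rw [List.length_flatten, List.map_congr_left (g := fun _ => l) (fun q hq => (q22 q hq).1)]
        simp [mul_comm]
      have e3 := hQnd.length_le_card
      rw [hQflat, List.length_append, List.length_append] at e3
      omega
    have hl0 : (0 : ℝ) < l := by exact_mod_cast hl
    have h2 : (Q1.length : ℝ) + Q2.length ≤ n / l := by
      rw [le_div_iff₀ hl0]
      have : (l : ℝ) * Q1.length + l * Q2.length ≤ n := by exact_mod_cast h1
      linarith
    have h3 : (E.card : ℝ) ≤ bad.card + 8 * l * n / d := by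
      have : (E.card : ℝ) - bad.card ≤ 8 * l * n / d := by
        rw [le_div_iff₀ hd0]; linarith
      linarith
    have h4 : (bad.card : ℝ) ≤ 10 * n / d := by
      rw [le_div_iff₀ hd0]; exact hbadc
    rw [hlen]
    push_cast
    linarith
  · refine le_trans ?_ f3
    apply Nat.pow_le_pow_right (by norm_num)
    have h1 : X0 ∩ A ⊆ A \ Q.flatten.toFinset := by
      intro x hx
      rw [Finset.mem_inter] at hx
      exact Finset.mem_sdiff.mpr ⟨hx.2, hX0K x hx.1⟩
    have h2 := Finset.card_le_card h1
    have h3 := Finset.card_sdiff_add_card_eq_card hKA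
    have h4 := Finset.card_sdiff_add_card_inter X0 A
    omega

theorem log_bound : ∃ x0 : ℝ, 10 ^ 20 ≤ x0 ∧ ∀ x : ℝ, x0 ≤ x →
    Real.log x ≤ (1 / 10 ^ 6) * Real.sqrt x := by
  have h := isLittleO_log_rpow_atTop (show (0 : ℝ) < 1 / 2 by norm_num)
  have h2 := h.def (show (0 : ℝ) < 1 / 10 ^ 6 by norm_num)
  rw [Filter.eventually_atTop] at h2
  obtain ⟨x1, hx1⟩ := h2
  refine ⟨max x1 (10 ^ 20), le_max_right _ _, ?_⟩
  intro x hx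
  have hx2 := hx1 x ((le_max_left _ _).trans hx)
  rw [← Real.sqrt_eq_rpow, Real.norm_eq_abs, Real.norm_eq_abs,
    abs_of_nonneg (Real.sqrt_nonneg x)] at hx2
  exact (le_abs_self _).trans hx2

/-- Theorem 1.5: every connected `n`-vertex almost `d`-regular graph contains
at least `e^{n/2000}` pairwise non-isomorphic spanning trees. -/
theorem many_non_isomorphic_spanning_trees :
    ∃ d₀ : ℝ, 0 < d₀ ∧ ∀ d : ℕ, d₀ ≤ d →
      ∀ (V : Type) [Fintype V] [DecidableEq V]
        (n : ℕ) (_ : Fintype.card V = n)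
        (G : SimpleGraph V) [DecidableRel G.Adj] (_ : G.Connected)
        (_ : ∀ v, (1 - (10:ℝ) ^ (-10 : ℤ)) * d ≤ (G.degree v : ℝ) ∧
              (G.degree v : ℝ) ≤ (1 + (10:ℝ) ^ (-10 : ℤ)) * d),
        ∃ S : Finset (SimpleGraph V),
          (∀ H ∈ S, H ≤ G ∧ H.IsTree) ∧
          (∀ H ∈ S, ∀ H' ∈ S, H ≠ H' → IsEmpty (H ≃g H')) ∧
          Real.exp ((n : ℝ) / 2000) ≤ (S.card : ℝ) := by
  obtain ⟨x0, hx0, hlog⟩ := log_bound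
  refine ⟨2 * x0, by linarith [show (0:ℝ) < 10 ^ 20 by norm_num], ?_⟩
  intro d hd V _ _ n hn G _ hG hdeg
  have hd20 : (10 : ℝ) ^ 20 ≤ d := by linarith [show (0:ℝ) < 10 ^ 20 by norm_num]
  have hd0 : (0 : ℝ) < d := lt_of_lt_of_le (by norm_num) hd20
  have hsq : Real.sqrt d * Real.sqrt d = d := Real.mul_self_sqrt hd0.le
  have hs10 : (10 : ℝ) ^ 10 ≤ Real.sqrt d := by
    apply Real.le_sqrt_of_sq_le; norm_num at hd20 ⊢; exact hd20
  set s := Real.sqrt d with hs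
  have hs1 : (1 : ℝ) ≤ s := le_trans (by norm_num) hs10
  have hsd : s ≤ d := by
    have e := mul_le_mul_of_nonneg_left hs1 (zero_le_one.trans hs1)
    rw [mul_one, hsq] at e
    exact e
  set l := Nat.sqrt d with hl
  have hl1 : (l : ℝ) ≤ s := Real.nat_sqrt_le_real_sqrt
  have hl2 : s ≤ l + 1 := Real.real_sqrt_le_nat_sqrt_succ
  have hlpos : 0 < l := by
    have : (0 : ℝ) < l := by linarith [show (1:ℝ) < 10 ^ 10 by norm_num]
    exact_mod_cast this
  have hε : (10:ℝ) ^ (-10 : ℤ) ≤ 0.01 := by norm_num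
  have hε0 : (0 : ℝ) ≤ (10:ℝ) ^ (-10 : ℤ) := by norm_num
  have hlo : ∀ v, 0.99 * (d : ℝ) ≤ G.degree v := fun v => by
    have h := (hdeg v).1
    have e := mul_le_mul_of_nonneg_right hε hd0.le
    rw [sub_mul, one_mul] at h
    generalize (10:ℝ) ^ (-10 : ℤ) * (d : ℝ) = y at h e
    norm_num at e ⊢
    linarith
  have hhi : ∀ v, (G.degree v : ℝ) ≤ 1.01 * d := fun v => by
    have h := (hdeg v).2
    have e := mul_le_mul_of_nonneg_right hε hd0.le
    rw [add_mul, one_mul] at h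
    generalize (10:ℝ) ^ (-10 : ℤ) * (d : ℝ) = y at h e
    norm_num at e ⊢
    linarith
  have hDfl : ((⌊1.01 * (d : ℝ)⌋₊ : ℕ) : ℝ) ≤ 1.01 * d := Nat.floor_le (by positivity)
  obtain ⟨S, m, t, h1, h2, hm, ht, hcount⟩ := main_struct G hG d l ⌊1.01 * (d : ℝ)⌋₊ hlpos
    (by nlinarith) (le_trans (by norm_num) hd20) hDfl (fun v => Nat.le_floor (hhi v)) hlo
  refine ⟨S, h1, h2, ?_⟩
  rw [hn] at hm ht hcount
  set D := ⌊1.01 * (d : ℝ)⌋₊ with hD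
  -- n is large
  obtain ⟨v⟩ := hG.nonempty
  have hnd : 0.99 * (d : ℝ) ≤ n := by
    have e1 : G.degree v ≤ n := by
      have := G.degree_lt_card_verts v; omega
    have e2 : (G.degree v : ℝ) ≤ n := by exact_mod_cast e1
    exact (hlo v).trans e2
  have hn0 : (0 : ℝ) < n := by linarith
  have hDpos : (1 : ℝ) ≤ D := by
    have : G.degree v ≤ D := Nat.le_floor (hhi v)
    have e2 : (G.degree v : ℝ) ≤ D := by exact_mod_cast this
    have := hlo v
    linarith [show (10:ℝ) < 10 ^ 20 by norm_num]
  -- t small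
  have ht2 : (t : ℝ) * s ≤ 20 * n := by
    have hl0 : (0 : ℝ) < l := by exact_mod_cast hlpos
    have e1 : (n : ℝ) / l * s ≤ 2 * n := by
      rw [div_mul_eq_mul_div, div_le_iff₀ hl0]
      have e4 : (1 : ℝ) ≤ l := by exact_mod_cast hlpos
      have e5 := mul_le_mul_of_nonneg_left (show s ≤ 2 * l by linarith) hn0.le
      calc (n : ℝ) * s ≤ n * (2 * l) := e5
        _ = _ := by ring
    have e2 : 10 * (n : ℝ) / d * s ≤ 10 * n := by
      rw [div_mul_eq_mul_div, div_le_iff₀ hd0]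
      exact mul_le_mul_of_nonneg_left hsd (by positivity)
    have e3 : 8 * (l : ℝ) * n / d * s ≤ 8 * n := by
      rw [div_mul_eq_mul_div, div_le_iff₀ hd0]
      have e4 : (l : ℝ) * s ≤ d := by
        rw [← hsq]
        exact mul_le_mul_of_nonneg_right hl1 (zero_le_one.trans hs1)
      have e5 := mul_le_mul_of_nonneg_left e4 (show (0 : ℝ) ≤ 8 * n by positivity)
      calc 8 * (l : ℝ) * n * s = 8 * n * (l * s) := by ring
        _ ≤ _ := e5
    have e6 := mul_le_mul_of_nonneg_right ht (zero_le_one.trans hs1)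
    refine e6.trans ?_
    rw [add_mul, add_mul]
    linarith
  have hlogd : Real.log d ≤ (1 / 10 ^ 6) * s := hlog d (by linarith [show (0:ℝ) < 10 ^ 20 by norm_num])
  have hlogn : Real.log n ≤ (1 / 10 ^ 6) * n := by
    refine (hlog n (by linarith)).trans ?_
    apply mul_le_mul_of_nonneg_left _ (by norm_num)
    apply Real.sqrt_le_iff.mpr
    refine ⟨hn0.le, ?_⟩
    have e1 : (1 : ℝ) ≤ n := by linarith [show (10:ℝ) < 10 ^ 20 by norm_num]
    have e2 := mul_le_mul_of_nonneg_left e1 hn0.le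
    rw [mul_one] at e2
    rw [sq]
    exact e2
  have hlogD : Real.log D ≤ 1 + Real.log d := by
    have : Real.log D ≤ Real.log (2 * d) :=
      Real.log_le_log (by linarith) (by linarith)
    rw [Real.log_mul (by norm_num) hd0.ne'] at this
    linarith [Real.log_two_lt_d9]
  have hlogD2 : Real.log D ≤ (2 / 10 ^ 6) * s := by
    have : (1 : ℝ) ≤ (1 / 10 ^ 6) * s := by
      norm_num at hs10 ⊢; linarith
    linarith
  have hlogD0 : 0 ≤ Real.log D := Real.log_nonneg hDpos
  have htn : (t : ℝ) ≤ n / 10 ^ 6 := by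
    rw [le_div_iff₀ (by norm_num)]
    have h0 : (0 : ℝ) ≤ t := Nat.cast_nonneg _
    have e := mul_le_mul_of_nonneg_left hs10 h0
    norm_num at e ⊢
    linarith
  have htD : (t : ℝ) * Real.log D ≤ n * (40 / 10 ^ 6) := by
    have h0 : (0 : ℝ) ≤ t := Nat.cast_nonneg _
    have e := mul_le_mul_of_nonneg_left hlogD2 h0
    calc (t : ℝ) * Real.log D ≤ t * (2 / 10 ^ 6 * s) := e
      _ = (t * s) * (2 / 10 ^ 6) := by ring
      _ ≤ (20 * n) * (2 / 10 ^ 6) := mul_le_mul_of_nonneg_right ht2 (by norm_num)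
      _ = _ := by ring
  have hDn : Real.log D ≤ n * (3 / 10 ^ 6) := by
    refine hlogD2.trans ?_
    linarith
  have hcount' : (2 : ℝ) ^ (m - 2 * t) ≤ S.card * (n * (D : ℝ) ^ (5 + 6 * t)) := by
    exact_mod_cast hcount
  have hSpos : (0 : ℝ) < S.card := by
    rcases Nat.eq_zero_or_pos S.card with h | h
    · rw [h] at hcount'
      have : (0 : ℝ) < 2 ^ (m - 2 * t) := by positivity
      simp at hcount'
      linarith
    · exact_mod_cast h
  have hL := Real.log_le_log (by positivity) hcount'
  rw [Real.log_pow, Real.log_mul hSpos.ne' (by positivity), Real.log_mul hn0.ne' (by positivity),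
    Real.log_pow] at hL
  have hmt : (m : ℝ) - 2 * t ≤ ((m - 2 * t : ℕ) : ℝ) := by
    have : m ≤ (m - 2 * t) + 2 * t := by omega
    have : (m : ℝ) ≤ ((m - 2 * t : ℕ) : ℝ) + 2 * t := by exact_mod_cast this
    linarith
  have hA : (n : ℝ) / 300 ≤ ((m - 2 * t : ℕ) : ℝ) := by
    linarith
  have hB : (n : ℝ) / 300 * (1 / 2) ≤ ((m - 2 * t : ℕ) : ℝ) * Real.log 2 := by
    apply mul_le_mul hA _ (by norm_num) (by positivity)
    linarith [Real.log_two_gt_d9]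
  push_cast at hL
  have hfinal : (n : ℝ) / 2000 ≤ Real.log S.card := by
    have e : (5 + 6 * (t : ℝ)) * Real.log D = 5 * Real.log D + 6 * (t * Real.log D) := by ring
    rw [e] at hL
    linarith
  rw [← Real.le_log_iff_exp_le hSpos]
  exact hfinal
end
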